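/- arXiv:1305.6392 — 2 statements merged into one kernel-verified Lean document; each statement's English description precedes it below -/
import Mathlib

section
/- Let m ≥ 0, fix t ∈ (0,1] and let s < 1/4. Then for every constant C > 0 and every ε > 0 there exists φ ∈ H^s(ℝ^3) with 0 < ‖φ‖_{H^s} ≤ ε such that ‖∫_0^t U(t−τ)[(|x|^{-1} ∗ |U(τ)φ|^2) U(τ)φ] dτ‖_{H^s(ℝ^3)} > C ‖φ‖_{H^s(ℝ^3)}^3. In particular, the cubic Duhamel estimate ‖∫_0^t U(t−τ)((|x|^{-1} ∗ |U(τ)φ|^2) U(τ)φ) dτ‖_{H^s} ≲ ‖φ‖_{H^s}^3 fails in any neighborhood of the origin. -/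
open MeasureTheory Real Complex
open scoped FourierTransform ENNReal

noncomputable section

abbrev Rd : Type := EuclideanSpace ℝ (Fin 3)

/-- Sobolev `H^s` norm (as an extended real), defined on the Fourier side. -/
def HsNorm (s : ℝ) (f : Rd → ℂ) : ℝ≥0∞ :=
  (∫⁻ ξ : Rd, ENNReal.ofReal ((1 + ‖ξ‖ ^ 2) ^ s * ‖𝓕 f ξ‖ ^ 2)) ^ (1 / 2 : ℝ)

/-- Linear propagator `U(t)` of the boson star equation with mass `m`. -/
def uProp (m t : ℝ) (φ : Rd → ℂ) : Rd → ℂ :=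
  𝓕⁻ fun ξ => Complex.exp (Complex.I * t * ((m - Real.sqrt (m ^ 2 + ‖ξ‖ ^ 2) : ℝ) : ℂ)) * 𝓕 φ ξ

/-- Convolution with the Newtonian potential `|x|⁻¹`. -/
def newton (f : Rd → ℂ) (x : Rd) : ℂ := ∫ y : Rd, f y / (‖x - y‖ : ℂ)

/-- The Hartree nonlinearity `(|x|⁻¹ ∗ |φ|²) φ`. -/
def nonlin (φ : Rd → ℂ) (x : Rd) : ℂ := newton (fun y => (‖φ y‖ : ℂ) ^ 2) x * φ x

/-- The first Picard iterate `∫₀ᵗ U(t-τ)[(|x|⁻¹ ∗ |U(τ)φ|²) U(τ)φ] dτ`. -/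
def duhamelFree (m : ℝ) (φ : Rd → ℂ) (t : ℝ) : Rd → ℂ := fun x =>
  ∫ τ in (0 : ℝ)..t, uProp m (t - τ) (nonlin (uProp m τ φ)) x


/-! ### Characters -/

def ch (a : ℝ) : ℂ := (Real.fourierChar a : ℂ)

lemma ch_add (a b : ℝ) : ch (a + b) = ch a * ch b := by
  simp [ch, AddChar.map_add_eq_mul]

lemma norm_ch (a : ℝ) : ‖ch a‖ = 1 := Circle.norm_coe _

lemma ch_zero : ch 0 = 1 := by simp [ch]

lemma conj_ch (a : ℝ) : (starRingEnd ℂ) (ch a) = ch (-a) := by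
  simp [ch, AddChar.map_neg_eq_inv]

lemma continuous_ch : Continuous ch := by
  unfold ch
  exact continuous_subtype_val.comp Real.continuous_fourierChar

lemma ch_eq (a : ℝ) : ch a = Complex.exp ((2 * π * a : ℝ) * Complex.I) := by
  simp [ch, Real.fourierChar_apply]

lemma fourier_ch (f : Rd → ℂ) (w : Rd) : 𝓕 f w = ∫ v, ch (-inner ℝ v w) * f v := rfl

lemma fourierInv_ch (f : Rd → ℂ) (w : Rd) : 𝓕⁻ f w = ∫ v, ch (inner ℝ v w) * f v := by
  rw [Real.fourierInv_eq]; rfl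

/-! ### The symbol -/

def sym (m σ : ℝ) (ξ : Rd) : ℂ :=
  Complex.exp (Complex.I * σ * ((m - Real.sqrt (m ^ 2 + ‖ξ‖ ^ 2) : ℝ) : ℂ))

lemma norm_sym (m σ : ℝ) (ξ : Rd) : ‖sym m σ ξ‖ = 1 := by
  rw [sym, show Complex.I * σ * ((m - Real.sqrt (m ^ 2 + ‖ξ‖ ^ 2) : ℝ) : ℂ)
    = ((σ * (m - Real.sqrt (m ^ 2 + ‖ξ‖ ^ 2)) : ℝ) : ℂ) * Complex.I by push_cast; ring]
  exact Complex.norm_exp_ofReal_mul_I _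

lemma continuous_sym (m : ℝ) : Continuous (fun q : ℝ × Rd => sym m q.1 q.2) := by
  unfold sym; fun_prop

lemma contDiff_joint (m : ℝ) (b : Rd → ℂ) (hb : ContDiff ℝ (⊤ : ℕ∞) b) (h0 : (0 : Rd) ∉ tsupport b) :
    ContDiff ℝ (⊤ : ℕ∞) (fun q : ℝ × Rd => sym m q.1 q.2 * b q.2) := by
  rw [contDiff_iff_contDiffAt]
  rintro ⟨σ, ξ⟩
  by_cases hξ : ξ = 0
  · subst hξ
    have h1 : b =ᶠ[nhds 0] 0 := notMem_tsupport_iff_eventuallyEq.mp h0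
    have h2 : (fun q : ℝ × Rd => sym m q.1 q.2 * b q.2) =ᶠ[nhds (σ, (0 : Rd))] fun _ => 0 := by
      have h3 := (continuous_snd (X := ℝ) (Y := Rd)).continuousAt (x := (σ, (0 : Rd)))
      filter_upwards [h3.eventually h1] with q hq
      simp [hq]
    exact contDiffAt_const.congr_of_eventuallyEq h2
  · have hpos : m ^ 2 + ‖ξ‖ ^ 2 ≠ 0 := by
      have : 0 < ‖ξ‖ := norm_pos_iff.mpr hξ
      positivity
    refine ContDiffAt.mul ?_ (hb.contDiffAt.comp _ contDiffAt_snd)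
    unfold sym
    refine ContDiffAt.cexp ?_
    refine ContDiffAt.mul (contDiffAt_const.mul ?_) ?_
    · exact (Complex.ofRealCLM.contDiff.contDiffAt).comp _ contDiffAt_fst
    · refine (Complex.ofRealCLM.contDiff.contDiffAt).comp (σ, ξ)
        (g := Complex.ofRealCLM) (f := fun q : ℝ × Rd => m - Real.sqrt (m ^ 2 + ‖q.2‖ ^ 2)) ?_
      refine contDiffAt_const.sub (ContDiffAt.sqrt ?_ hpos)
      exact contDiffAt_const.add (contDiffAt_snd.norm_sq ℝ)

lemma iteratedFDeriv_slice (G : ℝ × Rd → ℂ) (hG : ContDiff ℝ (⊤ : ℕ∞) G) (σ : ℝ) (ξ : Rd) (n : ℕ) :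
    ‖iteratedFDeriv ℝ n (fun ξ => G (σ, ξ)) ξ‖ ≤ ‖iteratedFDeriv ℝ n G (σ, ξ)‖ := by
  have h1 : (fun ξ => G (σ, ξ)) = (fun q => G ((σ, 0) + q)) ∘ (ContinuousLinearMap.inr ℝ ℝ Rd) := by
    ext ξ; simp
  have hG' : ContDiff ℝ (⊤ : ℕ∞) (fun q : ℝ × Rd => G ((σ, 0) + q)) :=
    hG.comp (contDiff_const.add contDiff_id)
  rw [h1, ContinuousLinearMap.iteratedFDeriv_comp_right _ hG' _ (by exact_mod_cast le_top)]
  rw [iteratedFDeriv_comp_add_left]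
  refine (ContinuousMultilinearMap.norm_compContinuousLinearMap_le _ _).trans ?_
  have : ∏ i : Fin n, ‖ContinuousLinearMap.inr ℝ ℝ Rd‖ ≤ 1 := by
    refine Finset.prod_le_one (fun _ _ => norm_nonneg _) (fun _ _ => ?_)
    refine ContinuousLinearMap.opNorm_le_bound _ zero_le_one (fun x => ?_)
    simp [Prod.norm_def]
  calc _ ≤ ‖iteratedFDeriv ℝ n G ((σ, 0) + (ContinuousLinearMap.inr ℝ ℝ Rd) ξ)‖ * 1 := by gcongr
    _ = _ := by simp

lemma one_add_pow_four (x : ℝ) (_ : 0 ≤ x) : (1 + x) ^ 4 ≤ 8 * (1 + x ^ 4) := by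
  nlinarith [sq_nonneg (x - 1), sq_nonneg (x ^ 2 - 1), sq_nonneg (x * (x - 1)),
    sq_nonneg (x ^ 2 - x)]

def jb (x : Rd) : ℝ := (1 + ‖x‖) ^ (-4 : ℝ)

lemma jb_eq (x : Rd) : jb x = ((1 + ‖x‖) ^ 4)⁻¹ := by
  rw [jb, Real.rpow_neg (by positivity)]
  norm_cast

lemma jb_pos (x : Rd) : 0 < jb x := by rw [jb_eq]; positivity

lemma jb_le_one (x : Rd) : jb x ≤ 1 := by
  rw [jb_eq]
  apply inv_le_one_of_one_le₀
  apply one_le_pow₀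
  linarith [norm_nonneg x]

lemma continuous_jb : Continuous jb := by
  unfold jb
  refine Continuous.rpow_const (by fun_prop) (fun x => Or.inl ?_)
  positivity

lemma integrable_jb : Integrable jb := by
  apply integrable_one_add_norm
  simp; norm_num

lemma decay (m : ℝ) (b : Rd → ℂ) (hb : ContDiff ℝ (⊤ : ℕ∞) b) (hc : HasCompactSupport b)
    (h0 : (0 : Rd) ∉ tsupport b) :
    ∃ C : ℝ, 0 < C ∧ ∀ σ ∈ Set.Icc (0 : ℝ) 1, ∀ x, ‖𝓕⁻ (fun ξ => sym m σ ξ * b ξ) x‖ ≤ C * jb x := by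
  set G : ℝ × Rd → ℂ := fun q => sym m q.1 q.2 * b q.2 with hGdef
  have hG : ContDiff ℝ (⊤ : ℕ∞) G := contDiff_joint m b hb h0
  have hK : IsCompact (Set.Icc (0 : ℝ) 1 ×ˢ tsupport b) := isCompact_Icc.prod hc
  have hM : ∀ n : ℕ, ∃ M : ℝ, ∀ q ∈ Set.Icc (0 : ℝ) 1 ×ˢ tsupport b, ‖iteratedFDeriv ℝ n G q‖ ≤ M := by
    intro n
    exact hK.exists_bound_of_continuousOn
      (hG.continuous_iteratedFDeriv (by exact_mod_cast le_top)).continuousOn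
  choose M hM using hM
  have hcs : ∀ σ, HasCompactSupport (fun ξ => G (σ, ξ)) := fun σ => hc.mul_left
  have hsm : ∀ σ, ContDiff ℝ (⊤ : ℕ∞) (fun ξ => G (σ, ξ)) := fun σ =>
    hG.comp (contDiff_const.prodMk contDiff_id)
  have hts : ∀ σ, tsupport (fun ξ => G (σ, ξ)) ⊆ tsupport b := by
    intro σ
    refine closure_mono ?_
    intro ξ hξ
    simp only [Function.mem_support, hGdef] at hξ ⊢
    exact right_ne_zero_of_mul hξ
  have hMb : ∀ n, ∀ σ ∈ Set.Icc (0 : ℝ) 1, ∀ ξ, ‖iteratedFDeriv ℝ n (fun ξ => G (σ, ξ)) ξ‖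
      ≤ (tsupport b).indicator (fun _ => |M n|) ξ := by
    intro n σ hσ ξ
    by_cases hξ : ξ ∈ tsupport b
    · rw [Set.indicator_of_mem hξ]
      exact (iteratedFDeriv_slice G hG σ ξ n).trans ((hM n (σ, ξ) ⟨hσ, hξ⟩).trans (le_abs_self _))
    · rw [Set.indicator_of_notMem hξ]
      have : ξ ∉ tsupport (fun ξ => G (σ, ξ)) := fun h => hξ (hts σ h)
      have h2 : iteratedFDeriv ℝ n (fun ξ => G (σ, ξ)) ξ = 0 := by
        by_contra hne
        exact this (support_iteratedFDeriv_subset n hne)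
      rw [h2]; simp
  set B : ℕ → ℝ := fun n => ∫ ξ, (tsupport b).indicator (fun _ => |M n|) ξ with hB
  have hBint : ∀ n, Integrable (fun ξ => (tsupport b).indicator (fun _ => |M n|) ξ) := fun n =>
    (integrable_indicator_iff (isClosed_tsupport b).measurableSet).2
      (integrableOn_const (hc.measure_lt_top.ne))
  have hfour : ∀ n : ℕ, ∀ σ ∈ Set.Icc (0 : ℝ) 1, ∀ x, ‖x‖ ^ n * ‖𝓕⁻ (fun ξ => G (σ, ξ)) x‖ ≤
      2 ^ n * ∑ j ∈ Finset.range (n + 1), B j := by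
    intro n σ hσ x
    have hIk : ∀ (k n' : ℕ), Integrable (fun v ↦ ‖v‖ ^ k * ‖iteratedFDeriv ℝ n' (fun ξ => G (σ, ξ)) v‖) := by
      intro k n'
      refine Continuous.integrable_of_hasCompactSupport ?_ ?_
      · exact (continuous_norm.pow k).mul
          ((hsm σ).continuous_iteratedFDeriv (by exact_mod_cast le_top)).norm
      · exact ((hcs σ).iteratedFDeriv n').norm.mul_left
    have h := Real.pow_mul_norm_iteratedFDeriv_fourier_le (K := ⊤) (N := ⊤) (hsm σ)
      (fun k n' _ _ => hIk k n') (k := 0) (n := n) (by exact_mod_cast le_top)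
      (by exact_mod_cast le_top) (-x)
    rw [norm_iteratedFDeriv_zero, norm_neg, ← Real.fourierInv_eq_fourier_neg] at h
    refine h.trans ?_
    simp only [pow_zero, Nat.cast_zero, mul_zero, zero_add, one_mul, Finset.range_one,
      Finset.sum_product, Finset.sum_singleton]
    gcongr with j hj
    refine integral_mono_of_nonneg (Filter.Eventually.of_forall fun _ => norm_nonneg _) (hBint j)
      (Filter.Eventually.of_forall fun ξ => hMb j σ hσ ξ)
  have hBn : ∀ n, 0 ≤ B n := fun n => integral_nonneg fun ξ =>
    Set.indicator_nonneg (fun _ _ => abs_nonneg _) _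
  set S0 : ℝ := 2 ^ 0 * ∑ j ∈ Finset.range (0 + 1), B j
  set S4 : ℝ := 2 ^ 4 * ∑ j ∈ Finset.range (4 + 1), B j
  have hS0 : 0 ≤ S0 := mul_nonneg (by norm_num) (Finset.sum_nonneg fun _ _ => hBn _)
  have hS4 : 0 ≤ S4 := mul_nonneg (by norm_num) (Finset.sum_nonneg fun _ _ => hBn _)
  refine ⟨8 * (S0 + S4) + 1, by linarith, fun σ hσ x => ?_⟩
  have e0 := hfour 0 σ hσ x
  have e4 := hfour 4 σ hσ x
  rw [pow_zero, one_mul] at e0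
  rw [jb_eq, ← div_eq_mul_inv, le_div_iff₀ (by positivity)]
  set y := ‖𝓕⁻ (fun ξ => G (σ, ξ)) x‖ with hy
  have hy0 : 0 ≤ y := norm_nonneg _
  change y * _ ≤ _
  calc y * (1 + ‖x‖) ^ 4 ≤ y * (8 * (1 + ‖x‖ ^ 4)) := by
        gcongr; exact one_add_pow_four _ (norm_nonneg _)
    _ = 8 * (y + ‖x‖ ^ 4 * y) := by ring
    _ ≤ 8 * (S0 + S4) := by gcongr
    _ ≤ _ := by linarith

lemma continuous_wave (m : ℝ) (b : Rd → ℂ) (hb : Continuous b) (hc : HasCompactSupport b) :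
    Continuous (fun q : ℝ × Rd => 𝓕⁻ (fun ξ => sym m q.1 ξ * b ξ) q.2) := by
  simp_rw [fourierInv_ch]
  refine continuous_of_dominated (bound := fun ξ => ‖b ξ‖) ?_ ?_ ?_ ?_
  · intro q
    refine Continuous.aestronglyMeasurable ?_
    have h1 : Continuous (fun ξ : Rd => sym m q.1 ξ) :=
      (continuous_sym m).comp (Continuous.prodMk continuous_const continuous_id)
    have h2 : Continuous (fun ξ : Rd => ch (inner ℝ ξ q.2)) := continuous_ch.comp (by fun_prop)
    exact h2.mul (h1.mul hb)
  · intro q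
    refine Filter.Eventually.of_forall fun ξ => ?_
    simp [norm_ch, norm_sym]
  · exact (hb.integrable_of_hasCompactSupport hc).norm
  · refine Filter.Eventually.of_forall fun ξ => ?_
    have h1 : Continuous (fun q : ℝ × Rd => sym m q.1 ξ) :=
      (continuous_sym m).comp (Continuous.prodMk continuous_fst continuous_const)
    have h2 : Continuous (fun q : ℝ × Rd => ch (inner ℝ ξ q.2)) := continuous_ch.comp (by fun_prop)
    exact h2.mul (h1.mul continuous_const)

/-- Fourier inversion from integrability of the inverse transform. -/
lemma inv_of (g : Rd → ℂ) (hg : Continuous g) (hi : Integrable g) (hi' : Integrable (𝓕⁻ g)) :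
    𝓕 (𝓕⁻ g) = g := by
  refine hg.fourier_fourierInv_eq hi ?_
  have : 𝓕 g = fun x => 𝓕⁻ g (-x) := by
    ext x; rw [Real.fourierInv_eq_fourier_neg, neg_neg]
  rw [this]
  exact hi'.comp_neg

/-! ### The Newtonian kernel -/

lemma newton_bound : ∃ C0 : ℝ, 0 < C0 ∧ ∀ x : Rd, Integrable (fun y => jb y / ‖x - y‖) ∧
    ∫ y, jb y / ‖x - y‖ ≤ C0 := by
  set k : Rd → ℝ := (Metric.ball (0 : Rd) 1).indicator (fun z => 1 / ‖z‖) with hk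
  have hkint : Integrable k := by
    refine (integrable_indicator_iff measurableSet_ball).2 ?_
    refine integrableOn_ball_of_norm_le_rpow (C := 1) (α := 1) (by simp) (by simp) ?_ ?_
    · refine Filter.Eventually.of_forall fun x => ?_
      rw [Real.rpow_neg_one]; simp
    · exact (measurable_const.div measurable_norm).aestronglyMeasurable
  have hk0 : ∀ z, 0 ≤ k z := fun z => Set.indicator_nonneg (fun _ _ => by positivity) _
  have hle : ∀ x y : Rd, jb y / ‖x - y‖ ≤ k (x - y) + jb y := by
    intro x y
    by_cases h : x - y ∈ Metric.ball (0 : Rd) 1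
    · rw [hk, Set.indicator_of_mem h]
      have : jb y / ‖x - y‖ ≤ 1 / ‖x - y‖ := by
        gcongr; exact jb_le_one y
      linarith [jb_pos y]
    · rw [hk, Set.indicator_of_notMem h, zero_add]
      refine div_le_self (jb_pos y).le ?_
      simpa using h
  have hmaj : ∀ x, Integrable (fun y => k (x - y) + jb y) := fun x =>
    (hkint.comp_sub_left x).add integrable_jb
  have hi : ∀ x : Rd, Integrable (fun y => jb y / ‖x - y‖) := fun x => by
    refine (hmaj x).mono' ?_ ?_
    · exact (continuous_jb.measurable.div (by fun_prop)).aestronglyMeasurable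
    · refine Filter.Eventually.of_forall fun y => ?_
      rw [Real.norm_of_nonneg (div_nonneg (jb_pos y).le (norm_nonneg _))]
      exact hle x y
  refine ⟨(∫ y, k y) + (∫ y, jb y) + 1, ?_, fun x => ⟨hi x, ?_⟩⟩
  · have h1 : 0 ≤ ∫ y, k y := integral_nonneg hk0
    have h2 : 0 ≤ ∫ y, jb y := integral_nonneg fun y => (jb_pos y).le
    linarith
  · calc _ ≤ ∫ y, (k (x - y) + jb y) := integral_mono (hi x) (hmaj x) (hle x)
      _ = (∫ y, k y) + ∫ y, jb y := by
        rw [integral_add (hkint.comp_sub_left x) integrable_jb, integral_sub_left_eq_self]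
      _ ≤ _ := by linarith

def gk (l : ℝ) (z : Rd) : ℝ := l ^ (-(1 / 2) : ℝ) * Real.exp (-(π * ‖z‖ ^ 2 * l))

lemma gk_nonneg (l : ℝ) (hl : 0 < l) (z : Rd) : 0 ≤ gk l z := by unfold gk; positivity

lemma gk_integrable (z : Rd) (hz : z ≠ 0) : IntegrableOn (fun l => gk l z) (Set.Ioi 0) := by
  have hz' : 0 < ‖z‖ := norm_pos_iff.mpr hz
  have := integrableOn_rpow_mul_exp_neg_mul_rpow (p := 1) (s := -(1 / 2)) (b := π * ‖z‖ ^ 2)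
    (by norm_num) (by norm_num) (by positivity)
  simpa [gk] using this

lemma gk_integral (z : Rd) (hz : z ≠ 0) : ∫ l in Set.Ioi (0 : ℝ), gk l z = 1 / ‖z‖ := by
  have hz' : 0 < ‖z‖ := norm_pos_iff.mpr hz
  have h := Real.integral_rpow_mul_exp_neg_mul_Ioi (a := 1 / 2) (r := π * ‖z‖ ^ 2)
    (by norm_num) (by positivity)
  have e : (1 / 2 - 1 : ℝ) = -(1 / 2) := by norm_num
  rw [e, Real.Gamma_one_half_eq] at h
  unfold gk
  rw [h, ← Real.sqrt_eq_rpow, ← Real.sqrt_mul (by positivity),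
    show 1 / (π * ‖z‖ ^ 2) * π = (1 / ‖z‖) ^ 2 by field_simp]
  exact Real.sqrt_sq (by positivity)

def gz (l : ℝ) (ζ : Rd) : ℝ := Real.exp (-(π / l) * ‖ζ‖ ^ 2)

lemma gz_integrable (l : ℝ) (hl : 0 < l) : Integrable (fun ζ : Rd => (gz l ζ : ℂ)) := by
  have := GaussianFourier.integrable_cexp_neg_mul_sq_norm_add (V := Rd) (b := ((π / l : ℝ) : ℂ))
    (by rw [Complex.ofReal_re]; positivity) 0 0
  refine this.congr (Filter.Eventually.of_forall fun v => ?_)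
  simp [gz]

lemma gk_fourier (l : ℝ) (hl : 0 < l) (z : Rd) :
    (gk l z : ℂ) = ((l ^ (-2 : ℝ) : ℝ) : ℂ) * ∫ ζ : Rd, ch (inner ℝ ζ z) * (gz l ζ : ℂ) := by
  have h := fourier_gaussian_innerProductSpace (V := Rd) (b := ((π / l : ℝ) : ℂ))
    (by rw [Complex.ofReal_re]; positivity) (-z)
  rw [fourier_ch] at h
  have e1 : ∫ ζ : Rd, ch (inner ℝ ζ z) * (gz l ζ : ℂ) =
      ∫ v : Rd, ch (-inner ℝ v (-z)) * cexp (-((π / l : ℝ) : ℂ) * (‖v‖ : ℂ) ^ 2) := by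
    congr 1; ext v; simp [gz]
  rw [e1, h]
  have e2 : ((π : ℂ) / ((π / l : ℝ) : ℂ)) ^ ((Module.finrank ℝ Rd : ℂ) / 2) = ((l ^ (3 / 2 : ℝ) : ℝ) : ℂ) := by
    rw [Complex.ofReal_cpow hl.le]
    have : (π : ℂ) ≠ 0 := by exact_mod_cast Real.pi_ne_zero
    congr 1
    · push_cast; field_simp
    · simp
  have e3 : cexp (-(π : ℂ) ^ 2 * (‖-z‖ : ℂ) ^ 2 / ((π / l : ℝ) : ℂ)) =
      ((Real.exp (-(π * ‖z‖ ^ 2 * l)) : ℝ) : ℂ) := by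
    have : (π : ℂ) ≠ 0 := by exact_mod_cast Real.pi_ne_zero
    have : (l : ℂ) ≠ 0 := by exact_mod_cast hl.ne'
    push_cast
    congr 1
    rw [norm_neg]
    field_simp
  rw [e2, e3, gk]
  rw [← Complex.ofReal_mul, ← Complex.ofReal_mul, ← mul_assoc, ← Real.rpow_add hl]
  norm_num

/-- The fixed-`l` slice of the Fourier transform of the nonlinearity. -/
def slice (g : Rd → ℂ) (ξ : Rd) (l : ℝ) : ℂ :=
  ∫ ζ : Rd, ((l ^ (-2 : ℝ) * gz l ζ : ℝ) : ℂ) * (g (ξ - ζ) * ∫ α, (starRingEnd ℂ) (g α) * g (ζ + α))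

/-- Standing hypotheses on a frequency profile `g`. -/
structure Good (g : Rd → ℂ) (C : ℝ) : Prop where
  hg : Continuous g
  hc : HasCompactSupport g
  hC : 0 < C
  hdec : ∀ x, ‖𝓕⁻ g x‖ ≤ C * jb x
  hcont : Continuous (𝓕⁻ g)
  hinv : 𝓕 (𝓕⁻ g) = g

lemma u_integrable {g : Rd → ℂ} {C : ℝ} (H : Good g C) : Integrable (𝓕⁻ g) :=
  (integrable_jb.const_mul C).mono' H.hcont.aestronglyMeasurable (Filter.Eventually.of_forall H.hdec)

lemma usq_le {g : Rd → ℂ} {C : ℝ} (H : Good g C) (x : Rd) : ‖𝓕⁻ g x‖ ^ 2 ≤ C ^ 2 * jb x := by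
  calc ‖𝓕⁻ g x‖ ^ 2 ≤ (C * jb x) ^ 2 := by gcongr; exact H.hdec x
    _ = C ^ 2 * (jb x * jb x) := by ring
    _ ≤ C ^ 2 * (jb x * 1) := by
      gcongr
      · exact (jb_pos x).le
      · exact jb_le_one x
    _ = _ := by ring

lemma usq_integrable {g : Rd → ℂ} {C : ℝ} (H : Good g C) : Integrable (fun y => (‖𝓕⁻ g y‖ : ℂ) ^ 2) := by
  refine (integrable_jb.const_mul (C ^ 2)).mono' ?_ (Filter.Eventually.of_forall fun x => ?_)
  · have := H.hcont
    fun_prop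
  simpa using usq_le H x

lemma density_fourier {g : Rd → ℂ} {C : ℝ} (H : Good g C) (ζ : Rd) : ∫ y, ch (-inner ℝ y ζ) * (‖𝓕⁻ g y‖ : ℂ) ^ 2 =
    ∫ α, (starRingEnd ℂ) (g α) * g (ζ + α) := by
  have hu := u_integrable H
  have hinv := H.hinv
  have hgi : Integrable g := H.hg.integrable_of_hasCompactSupport H.hc
  set u := 𝓕⁻ g with hudef
  have e1 : ∀ y, ch (-inner ℝ y ζ) * (‖u y‖ : ℂ) ^ 2 =
      ∫ α, ch (-inner ℝ y (ζ + α)) * u y * (starRingEnd ℂ) (g α) := by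
    intro y
    have : (starRingEnd ℂ) (u y) = ∫ α, ch (-inner ℝ α y) * (starRingEnd ℂ) (g α) := by
      rw [hudef, fourierInv_ch, ← integral_conj]
      congr 1; ext α; rw [map_mul, conj_ch]
    rw [← Complex.mul_conj', this, ← mul_assoc, ← integral_const_mul]
    congr 1; ext α
    rw [inner_add_right, neg_add, ch_add, real_inner_comm y α]
    ring
  simp_rw [e1]
  rw [integral_integral_swap]
  · congr 1; ext α
    rw [integral_mul_const, ← fourier_ch, hinv, mul_comm]
  · have hgs : Integrable (fun α => (starRingEnd ℂ) (g α)) :=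
      hgi.mono (Complex.continuous_conj.comp H.hg).aestronglyMeasurable
        (Filter.Eventually.of_forall fun a => by simp)
    have h := hu.mul_prod hgs
    refine (h.bdd_mul (c := 1) (f := fun q : Rd × Rd => ch (-inner ℝ q.1 (ζ + q.2))) ?_ ?_).congr ?_
    · exact (continuous_ch.comp (by fun_prop)).aestronglyMeasurable
    · exact Filter.Eventually.of_forall fun q => (norm_ch _).le
    · exact Filter.Eventually.of_forall fun q => by
        simp [Function.uncurry]; ring

lemma slice_eq {g : Rd → ℂ} {C : ℝ} (H : Good g C) (ξ : Rd) (l : ℝ) (hl : 0 < l) :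
    ∫ q : Rd × Rd, (ch (-inner ℝ q.1 ξ) * 𝓕⁻ g q.1 * (‖𝓕⁻ g q.2‖ : ℂ) ^ 2) * (gk l (q.1 - q.2) : ℂ) =
      slice g ξ l := by
  have hu := u_integrable H
  have hinv := H.hinv
  have hu2 := usq_integrable H
  have hd := density_fourier H
  have hinv' : ∀ w, ∫ v, ch (-inner ℝ v w) * 𝓕⁻ g v = g w := fun w => by rw [← fourier_ch, hinv]
  set u := 𝓕⁻ g with hudef
  unfold slice
  have e1 : ∀ q : Rd × Rd, (ch (-inner ℝ q.1 ξ) * u q.1 * (‖u q.2‖ : ℂ) ^ 2) * (gk l (q.1 - q.2) : ℂ) =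
      ∫ ζ, ((l ^ (-2 : ℝ) * gz l ζ : ℝ) : ℂ) *
        ((ch (-inner ℝ q.1 (ξ - ζ)) * u q.1) * (ch (-inner ℝ q.2 ζ) * (‖u q.2‖ : ℂ) ^ 2)) := by
    intro q
    rw [gk_fourier l hl, ← mul_assoc, ← integral_const_mul]
    congr 1; ext ζ
    rw [inner_sub_right ζ, inner_sub_right q.1, neg_sub, sub_eq_add_neg, sub_eq_add_neg, ch_add, ch_add,
      real_inner_comm q.1 ζ, real_inner_comm q.2 ζ]
    push_cast
    ring
  simp_rw [e1]
  rw [integral_integral_swap]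
  · congr 1; ext ζ
    rw [integral_const_mul, Measure.volume_eq_prod, integral_prod_mul (f := fun x => ch (-inner ℝ x (ξ - ζ)) * u x)
      (g := fun y => ch (-inner ℝ y ζ) * (‖u y‖ : ℂ) ^ 2), hd, hinv']
  · have h := ((hu.mul_prod hu2).mul_prod (gz_integrable l hl)).const_mul ((l ^ (-2 : ℝ) : ℝ) : ℂ)
    refine (h.bdd_mul (c := 1) (f := fun q : (Rd × Rd) × Rd => ch (-inner ℝ q.1.1 (ξ - q.2))
      * ch (-inner ℝ q.1.2 q.2)) ?_ ?_).congr ?_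
    · exact ((continuous_ch.comp (by fun_prop)).mul (continuous_ch.comp (by fun_prop))).aestronglyMeasurable
    · exact Filter.Eventually.of_forall fun q => by simp [norm_ch]
    · exact Filter.Eventually.of_forall fun q => by
        simp [Function.uncurry]; ring


/-- Uniform constant for the Newtonian potential. -/
def C0 : ℝ := newton_bound.choose

lemma C0_pos : 0 < C0 := newton_bound.choose_spec.1
lemma C0_int (x : Rd) : Integrable (fun y => jb y / ‖x - y‖) := (newton_bound.choose_spec.2 x).1
lemma C0_le (x : Rd) : ∫ y, jb y / ‖x - y‖ ≤ C0 := (newton_bound.choose_spec.2 x).2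

lemma newton_le {g : Rd → ℂ} {C : ℝ} (H : Good g C) (x : Rd) :
    ‖newton (fun y => (‖𝓕⁻ g y‖ : ℂ) ^ 2) x‖ ≤ C ^ 2 * C0 := by
  unfold newton
  calc _ ≤ ∫ y, C ^ 2 * (jb y / ‖x - y‖) := by
        refine norm_integral_le_of_norm_le ((C0_int x).const_mul _)
          (Filter.Eventually.of_forall fun y => ?_)
        simp only [norm_div, norm_pow, Complex.norm_real, norm_norm]
        rw [← mul_div_assoc]
        gcongr
        exact usq_le H y
    _ = C ^ 2 * ∫ y, jb y / ‖x - y‖ := integral_const_mul _ _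
    _ ≤ _ := by gcongr; exact C0_le x

lemma nonlin_le {g : Rd → ℂ} {C : ℝ} (H : Good g C) (x : Rd) :
    ‖nonlin (𝓕⁻ g) x‖ ≤ C ^ 3 * C0 * jb x := by
  unfold nonlin
  rw [norm_mul]
  calc _ ≤ (C ^ 2 * C0) * (C * jb x) := by
        have := C0_pos
        gcongr
        · exact newton_le H x
        · exact H.hdec x
    _ = _ := by ring

lemma ae_ne : ∀ᵐ q : Rd × Rd, q.1 - q.2 ≠ 0 := by
  rw [Measure.volume_eq_prod, Measure.ae_prod_iff_ae_ae]
  · refine Filter.Eventually.of_forall fun x => ?_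
    have : ∀ᵐ y : Rd, y ≠ x := by simp [ae_iff]
    filter_upwards [this] with y hy
    simpa [sub_eq_zero] using hy.symm
  · exact (isClosed_singleton.preimage (by fun_prop : Continuous fun q : Rd × Rd => q.1 - q.2)).isOpen_compl.measurableSet

lemma pair_integrable {g : Rd → ℂ} {C : ℝ} (H : Good g C) (ξ : Rd) :
    Integrable (fun q : Rd × Rd => (ch (-inner ℝ q.1 ξ) * 𝓕⁻ g q.1 * (‖𝓕⁻ g q.2‖ : ℂ) ^ 2) /
      (‖q.1 - q.2‖ : ℂ)) := by
  have hm : Measurable (fun q : Rd × Rd => (ch (-inner ℝ q.1 ξ) * 𝓕⁻ g q.1 * (‖𝓕⁻ g q.2‖ : ℂ) ^ 2) /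
      (‖q.1 - q.2‖ : ℂ)) := by
    have h1 := H.hcont
    have h2 := continuous_ch
    refine Measurable.div (Continuous.measurable (by fun_prop)) (Continuous.measurable (by fun_prop))
  have hmaj : Integrable (fun q : Rd × Rd => C ^ 3 * (jb q.1 * (jb q.2 / ‖q.1 - q.2‖))) := by
    refine Integrable.const_mul ?_ _
    have hcj := continuous_jb
    have hm' : Measurable (fun q : Rd × Rd => jb q.1 * (jb q.2 / ‖q.1 - q.2‖)) :=
      Measurable.mul (Continuous.measurable (by fun_prop))
        (Measurable.div (Continuous.measurable (by fun_prop)) (Continuous.measurable (by fun_prop)))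
    rw [Measure.volume_eq_prod, integrable_prod_iff hm'.aestronglyMeasurable]
    refine ⟨Filter.Eventually.of_forall fun x => (C0_int x).const_mul (jb x), ?_⟩
    refine (integrable_jb.mul_const C0).mono' ?_ ?_
    · exact (hm'.norm.stronglyMeasurable.integral_prod_right' (ν := volume)).aestronglyMeasurable
    · refine Filter.Eventually.of_forall fun x => ?_
      rw [Real.norm_of_nonneg (integral_nonneg fun _ => norm_nonneg _)]
      have : ∀ y, ‖jb x * (jb y / ‖x - y‖)‖ = jb x * (jb y / ‖x - y‖) := fun y =>
        Real.norm_of_nonneg (mul_nonneg (jb_pos x).le (div_nonneg (jb_pos y).le (norm_nonneg _)))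
      simp_rw [this, integral_const_mul]
      exact mul_le_mul_of_nonneg_left (C0_le x) (jb_pos x).le
  refine hmaj.mono' hm.aestronglyMeasurable (Filter.Eventually.of_forall fun q => ?_)
  simp only [norm_div, norm_mul, norm_pow, Complex.norm_real, norm_norm, norm_ch, one_mul]
  have := H.hC
  calc _ ≤ (C * jb q.1 * (C ^ 2 * jb q.2)) / ‖q.1 - q.2‖ := by
        have := (jb_pos q.1).le
        gcongr
        · exact H.hdec _
        · exact usq_le H _
    _ = _ := by ring

lemma nonlin_fourier {g : Rd → ℂ} {C : ℝ} (H : Good g C) (ξ : Rd) :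
    IntegrableOn (slice g ξ) (Set.Ioi 0) ∧ 𝓕 (nonlin (𝓕⁻ g)) ξ = ∫ l in Set.Ioi (0 : ℝ), slice g ξ l := by
  have hP := pair_integrable H ξ
  have hS := slice_eq H ξ
  set F : Rd × Rd → ℂ := fun q => ch (-inner ℝ q.1 ξ) * 𝓕⁻ g q.1 * (‖𝓕⁻ g q.2‖ : ℂ) ^ 2 with hF
  have hFc : Continuous F := by
    have h1 := H.hcont
    have h2 := continuous_ch
    fun_prop
  set J : (Rd × Rd) × ℝ → ℂ := fun p => F p.1 * (gk p.2 (p.1.1 - p.1.2) : ℂ) with hJ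
  have hgm : Measurable (fun p : (Rd × Rd) × ℝ => gk p.2 (p.1.1 - p.1.2)) := by
    unfold gk
    refine Measurable.mul (measurable_snd.pow_const _) (Continuous.measurable (by fun_prop))
  have hJm : Measurable J :=
    (hFc.measurable.comp measurable_fst).mul (Complex.measurable_ofReal.comp hgm)
  have hJn : ∀ q : Rd × Rd, q.1 - q.2 ≠ 0 →
      ∫ l in Set.Ioi (0 : ℝ), ‖J (q, l)‖ = ‖F q / (‖q.1 - q.2‖ : ℂ)‖ := by
    intro q hq
    rw [norm_div, Complex.norm_real, norm_norm, div_eq_mul_one_div, ← gk_integral _ hq,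
      ← integral_const_mul]
    refine setIntegral_congr_fun measurableSet_Ioi fun l hl => ?_
    simp only [hJ, norm_mul, Complex.norm_real]
    rw [Real.norm_of_nonneg (gk_nonneg l hl _)]
  have hJi : Integrable J ((volume : Measure (Rd × Rd)).prod (volume.restrict (Set.Ioi 0))) := by
    rw [integrable_prod_iff hJm.aestronglyMeasurable]
    constructor
    · filter_upwards [ae_ne] with q hq
      exact ((gk_integrable _ hq).ofReal (𝕜 := ℂ)).const_mul (F q)
    · refine hP.norm.congr ?_
      filter_upwards [ae_ne] with q hq
      exact (hJn q hq).symm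
  have e3 : ∀ l ∈ Set.Ioi (0 : ℝ), ∫ q : Rd × Rd, J (q, l) = slice g ξ l := fun l hl => hS l hl
  constructor
  · refine IntegrableOn.congr_fun (f := fun l => ∫ q : Rd × Rd, J (q, l)) ?_ e3 measurableSet_Ioi
    exact hJi.integral_prod_right
  · have e1 : 𝓕 (nonlin (𝓕⁻ g)) ξ = ∫ q : Rd × Rd, F q / (‖q.1 - q.2‖ : ℂ) := by
      rw [Measure.volume_eq_prod, integral_prod _ hP, fourier_ch]
      congr 1; ext x
      unfold nonlin newton
      rw [mul_comm (∫ y, _), ← mul_assoc, ← integral_const_mul]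
      congr 1; ext y
      ring
    have e2 : ∫ q : Rd × Rd, F q / (‖q.1 - q.2‖ : ℂ) =
        ∫ q : Rd × Rd, ∫ l in Set.Ioi (0 : ℝ), J (q, l) := by
      refine integral_congr_ae ?_
      filter_upwards [ae_ne] with q hq
      simp only [hJ]
      rw [integral_const_mul, integral_complex_ofReal, gk_integral _ hq]
      push_cast
      ring
    rw [e1, e2, integral_integral_swap hJi]
    exact setIntegral_congr_fun measurableSet_Ioi e3

/-! ### The Duhamel term on the Fourier side -/

def wv (m : ℝ) (b : Rd → ℂ) (τ : ℝ) : Rd → ℂ := fun ξ => sym m τ ξ * b ξ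

lemma wv_continuous (m : ℝ) {b : Rd → ℂ} (hb : Continuous b) (τ : ℝ) : Continuous (wv m b τ) :=
  ((continuous_sym m).comp (Continuous.prodMk continuous_const continuous_id)).mul hb

lemma continuous_wv (m : ℝ) {b : Rd → ℂ} (hb : Continuous b) (hc : HasCompactSupport b) :
    Continuous (fun q : ℝ × Rd => 𝓕⁻ (wv m b q.1) q.2) := continuous_wave m b hb hc

/-- An admissible frequency bump. -/
structure Bump (b : Rd → ℂ) : Prop where
  smooth : ContDiff ℝ (⊤ : ℕ∞) b
  comp : HasCompactSupport b
  zero : (0 : Rd) ∉ tsupport b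

lemma good_wave (m : ℝ) {b : Rd → ℂ} (B : Bump b) :
    ∃ C : ℝ, 0 < C ∧ ∀ τ ∈ Set.Icc (0 : ℝ) 1, Good (wv m b τ) C := by
  obtain ⟨C, hC, hd⟩ := decay m b B.smooth B.comp B.zero
  refine ⟨C, hC, fun τ hτ => ?_⟩
  have hcont : Continuous (𝓕⁻ (wv m b τ)) :=
    Continuous.comp (g := fun q : ℝ × Rd => 𝓕⁻ (wv m b q.1) q.2) (f := fun x : Rd => (τ, x))
      (continuous_wv m B.smooth.continuous B.comp) (by fun_prop)
  have hg := wv_continuous m B.smooth.continuous τ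
  have hc : HasCompactSupport (wv m b τ) := B.comp.mul_left
  refine ⟨hg, hc, hC, hd τ hτ, hcont, ?_⟩
  refine inv_of _ hg (hg.integrable_of_hasCompactSupport hc) ?_
  exact (integrable_jb.const_mul C).mono' hcont.aestronglyMeasurable
    (Filter.Eventually.of_forall (hd τ hτ))

lemma nonlin_measurable (m : ℝ) {b : Rd → ℂ} (B : Bump b) :
    StronglyMeasurable (fun q : ℝ × Rd => nonlin (𝓕⁻ (wv m b q.1)) q.2) := by
  have hu : Continuous (fun q : ℝ × Rd => 𝓕⁻ (wv m b q.1) q.2) :=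
    continuous_wv m B.smooth.continuous B.comp
  unfold nonlin newton
  refine StronglyMeasurable.mul ?_ hu.stronglyMeasurable
  refine StronglyMeasurable.integral_prod_right
    (f := fun (q : ℝ × Rd) (y : Rd) => (‖𝓕⁻ (wv m b q.1) y‖ : ℂ) ^ 2 / (‖q.2 - y‖ : ℂ)) ?_
  refine Measurable.stronglyMeasurable ?_
  refine Measurable.div ?_ (Continuous.measurable (by fun_prop))
  have h2 : Continuous (fun p : (ℝ × Rd) × Rd => 𝓕⁻ (wv m b p.1.1) p.2) :=
    Continuous.comp (g := fun q : ℝ × Rd => 𝓕⁻ (wv m b q.1) q.2)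
      (f := fun p : (ℝ × Rd) × Rd => (p.1.1, p.2)) hu (by fun_prop)
  exact Continuous.measurable (by fun_prop)

lemma nonlin_integrable (m : ℝ) {b : Rd → ℂ} (B : Bump b) {C : ℝ} {τ : ℝ} (H : Good (wv m b τ) C) :
    Integrable (nonlin (𝓕⁻ (wv m b τ))) := by
  refine (integrable_jb.const_mul (C ^ 3 * C0)).mono' ?_ (Filter.Eventually.of_forall (nonlin_le H))
  exact ((nonlin_measurable m B).comp_measurable (measurable_prodMk_left (x := τ))).aestronglyMeasurable

lemma fourierInv_mul (k : Rd → ℂ) (hk : Integrable k) (n : Rd → ℂ) (hn : Integrable n) (x : Rd) :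
    𝓕⁻ (fun ξ => k ξ * 𝓕 n ξ) x = ∫ y, 𝓕⁻ k (x - y) * n y := by
  have e1 : ∀ y, 𝓕⁻ k (x - y) * n y = ∫ ξ, ch (inner ℝ ξ (x - y)) * (k ξ * n y) := by
    intro y
    rw [fourierInv_ch, ← integral_mul_const]
    congr 1; ext ξ; ring
  have e2 : 𝓕⁻ (fun ξ => k ξ * 𝓕 n ξ) x = ∫ ξ, ∫ y, ch (inner ℝ ξ (x - y)) * (k ξ * n y) := by
    rw [fourierInv_ch]
    congr 1; ext ξ
    rw [fourier_ch, ← integral_const_mul, ← integral_const_mul]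
    congr 1; ext y
    rw [inner_sub_right, sub_eq_add_neg, ch_add, real_inner_comm y ξ]
    ring
  simp_rw [e1, e2]
  rw [integral_integral_swap]
  refine (hk.mul_prod hn).bdd_mul (c := 1) (f := fun q : Rd × Rd => ch (inner ℝ q.1 (x - q.2))) ?_ ?_
  · exact (continuous_ch.comp (by fun_prop)).aestronglyMeasurable
  · exact Filter.Eventually.of_forall fun q => (norm_ch _).le

lemma duhamel_fourier (m t : ℝ) (ht : 0 < t) (ht1 : t ≤ 1) {b χ φ : Rd → ℂ} (B : Bump b) (X : Bump χ)
    (hφ : 𝓕 φ = b)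
    (hsup : ∀ τ ∈ Set.Icc (0 : ℝ) 1, ∀ ξ,
      χ ξ * 𝓕 (nonlin (𝓕⁻ (wv m b τ))) ξ = 𝓕 (nonlin (𝓕⁻ (wv m b τ))) ξ) (ξ : Rd) :
    IntegrableOn (fun τ => sym m (t - τ) ξ * 𝓕 (nonlin (𝓕⁻ (wv m b τ))) ξ) (Set.Ioc 0 t) ∧
    𝓕 (duhamelFree m φ t) ξ =
      ∫ τ in Set.Ioc 0 t, sym m (t - τ) ξ * 𝓕 (nonlin (𝓕⁻ (wv m b τ))) ξ := by
  obtain ⟨C1, hC1, hgb⟩ := good_wave m B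
  obtain ⟨C2, hC2, hgx⟩ := good_wave m X
  have hτ1 : ∀ τ ∈ Set.Ioc 0 t, τ ∈ Set.Icc (0 : ℝ) 1 := fun τ h => ⟨h.1.le, h.2.trans ht1⟩
  have hτ2 : ∀ τ ∈ Set.Ioc 0 t, t - τ ∈ Set.Icc (0 : ℝ) 1 := fun τ h =>
    ⟨by linarith [h.2], by linarith [h.1]⟩
  set N : ℝ → Rd → ℂ := fun τ => nonlin (𝓕⁻ (wv m b τ)) with hN
  set W : ℝ → Rd → ℂ := fun σ => 𝓕⁻ (wv m χ σ) with hW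
  have hWc : Continuous (fun q : ℝ × Rd => W q.1 q.2) := continuous_wv m X.smooth.continuous X.comp
  have hNm : StronglyMeasurable (fun q : ℝ × Rd => N q.1 q.2) := nonlin_measurable m B
  have hNi : ∀ τ ∈ Set.Ioc 0 t, Integrable (N τ) := fun τ hτ => nonlin_integrable m B (hgb τ (hτ1 τ hτ))
  set μ : Measure ℝ := volume.restrict (Set.Ioc 0 t) with hμ
  set K : (ℝ × Rd) × Rd → ℂ := fun p => W (t - p.1.1) (p.2 - p.1.2) * N p.1.1 p.1.2 with hK
  have hKm : StronglyMeasurable K := by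
    refine StronglyMeasurable.mul ?_ (hNm.comp_measurable measurable_fst)
    refine Continuous.stronglyMeasurable ?_
    exact hWc.comp (f := fun p : (ℝ × Rd) × Rd => (t - p.1.1, p.2 - p.1.2)) (by fun_prop)
  have hmem0 : ∀ᵐ τ ∂μ, τ ∈ Set.Ioc 0 t := ae_restrict_mem measurableSet_Ioc
  have hmem : ∀ᵐ q ∂(μ.prod (volume : Measure Rd)), q.1 ∈ Set.Ioc 0 t :=
    Measure.quasiMeasurePreserving_fst.ae hmem0
  have hmem2 : ∀ᵐ p ∂((μ.prod (volume : Measure Rd)).prod (volume : Measure Rd)), p.1.1 ∈ Set.Ioc 0 t :=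
    Measure.quasiMeasurePreserving_fst.ae hmem
  have hKi : Integrable K ((μ.prod (volume : Measure Rd)).prod (volume : Measure Rd)) := by
    have hmaj : Integrable (fun p : (ℝ × Rd) × Rd => (C2 * (C1 ^ 3 * C0)) * (jb p.1.2 * jb (p.2 - p.1.2)))
        ((μ.prod (volume : Measure Rd)).prod (volume : Measure Rd)) := by
      refine Integrable.const_mul ?_ _
      have hcj := continuous_jb
      rw [integrable_prod_iff (Continuous.aestronglyMeasurable (by fun_prop))]
      constructor
      · exact Filter.Eventually.of_forall fun q => (integrable_jb.comp_sub_right q.2).const_mul (jb q.2)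
      · have h1 : Integrable (fun q : ℝ × Rd => (1 : ℝ) * jb q.2) (μ.prod (volume : Measure Rd)) :=
          Integrable.mul_prod (integrable_const 1) integrable_jb
        refine (h1.mul_const (∫ z, jb z)).congr (Filter.Eventually.of_forall fun q => ?_)
        have : ∀ y, ‖jb q.2 * jb (y - q.2)‖ = jb q.2 * jb (y - q.2) := fun y =>
          Real.norm_of_nonneg (mul_nonneg (jb_pos _).le (jb_pos _).le)
        simp_rw [this, integral_const_mul]
        rw [integral_sub_right_eq_self (fun z => jb z), one_mul]
    refine hmaj.mono' hKm.aestronglyMeasurable ?_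
    filter_upwards [hmem2] with p hp
    rw [hK, norm_mul]
    calc _ ≤ (C2 * jb (p.2 - p.1.2)) * (C1 ^ 3 * C0 * jb p.1.2) := by
          have := (jb_pos (p.2 - p.1.2)).le
          gcongr
          · exact (hgx _ (hτ2 _ hp)).hdec _
          · exact nonlin_le (hgb _ (hτ1 _ hp)) _
      _ = _ := by ring
  have hprop : ∀ τ ∈ Set.Ioc 0 t, ∀ x, uProp m (t - τ) (nonlin (uProp m τ φ)) x = ∫ y, K ((τ, y), x) := by
    intro τ hτ x
    have h1 : uProp m τ φ = 𝓕⁻ (wv m b τ) := by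
      unfold uProp; rw [hφ]; rfl
    rw [h1]
    have hk : Integrable (wv m χ (t - τ)) :=
      (wv_continuous m X.smooth.continuous _).integrable_of_hasCompactSupport (hgx _ (hτ2 τ hτ)).hc
    have h2 := fourierInv_mul (wv m χ (t - τ)) hk (N τ) (hNi τ hτ) x
    simp only [hK]
    rw [← h2]
    have h3 : (fun ξ => wv m χ (t - τ) ξ * 𝓕 (N τ) ξ) = fun ξ => sym m (t - τ) ξ * 𝓕 (N τ) ξ := by
      ext ξ
      rw [wv, mul_assoc, hsup τ (hτ1 τ hτ) ξ]
    rw [h3]; rfl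
  have hD : duhamelFree m φ t =ᵐ[volume] fun x => ∫ q, K (q, x) ∂(μ.prod (volume : Measure Rd)) := by
    filter_upwards [hKi.prod_left_ae] with x hx
    rw [integral_prod _ hx, duhamelFree, intervalIntegral.integral_of_le ht.le]
    exact setIntegral_congr_fun measurableSet_Ioc fun τ hτ => hprop τ hτ x
  have hKci : Integrable (fun p : (ℝ × Rd) × Rd => ch (-inner ℝ p.2 ξ) * K p)
      ((μ.prod (volume : Measure Rd)).prod (volume : Measure Rd)) := by
    refine hKi.bdd_mul (c := 1) ?_ ?_
    · exact (continuous_ch.comp (by fun_prop)).aestronglyMeasurable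
    · exact Filter.Eventually.of_forall fun q => (norm_ch _).le
  set Q : ℝ × Rd → ℂ := fun q => sym m (t - q.1) ξ * χ ξ * (ch (-inner ℝ q.2 ξ) * N q.1 q.2) with hQ
  have hQe : (fun q => ∫ x, ch (-inner ℝ x ξ) * K (q, x)) =ᵐ[μ.prod (volume : Measure Rd)] Q := by
    filter_upwards [hmem] with q hq
    have hi := (hgx _ (hτ2 _ hq)).hinv
    have h1 : ∫ x, ch (-inner ℝ x ξ) * W (t - q.1) x = sym m (t - q.1) ξ * χ ξ := by
      rw [← fourier_ch]; simp only [hW]; rw [hi]; rfl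
    have h2 : ∀ x, ch (-inner ℝ x ξ) * K (q, x) =
        (fun z => ch (-inner ℝ z ξ) * W (t - q.1) z * (ch (-inner ℝ q.2 ξ) * N q.1 q.2)) (x - q.2) := by
      intro x
      simp only [hK]
      rw [inner_sub_left, show -inner ℝ x ξ = -(inner ℝ x ξ - inner ℝ q.2 ξ) + -inner ℝ q.2 ξ by ring, ch_add]
      ring
    simp_rw [h2]
    rw [integral_sub_right_eq_self
      (fun z => ch (-inner ℝ z ξ) * W (t - q.1) z * (ch (-inner ℝ q.2 ξ) * N q.1 q.2)),
      integral_mul_const, h1]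
  have hQi : Integrable Q (μ.prod (volume : Measure Rd)) := hKci.integral_prod_left.congr hQe
  have hQy : ∀ τ ∈ Set.Ioc 0 t, ∫ y, Q (τ, y) = sym m (t - τ) ξ * 𝓕 (N τ) ξ := by
    intro τ hτ
    simp only [hQ]
    rw [integral_const_mul, ← fourier_ch, mul_assoc, hsup τ (hτ1 τ hτ) ξ]
  constructor
  · exact IntegrableOn.congr_fun (f := fun τ => ∫ y, Q (τ, y)) hQi.integral_prod_left hQy measurableSet_Ioc
  · rw [Real.fourier_congr_ae hD, fourier_ch]
    simp_rw [← integral_const_mul]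
    rw [← integral_integral_swap hKci, integral_congr_ae hQe, integral_prod _ hQi]
    exact setIntegral_congr_fun measurableSet_Ioc hQy

/-! ### Phase estimate -/

lemma tangent (m : ℝ) (c a : Rd) (hc : 0 < ‖c‖) :
    0 ≤ Real.sqrt (m ^ 2 + ‖a‖ ^ 2) - (Real.sqrt (m ^ 2 + ‖c‖ ^ 2) +
      inner ℝ c (a - c) / Real.sqrt (m ^ 2 + ‖c‖ ^ 2)) ∧
    Real.sqrt (m ^ 2 + ‖a‖ ^ 2) - (Real.sqrt (m ^ 2 + ‖c‖ ^ 2) +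
      inner ℝ c (a - c) / Real.sqrt (m ^ 2 + ‖c‖ ^ 2)) ≤ ‖a - c‖ ^ 2 / (2 * ‖c‖) := by
  set Q := Real.sqrt (m ^ 2 + ‖c‖ ^ 2) with hQ
  set A := Real.sqrt (m ^ 2 + ‖a‖ ^ 2) with hA
  have hQ2 : Q ^ 2 = m ^ 2 + ‖c‖ ^ 2 := Real.sq_sqrt (by positivity)
  have hA2 : A ^ 2 = m ^ 2 + ‖a‖ ^ 2 := Real.sq_sqrt (by positivity)
  have hQc : ‖c‖ ≤ Q := Real.le_sqrt_of_sq_le (by nlinarith [sq_nonneg m])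
  have hQ0 : 0 < Q := hc.trans_le hQc
  have hA0 : 0 ≤ A := Real.sqrt_nonneg _
  set d := a - c with hd
  have ha : a = c + d := by rw [hd]; abel
  have hn : ‖a‖ ^ 2 = ‖c‖ ^ 2 + 2 * inner ℝ c d + ‖d‖ ^ 2 := by
    rw [ha]; exact norm_add_sq_real c d
  have hcs : inner ℝ c a ≤ ‖c‖ * ‖a‖ := real_inner_le_norm c a
  have hin : inner ℝ c a = ‖c‖ ^ 2 + inner ℝ c d := by
    rw [ha, inner_add_right, real_inner_self_eq_norm_sq]
  have hprod : m ^ 2 + ‖c‖ * ‖a‖ ≤ Q * A := by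
    refine abs_le_of_sq_le_sq' ?_ (by positivity) |>.2
    rw [mul_pow, hQ2, hA2]
    nlinarith [sq_nonneg (m * (‖c‖ - ‖a‖))]
  constructor
  · have : 0 ≤ (A - (Q + inner ℝ c d / Q)) * Q := by
      have e : (A - (Q + inner ℝ c d / Q)) * Q = Q * A - Q ^ 2 - inner ℝ c d := by
        field_simp; ring
      rw [e, hQ2]; linarith
    exact nonneg_of_mul_nonneg_left this hQ0
  · have h1 : (A - (Q + inner ℝ c d / Q)) * (2 * Q) ≤ ‖d‖ ^ 2 := by
      have e : (A - (Q + inner ℝ c d / Q)) * (2 * Q) = 2 * (Q * A) - 2 * Q ^ 2 - 2 * inner ℝ c d := by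
        field_simp; ring
      rw [e]
      nlinarith [sq_nonneg (A - Q)]
    have h2 : A - (Q + inner ℝ c d / Q) ≤ ‖d‖ ^ 2 / (2 * Q) := by
      rw [le_div_iff₀ (by positivity)]; exact h1
    refine h2.trans ?_
    gcongr

def pp (m : ℝ) (ξ : Rd) : ℝ := m - Real.sqrt (m ^ 2 + ‖ξ‖ ^ 2)

lemma phase_le (m r : ℝ) (hr : 0 < r) (c v1 v2 v3 v4 : Rd) (hc : ‖c‖ = 5 * r ^ 2)
    (hv : v1 + v2 = v3 + v4) (h1 : ‖v1 - c‖ ≤ r) (h2 : ‖v2 - c‖ ≤ r) (h3 : ‖v3 - c‖ ≤ r)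
    (h4 : ‖v4 - c‖ ≤ r) : |pp m v1 + pp m v2 - pp m v3 - pp m v4| ≤ 1 := by
  have hc0 : 0 < ‖c‖ := by rw [hc]; positivity
  have key : ∀ v : Rd, ‖v - c‖ ≤ r → ‖v - c‖ ^ 2 / (2 * ‖c‖) ≤ 1 / 10 := by
    intro v hv
    rw [hc, div_le_iff₀ (by positivity)]
    nlinarith [norm_nonneg (v - c)]
  have t1 := tangent m c v1 hc0
  have t2 := tangent m c v2 hc0
  have t3 := tangent m c v3 hc0
  have t4 := tangent m c v4 hc0
  have k1 := key v1 h1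
  have k2 := key v2 h2
  have k3 := key v3 h3
  have k4 := key v4 h4
  set Q := Real.sqrt (m ^ 2 + ‖c‖ ^ 2)
  have hlin : inner ℝ c (v1 - c) / Q + inner ℝ c (v2 - c) / Q =
      inner ℝ c (v3 - c) / Q + inner ℝ c (v4 - c) / Q := by
    rw [← add_div, ← add_div, ← inner_add_right, ← inner_add_right]
    congr 2
    rw [show v1 - c + (v2 - c) = (v1 + v2) - c - c by abel, hv]; abel
  unfold pp
  rw [abs_le]
  constructor <;> linarith [t1.1, t1.2, t2.1, t2.2, t3.1, t3.2, t4.1, t4.2]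

lemma sym_eq (m σ : ℝ) (ξ : Rd) : sym m σ ξ = cexp (((σ * pp m ξ : ℝ) : ℂ) * Complex.I) := by
  unfold sym pp
  congr 1; push_cast; ring

lemma conj_sym (m σ : ℝ) (ξ : Rd) : (starRingEnd ℂ) (sym m σ ξ) =
    cexp (((-(σ * pp m ξ) : ℝ) : ℂ) * Complex.I) := by
  rw [sym_eq, ← Complex.exp_conj]
  congr 1; simp

/-! ### Lower bounds for real parts of integrals -/

lemma re_lower {X : Type*} [MeasurableSpace X] (μ : Measure X) (F : X → ℂ) (θ : ℂ)
    (hF : Integrable F μ) (h0 : ∀ᵐ x ∂μ, 0 ≤ (θ * F x).re) (A : Set X) (hA : MeasurableSet A)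
    (hA' : μ A ≠ ⊤) (k : ℝ) (hk : ∀ x ∈ A, k ≤ (θ * F x).re) :
    k * μ.real A ≤ (θ * ∫ x, F x ∂μ).re := by
  rw [← integral_const_mul]
  have hi : Integrable (fun x => θ * F x) μ := hF.const_mul θ
  have e : (∫ x, θ * F x ∂μ).re = ∫ x, (θ * F x).re ∂μ := (integral_re hi).symm
  rw [e]
  calc k * μ.real A = ∫ x in A, k ∂μ := by simp [mul_comm]
    _ ≤ ∫ x in A, (θ * F x).re ∂μ :=
        setIntegral_mono_on (integrableOn_const hA') hi.re.integrableOn hA hk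
    _ ≤ _ := setIntegral_le_integral hi.re h0

lemma re_nonneg {X : Type*} [MeasurableSpace X] (μ : Measure X) (F : X → ℂ) (θ : ℂ)
    (hF : Integrable F μ) (h0 : ∀ᵐ x ∂μ, 0 ≤ (θ * F x).re) : 0 ≤ (θ * ∫ x, F x ∂μ).re := by
  simpa using re_lower μ F θ hF h0 ∅ MeasurableSet.empty (by simp) 0 (by simp)

lemma inner_integrable {g : Rd → ℂ} (hg : Continuous g) (hc : HasCompactSupport g) (ζ : Rd) :
    Integrable (fun α => (starRingEnd ℂ) (g α) * g (ζ + α)) := by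
  refine Continuous.integrable_of_hasCompactSupport ?_ ?_
  · exact (Complex.continuous_conj.comp hg).mul (hg.comp (by fun_prop))
  · refine HasCompactSupport.mul_right ?_
    exact hc.comp_left (g := starRingEnd ℂ) (map_zero _)

lemma slice_integrable {g : Rd → ℂ} (hg : Continuous g) (hc : HasCompactSupport g) (ξ : Rd) (l : ℝ)
    (hl : 0 < l) : Integrable (fun ζ : Rd => ((l ^ (-2 : ℝ) * gz l ζ : ℝ) : ℂ) *
      (g (ξ - ζ) * ∫ α, (starRingEnd ℂ) (g α) * g (ζ + α))) := by
  obtain ⟨M, hM⟩ := hg.bounded_above_of_compact_support hc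
  have hgi : Integrable g := hg.integrable_of_hasCompactSupport hc
  have hM0 : 0 ≤ M := (norm_nonneg _).trans (hM 0)
  have h1 := ((gz_integrable l hl).const_mul ((l ^ (-2 : ℝ) : ℝ) : ℂ)).mul_bdd (c := M * ∫ α, ‖g α‖ * M)
    (g := fun ζ => g (ξ - ζ) * ∫ α, (starRingEnd ℂ) (g α) * g (ζ + α)) ?_ ?_
  · refine h1.congr (Filter.Eventually.of_forall fun ζ => ?_)
    push_cast; ring
  · refine AEStronglyMeasurable.mul (hg.comp (by fun_prop)).aestronglyMeasurable ?_
    refine StronglyMeasurable.aestronglyMeasurable ?_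
    refine StronglyMeasurable.integral_prod_right
      (f := fun ζ α : Rd => (starRingEnd ℂ) (g α) * g (ζ + α)) ?_
    refine Continuous.stronglyMeasurable ?_
    exact (Complex.continuous_conj.comp (hg.comp continuous_snd)).mul
      (hg.comp (continuous_fst.add continuous_snd))
  · refine Filter.Eventually.of_forall fun ζ => ?_
    rw [norm_mul]
    gcongr
    · exact hM _
    · refine norm_integral_le_of_norm_le (hgi.norm.mul_const M) (Filter.Eventually.of_forall fun α => ?_)
      rw [norm_mul, RCLike.norm_conj]
      gcongr
      exact hM _

/-! ### Lower bound for the Duhamel term -/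

/-- Profile of the real frequency bump. -/
structure Prof (β : Rd → ℝ) (c : Rd) (r : ℝ) : Prop where
  cont : Continuous β
  comp : HasCompactSupport β
  nonneg : ∀ v, 0 ≤ β v
  supp : ∀ v, β v ≠ 0 → ‖v - c‖ ≤ r
  one : ∀ v, ‖v - c‖ ≤ r / 2 → β v = 1

def bb (a : ℝ) (β : Rd → ℝ) : Rd → ℂ := fun ξ => ((a * β ξ : ℝ) : ℂ)

lemma pt_lower (m r a τ : ℝ) (hr : 0 < r) (ha : 0 ≤ a) (hτ : τ ∈ Set.Icc (0 : ℝ) 1) (c : Rd)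
    (hc : ‖c‖ = 5 * r ^ 2) {β : Rd → ℝ} (P : Prof β c r) (ξ ζ α : Rd) (hξ : ‖ξ - c‖ ≤ r) :
    a ^ 3 / 2 * (β (ξ - ζ) * (β α * β (ζ + α))) ≤
    (sym m (-τ) ξ * (wv m (bb a β) τ (ξ - ζ) *
      ((starRingEnd ℂ) (wv m (bb a β) τ α) * wv m (bb a β) τ (ζ + α)))).re := by
  set p := pp m (ξ - ζ) + pp m (ζ + α) - pp m ξ - pp m α with hp
  have e : sym m (-τ) ξ * (wv m (bb a β) τ (ξ - ζ) *
      ((starRingEnd ℂ) (wv m (bb a β) τ α) * wv m (bb a β) τ (ζ + α))) =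
      ((a ^ 3 * (β (ξ - ζ) * (β α * β (ζ + α))) : ℝ) : ℂ) * cexp (((τ * p : ℝ) : ℂ) * Complex.I) := by
    have e2 : cexp (((τ * p : ℝ) : ℂ) * Complex.I) = sym m (-τ) ξ * (sym m τ (ξ - ζ) *
        ((starRingEnd ℂ) (sym m τ α) * sym m τ (ζ + α))) := by
      rw [conj_sym, sym_eq, sym_eq, sym_eq, ← Complex.exp_add, ← Complex.exp_add, ← Complex.exp_add]
      congr 1; rw [hp]; push_cast; ring
    rw [e2]
    simp only [wv, bb, map_mul, Complex.conj_ofReal]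
    push_cast; ring
  rw [e, Complex.re_ofReal_mul, Complex.exp_ofReal_mul_I_re]
  have hb0 : 0 ≤ β (ξ - ζ) * (β α * β (ζ + α)) :=
    mul_nonneg (P.nonneg _) (mul_nonneg (P.nonneg _) (P.nonneg _))
  by_cases h : β (ξ - ζ) * (β α * β (ζ + α)) = 0
  · rw [h]; simp
  · have h1 : β (ξ - ζ) ≠ 0 := fun h' => h (by rw [h']; ring)
    have h2 : β α ≠ 0 := fun h' => h (by rw [h']; ring)
    have h3 : β (ζ + α) ≠ 0 := fun h' => h (by rw [h']; ring)
    have hph : |p| ≤ 1 := phase_le m r hr c (ξ - ζ) (ζ + α) ξ α hc (by abel) (P.supp _ h1)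
      (P.supp _ h3) hξ (P.supp _ h2)
    have hx : |τ * p| ≤ 1 := by
      rw [abs_mul, abs_of_nonneg hτ.1]
      exact mul_le_one₀ hτ.2 (abs_nonneg _) hph
    have hcos : 1 / 2 ≤ Real.cos (τ * p) := by
      have := Real.one_sub_sq_div_two_le_cos (x := τ * p)
      have h4 : (τ * p) ^ 2 ≤ 1 := by rw [← sq_abs]; exact pow_le_one₀ (abs_nonneg _) hx
      linarith
    have h5 : 0 ≤ a ^ 3 * (β (ξ - ζ) * (β α * β (ζ + α))) := by positivity
    nlinarith

lemma vol_ball (x : Rd) (ρ : ℝ) (hρ : 0 ≤ ρ) :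
    (volume : Measure Rd).real (Metric.ball x ρ) = ρ ^ 3 * volume.real (Metric.ball (0 : Rd) 1) := by
  rw [measureReal_def, Measure.addHaar_ball (volume : Measure Rd) x hρ, ENNReal.toReal_mul,
    ENNReal.toReal_ofReal (by positivity), measureReal_def]
  simp

lemma inner_lower (m r a τ : ℝ) (hr : 0 < r) (ha : 0 ≤ a) (hτ : τ ∈ Set.Icc (0 : ℝ) 1) (c : Rd)
    (hc : ‖c‖ = 5 * r ^ 2) {β : Rd → ℝ} (P : Prof β c r) (hg : Continuous (wv m (bb a β) τ))
    (hk : HasCompactSupport (wv m (bb a β) τ)) (ξ ζ : Rd) (hξ : ‖ξ - c‖ ≤ r / 4) :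
    0 ≤ (sym m (-τ) ξ * (wv m (bb a β) τ (ξ - ζ) *
      ∫ α, (starRingEnd ℂ) (wv m (bb a β) τ α) * wv m (bb a β) τ (ζ + α))).re ∧
    (‖ζ‖ ≤ r / 4 → a ^ 3 / 2 * ((r / 4) ^ 3 * volume.real (Metric.ball (0 : Rd) 1)) ≤
      (sym m (-τ) ξ * (wv m (bb a β) τ (ξ - ζ) *
      ∫ α, (starRingEnd ℂ) (wv m (bb a β) τ α) * wv m (bb a β) τ (ζ + α))).re) := by
  have hi := inner_integrable hg hk ζ
  have key := fun α => pt_lower m r a τ hr ha hτ c hc P ξ ζ α (by linarith)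
  have h0 : ∀ α, 0 ≤ (sym m (-τ) ξ * wv m (bb a β) τ (ξ - ζ) *
      ((starRingEnd ℂ) (wv m (bb a β) τ α) * wv m (bb a β) τ (ζ + α))).re := by
    intro α
    rw [mul_assoc]
    refine le_trans ?_ (key α)
    have := P.nonneg (ξ - ζ)
    have := P.nonneg α
    have := P.nonneg (ζ + α)
    positivity
  rw [← mul_assoc]
  refine ⟨re_nonneg _ _ _ hi (Filter.Eventually.of_forall h0), fun hζ => ?_⟩
  rw [← vol_ball c (r / 4) (by positivity)]
  refine re_lower _ _ _ hi (Filter.Eventually.of_forall h0) (Metric.ball c (r / 4))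
    measurableSet_ball measure_ball_lt_top.ne _ fun α hα => ?_
  rw [mul_assoc]
  refine le_trans ?_ (key α)
  have hα' : ‖α - c‖ < r / 4 := by simpa [dist_eq_norm] using hα
  rw [P.one α (by linarith), P.one (ζ + α), P.one (ξ - ζ)]
  · simp
  · calc ‖ξ - ζ - c‖ = ‖(ξ - c) - ζ‖ := by congr 1; abel
      _ ≤ ‖ξ - c‖ + ‖ζ‖ := norm_sub_le _ _
      _ ≤ _ := by linarith
  · calc ‖ζ + α - c‖ = ‖ζ + (α - c)‖ := by congr 1; abel
      _ ≤ ‖ζ‖ + ‖α - c‖ := norm_add_le _ _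
      _ ≤ _ := by linarith

lemma slice_lower (m r a τ : ℝ) (hr : 0 < r) (ha : 0 ≤ a) (hτ : τ ∈ Set.Icc (0 : ℝ) 1) (c : Rd)
    (hc : ‖c‖ = 5 * r ^ 2) {β : Rd → ℝ} (P : Prof β c r) (hg : Continuous (wv m (bb a β) τ))
    (hk : HasCompactSupport (wv m (bb a β) τ)) (ξ : Rd) (hξ : ‖ξ - c‖ ≤ r / 4) (l : ℝ) (hl : 0 < l) :
    0 ≤ (sym m (-τ) ξ * slice (wv m (bb a β) τ) ξ l).re ∧
    (l ∈ Set.Icc (r ^ 2) (2 * r ^ 2) →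
      (1 / (4 * r ^ 4) * Real.exp (-π)) *
        (a ^ 3 / 2 * ((r / 4) ^ 3 * volume.real (Metric.ball (0 : Rd) 1))) *
        ((r / 4) ^ 3 * volume.real (Metric.ball (0 : Rd) 1)) ≤
      (sym m (-τ) ξ * slice (wv m (bb a β) τ) ξ l).re) := by
  have hi := slice_integrable hg hk ξ l hl
  have key := fun ζ => inner_lower m r a τ hr ha hτ c hc P hg hk ξ ζ hξ
  have hw : ∀ ζ, 0 ≤ l ^ (-2 : ℝ) * gz l ζ := fun ζ => by unfold gz; positivity
  have e : ∀ ζ, (sym m (-τ) ξ * (((l ^ (-2 : ℝ) * gz l ζ : ℝ) : ℂ) * (wv m (bb a β) τ (ξ - ζ) *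
      ∫ α, (starRingEnd ℂ) (wv m (bb a β) τ α) * wv m (bb a β) τ (ζ + α)))).re =
      (l ^ (-2 : ℝ) * gz l ζ) * (sym m (-τ) ξ * (wv m (bb a β) τ (ξ - ζ) *
      ∫ α, (starRingEnd ℂ) (wv m (bb a β) τ α) * wv m (bb a β) τ (ζ + α))).re := by
    intro ζ
    rw [mul_left_comm, Complex.re_ofReal_mul]
  have h0 := fun ζ => (mul_nonneg (hw ζ) (key ζ).1).trans_eq (e ζ).symm
  unfold slice
  refine ⟨re_nonneg _ _ _ hi (Filter.Eventually.of_forall h0), fun hl2 => ?_⟩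
  conv_lhs => rw [← vol_ball (0 : Rd) (r / 4) (by positivity)]
  refine re_lower _ _ _ hi (Filter.Eventually.of_forall h0) (Metric.ball 0 (r / 4))
    measurableSet_ball measure_ball_lt_top.ne _ fun ζ hζ => ?_
  have hζ' : ‖ζ‖ < r / 4 := by simpa using hζ
  rw [e, vol_ball (0 : Rd) (r / 4) (by positivity)]
  have h1 : 1 / (4 * r ^ 4) ≤ l ^ (-2 : ℝ) := by
    rw [Real.rpow_neg hl.le, ← one_div]
    have : l ^ (2 : ℝ) = l ^ 2 := by exact_mod_cast Real.rpow_natCast l 2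
    rw [this]
    gcongr
    calc l ^ 2 ≤ (2 * r ^ 2) ^ 2 := by gcongr; exact hl2.2
      _ = _ := by ring
  have h2 : Real.exp (-π) ≤ gz l ζ := by
    unfold gz
    refine Real.exp_le_exp.2 ?_
    have : ‖ζ‖ ^ 2 ≤ l := by
      have := hl2.1
      nlinarith [norm_nonneg ζ]
    rw [neg_mul, neg_le_neg_iff, div_mul_eq_mul_div, div_le_iff₀ hl]
    gcongr
  refine mul_le_mul ?_ ((key ζ).2 hζ'.le) (by positivity) (hw ζ)
  exact mul_le_mul h1 h2 (by positivity) (by positivity)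

lemma sym_mul_sym (m σ σ' : ℝ) (ξ : Rd) : sym m σ ξ * sym m σ' ξ = sym m (σ + σ') ξ := by
  rw [sym_eq, sym_eq, sym_eq, ← Complex.exp_add]
  congr 1; push_cast; ring

lemma slice_zero {g : Rd → ℂ} {c : Rd} {r : ℝ} (hs : ∀ v, g v ≠ 0 → ‖v - c‖ ≤ r) (ξ : Rd)
    (hξ : 3 * r < ‖ξ - c‖) (l : ℝ) : slice g ξ l = 0 := by
  unfold slice
  rw [show (0 : ℂ) = ∫ _ζ : Rd, (0 : ℂ) by simp]
  congr 1; ext ζ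
  by_cases h1 : g (ξ - ζ) = 0
  · simp [h1]
  have : ∫ α, (starRingEnd ℂ) (g α) * g (ζ + α) = 0 := by
    rw [show (0 : ℂ) = ∫ _ζ : Rd, (0 : ℂ) by simp]
    congr 1; ext α
    by_cases h2 : g α = 0
    · simp [h2]
    by_cases h3 : g (ζ + α) = 0
    · simp [h3]
    exfalso
    have a1 := hs _ h1
    have a2 := hs _ h2
    have a3 := hs _ h3
    have : ‖ξ - c‖ ≤ ‖ξ - ζ - c‖ + ‖ζ + α - c‖ + ‖α - c‖ := by
      calc ‖ξ - c‖ = ‖(ξ - ζ - c) + (ζ + α - c) - (α - c)‖ := by congr 1; abel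
        _ ≤ ‖(ξ - ζ - c) + (ζ + α - c)‖ + ‖α - c‖ := norm_sub_le _ _
        _ ≤ _ := by gcongr; exact norm_add_le _ _
    linarith
  rw [this]; simp

def c1 (t : ℝ) : ℝ := t * volume.real (Metric.ball (0 : Rd) 1) ^ 2 * Real.exp (-π) / 32768

lemma kappa_pos : 0 < volume.real (Metric.ball (0 : Rd) 1) :=
  ENNReal.toReal_pos (Metric.measure_ball_pos _ _ one_pos).ne' measure_ball_lt_top.ne

lemma c1_pos {t : ℝ} (ht : 0 < t) : 0 < c1 t := by
  have := kappa_pos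
  unfold c1; positivity

lemma duhamel_lower (m r a t : ℝ) (hr : 0 < r) (ha : 0 ≤ a) (ht : 0 < t) (ht1 : t ≤ 1) (c : Rd)
    (hc : ‖c‖ = 5 * r ^ 2) {β : Rd → ℝ} (P : Prof β c r) (B : Bump (bb a β)) {χ : Rd → ℂ}
    (X : Bump χ) (hχ : ∀ ξ, ‖ξ - c‖ ≤ 3 * r → χ ξ = 1) {φ : Rd → ℂ} (hφ : 𝓕 φ = bb a β)
    (ξ : Rd) (hξ : ‖ξ - c‖ ≤ r / 4) :
    a ^ 3 * (c1 t * r ^ 4) ≤ ‖𝓕 (duhamelFree m φ t) ξ‖ := by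
  obtain ⟨C, hC, hG⟩ := good_wave m B
  have hs : ∀ τ v, wv m (bb a β) τ v ≠ 0 → ‖v - c‖ ≤ r := by
    intro τ v hv
    refine P.supp v fun h => hv ?_
    simp [wv, bb, h]
  have hsup : ∀ τ ∈ Set.Icc (0 : ℝ) 1, ∀ ξ, χ ξ * 𝓕 (nonlin (𝓕⁻ (wv m (bb a β) τ))) ξ =
      𝓕 (nonlin (𝓕⁻ (wv m (bb a β) τ))) ξ := by
    intro τ hτ η
    by_cases h : ‖η - c‖ ≤ 3 * r
    · rw [hχ η h, one_mul]
    · rw [(nonlin_fourier (hG τ hτ) η).2]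
      simp [slice_zero (hs τ) η (not_le.1 h)]
  obtain ⟨hI, hE⟩ := duhamel_fourier m t ht ht1 B X hφ hsup ξ
  have hn : ‖sym m (-t) ξ * 𝓕 (duhamelFree m φ t) ξ‖ = ‖𝓕 (duhamelFree m φ t) ξ‖ := by
    rw [norm_mul, norm_sym, one_mul]
  rw [← hn]
  refine le_trans ?_ (Complex.re_le_norm _)
  rw [hE]
  have hκ := kappa_pos
  set κ := volume.real (Metric.ball (0 : Rd) 1) with hκd
  have key : ∀ τ ∈ Set.Icc (0 : ℝ) 1,
      (1 / (4 * r ^ 4) * Real.exp (-π)) * (a ^ 3 / 2 * ((r / 4) ^ 3 * κ)) * ((r / 4) ^ 3 * κ) * r ^ 2 ≤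
      (sym m (-t) ξ * (sym m (t - τ) ξ * 𝓕 (nonlin (𝓕⁻ (wv m (bb a β) τ))) ξ)).re := by
    intro τ hτ
    rw [← mul_assoc (sym m (-t) ξ), sym_mul_sym, show -t + (t - τ) = -τ by ring]
    obtain ⟨h1, h2⟩ := nonlin_fourier (hG τ hτ) ξ
    rw [h2]
    have sl := fun l hl => slice_lower m r a τ hr ha hτ c hc P (hG τ hτ).hg (hG τ hτ).hc ξ hξ l hl
    have hsub : Set.Icc (r ^ 2) (2 * r ^ 2) ⊆ Set.Ioi 0 := fun l hl =>
      lt_of_lt_of_le (by positivity) hl.1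
    have hv : (volume.restrict (Set.Ioi (0 : ℝ))).real (Set.Icc (r ^ 2) (2 * r ^ 2)) = r ^ 2 := by
      rw [measureReal_restrict_apply measurableSet_Icc, Set.inter_eq_left.2 hsub,
        Real.volume_real_Icc_of_le (by nlinarith [sq_nonneg r])]
      ring
    have := re_lower (volume.restrict (Set.Ioi (0 : ℝ))) (slice (wv m (bb a β) τ) ξ) (sym m (-τ) ξ) h1
      ((ae_restrict_iff' measurableSet_Ioi).2 (Filter.Eventually.of_forall fun l hl => (sl l hl).1))
      (Set.Icc (r ^ 2) (2 * r ^ 2)) measurableSet_Icc ?_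
      _ (fun l hl => (sl l (hsub hl)).2 hl)
    · rw [hv] at this
      exact this
    · rw [Measure.restrict_apply measurableSet_Icc, Set.inter_eq_left.2 hsub]
      exact measure_Icc_lt_top.ne
  have hsub : Set.Ioc 0 t ⊆ Set.Icc (0 : ℝ) 1 := fun τ hτ => ⟨hτ.1.le, hτ.2.trans ht1⟩
  have fin := re_lower (volume.restrict (Set.Ioc (0 : ℝ) t)) _ (sym m (-t) ξ) hI
    ((ae_restrict_iff' measurableSet_Ioc).2 (Filter.Eventually.of_forall fun τ hτ =>
      le_trans (by positivity) (key τ (hsub hτ))))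
      (Set.Ioc 0 t) measurableSet_Ioc ?_
      _ (fun τ hτ => key τ (hsub hτ))
  · refine le_trans (le_of_eq ?_) fin
    rw [measureReal_restrict_apply measurableSet_Ioc, Set.inter_self, Real.volume_real_Ioc_of_le ht.le]
    unfold c1
    rw [← hκd]
    field_simp
    ring
  · rw [Measure.restrict_apply measurableSet_Ioc, Set.inter_self]
    exact measure_Ioc_lt_top.ne

/-! ### Sobolev norms -/

lemma weight_bounds (s r : ℝ) (hr : 2 ≤ r) (c ξ : Rd) (hc : ‖c‖ = 5 * r ^ 2) (hξ : ‖ξ - c‖ ≤ r) :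
    ((64 : ℝ) ^ |s|)⁻¹ * (r ^ 4) ^ s ≤ (1 + ‖ξ‖ ^ 2) ^ s ∧
    (1 + ‖ξ‖ ^ 2) ^ s ≤ (64 : ℝ) ^ |s| * (r ^ 4) ^ s := by
  have h1 : ‖ξ‖ ≤ 6 * r ^ 2 := by
    have : ‖ξ‖ ≤ ‖ξ - c‖ + ‖c‖ := by simpa using norm_add_le (ξ - c) c
    nlinarith
  have h2 : r ^ 2 ≤ ‖ξ‖ := by
    have : ‖c‖ ≤ ‖ξ‖ + ‖ξ - c‖ := by
      rw [norm_sub_rev]; simpa using norm_add_le ξ (c - ξ)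
    nlinarith
  have hlo : r ^ 4 ≤ 1 + ‖ξ‖ ^ 2 := by
    have : (r ^ 2) ^ 2 ≤ ‖ξ‖ ^ 2 := by gcongr
    nlinarith
  have hhi : 1 + ‖ξ‖ ^ 2 ≤ 64 * r ^ 4 := by
    have : ‖ξ‖ ^ 2 ≤ (6 * r ^ 2) ^ 2 := by gcongr
    have h4 : 1 ≤ r ^ 4 := one_le_pow₀ (by linarith)
    nlinarith
  have hr4 : 0 < r ^ 4 := by positivity
  have hR : 0 < (r ^ 4) ^ s := Real.rpow_pos_of_pos hr4 s
  have hK : 1 ≤ (64 : ℝ) ^ |s| := Real.one_le_rpow (by norm_num) (abs_nonneg s)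
  rcases le_total 0 s with h | h
  · have a1 := Real.rpow_le_rpow hr4.le hlo h
    have a2 := Real.rpow_le_rpow (by positivity) hhi h
    rw [Real.mul_rpow (by norm_num) hr4.le] at a2
    rw [abs_of_nonneg h] at hK ⊢
    refine ⟨le_trans ?_ a1, a2⟩
    exact mul_le_of_le_one_left hR.le (inv_le_one_of_one_le₀ hK)
  · have a1 := Real.rpow_le_rpow_of_nonpos hr4 hlo h
    have a2 := Real.rpow_le_rpow_of_nonpos (by positivity) hhi h
    rw [Real.mul_rpow (by norm_num) hr4.le] at a2
    rw [abs_of_nonpos h] at hK ⊢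
    refine ⟨?_, a1.trans (le_mul_of_one_le_left hR.le hK)⟩
    rw [← Real.rpow_neg (by norm_num), neg_neg]
    exact a2

lemma ofReal_rpow_half (x : ℝ) : ENNReal.ofReal x ^ (1 / 2 : ℝ) = ENNReal.ofReal (Real.sqrt x) := by
  rcases le_total 0 x with h | h
  · rw [ENNReal.ofReal_rpow_of_nonneg h (by norm_num), Real.sqrt_eq_rpow]
  · rw [ENNReal.ofReal_of_nonpos h, Real.sqrt_eq_zero_of_nonpos h]; simp

lemma lintegral_const_ball (x : Rd) (ρ k : ℝ) (hρ : 0 ≤ ρ) (hk : 0 ≤ k) :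
    ∫⁻ _ξ in Metric.ball x ρ, ENNReal.ofReal k =
      ENNReal.ofReal (k * (ρ ^ 3 * volume.real (Metric.ball (0 : Rd) 1))) := by
  rw [setLIntegral_const, ← vol_ball x ρ hρ, ENNReal.ofReal_mul hk, measureReal_def,
    ENNReal.ofReal_toReal measure_ball_lt_top.ne]

lemma HsNorm_lower (s r : ℝ) (hr : 2 ≤ r) (c : Rd) (hc : ‖c‖ = 5 * r ^ 2) (f : Rd → ℂ) (ρ M : ℝ)
    (hρ : 0 ≤ ρ) (hρr : ρ ≤ r) (hM : 0 ≤ M) (hf : ∀ ξ, ‖ξ - c‖ ≤ ρ → M ≤ ‖𝓕 f ξ‖) :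
    ENNReal.ofReal (Real.sqrt (((64 : ℝ) ^ |s|)⁻¹ * (r ^ 4) ^ s * M ^ 2 *
      (ρ ^ 3 * volume.real (Metric.ball (0 : Rd) 1)))) ≤ HsNorm s f := by
  unfold HsNorm
  rw [← ofReal_rpow_half]
  refine ENNReal.rpow_le_rpow ?_ (by norm_num)
  have h0 : 0 < r := by linarith
  rw [← lintegral_const_ball c ρ _ hρ (by positivity)]
  refine le_trans (setLIntegral_mono' measurableSet_ball fun ξ hξ => ?_) (setLIntegral_le_lintegral _ _)
  have hξ' : ‖ξ - c‖ ≤ ρ := by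
    have : ‖ξ - c‖ < ρ := by simpa [dist_eq_norm] using hξ
    exact this.le
  refine ENNReal.ofReal_le_ofReal ?_
  have := (weight_bounds s r hr c ξ hc (hξ'.trans hρr)).1
  have := hf ξ hξ'
  gcongr

lemma HsNorm_upper (s r : ℝ) (hr : 2 ≤ r) (c : Rd) (hc : ‖c‖ = 5 * r ^ 2) (f : Rd → ℂ) (M : ℝ)
    (hM : 0 ≤ M) (hf : ∀ ξ, ‖𝓕 f ξ‖ ≤ M) (hf0 : ∀ ξ, ξ ∉ Metric.ball c r → 𝓕 f ξ = 0) :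
    HsNorm s f ≤ ENNReal.ofReal (Real.sqrt ((64 : ℝ) ^ |s| * (r ^ 4) ^ s * M ^ 2 *
      (r ^ 3 * volume.real (Metric.ball (0 : Rd) 1)))) := by
  unfold HsNorm
  rw [← ofReal_rpow_half]
  refine ENNReal.rpow_le_rpow ?_ (by norm_num)
  have h0 : 0 < r := by linarith
  rw [← lintegral_const_ball c r _ h0.le (by positivity), ← lintegral_indicator measurableSet_ball]
  refine lintegral_mono fun ξ => ?_
  by_cases h : ξ ∈ Metric.ball c r
  · rw [Set.indicator_of_mem h]
    refine ENNReal.ofReal_le_ofReal ?_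
    have hξ' : ‖ξ - c‖ < r := by simpa [dist_eq_norm] using h
    have := (weight_bounds s r hr c ξ hc hξ'.le).2
    have := hf ξ
    gcongr
  · simp [Set.indicator_of_notMem h, hf0 ξ h]

lemma bump_of {c : Rd} (β : ContDiffBump c) (a : ℝ) (h : β.rOut < ‖c‖) : Bump (bb a β) := by
  have hsub : Function.support (bb a β) ⊆ Function.support β := by
    intro x hx hx'
    exact hx (by simp [bb, hx'])
  refine ⟨?_, ?_, ?_⟩
  · exact Complex.ofRealCLM.contDiff.comp (contDiff_const.mul β.contDiff)
  · exact β.hasCompactSupport.mono hsub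
  · intro h0
    have : (0 : Rd) ∈ tsupport β := closure_mono hsub h0
    rw [β.tsupport_eq, Metric.mem_closedBall, dist_eq_norm, zero_sub, norm_neg] at this
    linarith

lemma exists_r (s C c κ : ℝ) (hs : s < 1 / 4) (hc : 0 < c) :
    ∃ r : ℝ, 2 ≤ r ∧ C ^ 2 * ((64 : ℝ) ^ |s|) ^ 4 * 64 * κ ^ 2 * ((r ^ 4) ^ s) ^ 2 < c ^ 2 * r ^ 2 := by
  set D := C ^ 2 * ((64 : ℝ) ^ |s|) ^ 4 * 64 * κ ^ 2
  have ht := tendsto_rpow_atTop (y := 2 - 8 * s) (by linarith)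
  obtain ⟨r, h1, h2⟩ := ((ht.eventually_gt_atTop (D / c ^ 2)).and
    (Filter.eventually_ge_atTop 2)).exists
  refine ⟨r, h2, ?_⟩
  have hr : 0 < r := by linarith
  have e : ((r ^ 4) ^ s) ^ 2 = r ^ (8 * s) := by
    rw [← Real.rpow_natCast r 4, ← Real.rpow_mul hr.le, ← Real.rpow_natCast, ← Real.rpow_mul hr.le]
    congr 1; push_cast; ring
  have e2 : r ^ 2 = r ^ (2 - 8 * s) * r ^ (8 * s) := by
    rw [← Real.rpow_add hr, ← Real.rpow_natCast]
    congr 1; push_cast; ring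
  rw [e, e2, ← mul_assoc]
  rw [div_lt_iff₀ (by positivity)] at h1
  refine mul_lt_mul_of_pos_right ?_ (Real.rpow_pos_of_pos hr _)
  linarith

/-- failure of the cubic Duhamel estimate in `H^s(ℝ³)` for `s < 1/4`:
for `m ≥ 0`, fixed `t ∈ (0,1]` and any constants `C, ε > 0` there is `φ` with
`0 < ‖φ‖_{H^s} ≤ ε` and `‖∫₀ᵗ U(t-τ)[(|x|⁻¹ ∗ |U(τ)φ|²)U(τ)φ] dτ‖_{H^s} > C ‖φ‖_{H^s}³`. -/
theorem duhamel_estimate_fails (m s t : ℝ) (hm : 0 ≤ m) (ht : 0 < t) (ht1 : t ≤ 1)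
    (hs : s < 1 / 4) :
    ∀ C : ℝ, 0 < C → ∀ ε : ℝ, 0 < ε →
      ∃ φ : Rd → ℂ,
        0 < HsNorm s φ ∧ HsNorm s φ ≤ ENNReal.ofReal ε ∧
        ENNReal.ofReal C * HsNorm s φ ^ 3 < HsNorm s (duhamelFree m φ t) := by
  intro C hC ε hε
  have hκ := kappa_pos
  obtain ⟨r, hr, hkey⟩ := exists_r s C (c1 t) (volume.real (Metric.ball (0 : Rd) 1)) hs (c1_pos ht)
  have hc1 := c1_pos ht
  set κ := volume.real (Metric.ball (0 : Rd) 1) with hκd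
  have hr0 : 0 < r := by linarith
  set c : Rd := EuclideanSpace.single 0 (5 * r ^ 2) with hcd
  have hc : ‖c‖ = 5 * r ^ 2 := by
    rw [hcd, PiLp.norm_single, Real.norm_of_nonneg (by positivity)]
  set R := (r ^ 4) ^ s with hR
  set K := (64 : ℝ) ^ |s| with hK
  have hR0 : 0 < R := Real.rpow_pos_of_pos (by positivity) s
  have hK0 : 0 < K := Real.rpow_pos_of_pos (by norm_num) _
  set A := Real.sqrt (K * R * (r ^ 3 * κ)) with hA
  have hA0 : 0 < A := Real.sqrt_pos.2 (by positivity)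
  have hA2 : A ^ 2 = K * R * (r ^ 3 * κ) := Real.sq_sqrt (by positivity)
  set a := ε / A with ha
  have ha0 : 0 < a := by positivity
  have haA : a * A = ε := by rw [ha]; field_simp
  let β : ContDiffBump c := ⟨r / 2, r, by positivity, by linarith⟩
  let γ : ContDiffBump c := ⟨3 * r, 4 * r, by positivity, by linarith⟩
  have B : Bump (bb a β) := bump_of β a (by rw [hc]; change r < _; nlinarith)
  have X : Bump (bb 1 γ) := bump_of γ 1 (by rw [hc]; change 4 * r < _; nlinarith)
  have hβ0 : ∀ v, v ∉ Metric.ball c r → β v = 0 := by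
    intro v hv
    refine β.zero_of_le_dist ?_
    simpa using hv
  have P : Prof β c r := by
    refine ⟨β.continuous, β.hasCompactSupport, fun v => β.nonneg, fun v hv => ?_, fun v hv => ?_⟩
    · by_contra h
      refine hv (hβ0 v ?_)
      rw [Metric.mem_ball, dist_eq_norm]; linarith
    · refine β.one_of_mem_closedBall ?_
      rw [Metric.mem_closedBall, dist_eq_norm]; exact hv
  have hχ : ∀ ξ, ‖ξ - c‖ ≤ 3 * r → bb 1 γ ξ = 1 := by
    intro ξ hξ
    have : γ ξ = 1 := by
      refine γ.one_of_mem_closedBall ?_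
      rw [Metric.mem_closedBall, dist_eq_norm]; exact hξ
    simp [bb, this]
  have hφ : 𝓕 (𝓕⁻ (bb a β)) = bb a β := by
    obtain ⟨C', -, hG⟩ := good_wave m B
    have := (hG 0 (by simp)).hinv
    have e : wv m (bb a β) 0 = bb a β := by
      ext ξ; simp [wv, sym_eq]
    rwa [e] at this
  have hup : HsNorm s (𝓕⁻ (bb a β)) ≤ ENNReal.ofReal ε := by
    refine (HsNorm_upper s r hr c hc _ a ha0.le ?_ ?_).trans (le_of_eq ?_)
    · intro ξ
      rw [hφ, bb, Complex.norm_real, Real.norm_of_nonneg (mul_nonneg ha0.le β.nonneg)]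
      exact mul_le_of_le_one_right ha0.le β.le_one
    · intro ξ hξ
      rw [hφ, bb, hβ0 ξ hξ]; simp
    · rw [← haA, ← Real.sqrt_sq (mul_pos ha0 hA0).le, mul_pow, hA2]
      congr 2; ring
  have hlow : 0 < HsNorm s (𝓕⁻ (bb a β)) := by
    refine lt_of_lt_of_le ?_ (HsNorm_lower s r hr c hc _ (r / 2) a (by positivity) (by linarith) ha0.le ?_)
    · rw [ENNReal.ofReal_pos]
      exact Real.sqrt_pos.2 (by positivity)
    · intro ξ hξ
      rw [hφ, bb, P.one ξ hξ, Complex.norm_real, Real.norm_of_nonneg (by positivity)]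
      simp
  refine ⟨𝓕⁻ (bb a β), hlow, hup, ?_⟩
  refine lt_of_lt_of_le ?_ (HsNorm_lower s r hr c hc _ (r / 4) (a ^ 3 * (c1 t * r ^ 4)) (by positivity)
    (by linarith) (by positivity) (fun ξ hξ =>
      duhamel_lower m r a t hr0 ha0.le ht ht1 c hc P B X hχ hφ ξ hξ))
  calc ENNReal.ofReal C * HsNorm s (𝓕⁻ (bb a β)) ^ 3 ≤ ENNReal.ofReal C * ENNReal.ofReal ε ^ 3 := by
        gcongr
    _ = ENNReal.ofReal (C * ε ^ 3) := by
        rw [ENNReal.ofReal_mul hC.le, ENNReal.ofReal_pow hε.le]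
    _ < _ := by
        have hlt : C * ε ^ 3 < Real.sqrt (K⁻¹ * R * (a ^ 3 * (c1 t * r ^ 4)) ^ 2 * ((r / 4) ^ 3 * κ)) := by
          refine Real.lt_sqrt_of_sq_lt ?_
          have e1 : (C * ε ^ 3) ^ 2 = (a ^ 6 * (K⁻¹ * R * κ * r ^ 9 / 64)) *
              (C ^ 2 * K ^ 4 * 64 * κ ^ 2 * R ^ 2) := by
            rw [← haA]
            calc (C * (a * A) ^ 3) ^ 2 = C ^ 2 * a ^ 6 * (A ^ 2) ^ 3 := by ring
              _ = _ := by rw [hA2]; field_simp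
          have e2 : K⁻¹ * R * (a ^ 3 * (c1 t * r ^ 4)) ^ 2 * ((r / 4) ^ 3 * κ) =
              (a ^ 6 * (K⁻¹ * R * κ * r ^ 9 / 64)) * (c1 t ^ 2 * r ^ 2) := by ring
          rw [e1, e2]
          exact mul_lt_mul_of_pos_left hkey (by positivity)
        exact (ENNReal.ofReal_lt_ofReal_iff (lt_of_le_of_lt (by positivity) hlt)).2 hlt
end
end

section
/- Let m ≥ 0, fix T > 0 and let s < 0. Then for every constant C > 0 and every ε > 0 there exist a radial φ ∈ H^s(ℝ^3) with 0 < ‖φ‖_{H^s} ≤ ε and some t ∈ [0,T] such that ‖∫_0^t U(t−τ)[(|x|^{-1} ∗ |U(τ)φ|^2) U(τ)φ] dτ‖_{H^s(ℝ^3)} > C ‖φ‖_{H^s(ℝ^3)}^3. In particular, the estimate sup_{t∈[0,T]} ‖∫_0^t U(t−τ)((|x|^{-1} ∗ |U(τ)φ|^2) U(τ)φ) dτ‖_{H^s} ≲ ‖φ‖_{H^s}^3 fails for radial data in any neighborhood of the origin. -/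
open MeasureTheory Real Complex
open scoped FourierTransform ENNReal

noncomputable section

/-- Radiality of a function on `ℝ³`. -/
def IsRadial (f : Rd → ℂ) : Prop := ∀ x y : Rd, ‖x‖ = ‖y‖ → f x = f y

/-- the `L^1` norm of the inverse Fourier transform -/
def NF (h : Rd → ℂ) : ℝ≥0∞ := ∫⁻ x : Rd, ‖𝓕⁻ h x‖ₑ

theorem continuous_char2 : Continuous fun p : Rd × Rd => (𝐞 (inner ℝ p.1 p.2) : Circle) :=
  Real.continuous_fourierChar.comp (continuous_fst.inner continuous_snd)

theorem continuous_char3 : Continuous fun p : Rd × Rd => ((𝐞 (inner ℝ p.1 p.2) : Circle) : ℂ) :=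
  continuous_subtype_val.comp continuous_char2

theorem fourierInv_int {α : Type*} [MeasurableSpace α] (μ : Measure α) [SFinite μ]
    (Φ : α → Rd → ℂ) (hi : Integrable (Function.uncurry Φ) (μ.prod volume)) (x : Rd) :
    𝓕⁻ (fun ξ => ∫ a, Φ a ξ ∂μ) x = ∫ a, 𝓕⁻ (Φ a) x ∂μ := by
  simp only [Real.fourierInv_eq]
  rw [integral_integral_swap]
  · congr 1
    ext ξ
    simp only [Circle.smul_def]
    rw [integral_smul]
  · refine hi.mono ?_ (Filter.Eventually.of_forall fun p => by simp [Function.uncurry])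
    apply AEStronglyMeasurable.smul
    · exact ((continuous_char3.comp ((continuous_id.prodMk continuous_const) : Continuous fun ξ : Rd => (ξ, x))).stronglyMeasurable.comp_measurable measurable_snd).aestronglyMeasurable
    · exact hi.1

theorem NF_int {α : Type*} [MeasurableSpace α] (μ : Measure α) [SFinite μ]
    (Φ : α → Rd → ℂ) (hm : StronglyMeasurable (Function.uncurry Φ))
    (hi : Integrable (Function.uncurry Φ) (μ.prod volume)) :
    NF (fun ξ => ∫ a, Φ a ξ ∂μ) ≤ ∫⁻ a, NF (Φ a) ∂μ := by
  unfold NF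
  simp only [fourierInv_int μ Φ hi]
  have : StronglyMeasurable (fun p : Rd × α => 𝓕⁻ (Φ p.2) p.1) := by
    have hq : Measurable (fun q : (Rd × α) × Rd => (q.1.2, q.2)) :=
      (measurable_snd.comp measurable_fst).prodMk measurable_snd
    have hq' : Measurable (fun q : (Rd × α) × Rd => (q.2, q.1.1)) :=
      measurable_snd.prodMk (measurable_fst.comp measurable_fst)
    have h1 : StronglyMeasurable (fun q : (Rd × α) × Rd => Φ q.1.2 q.2) := hm.comp_measurable hq
    have h0 : StronglyMeasurable (fun p : Rd × Rd => ((𝐞 (inner ℝ p.1 p.2) : Circle) : ℂ)) :=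
      continuous_char3.stronglyMeasurable
    have h2 := h0.comp_measurable hq'
    simp only [Function.comp_def] at h2
    have h3 := (h2.mul h1).integral_prod_right' (ν := (volume : Measure Rd))
    simp only [Real.fourierInv_eq, Circle.smul_def, smul_eq_mul]
    exact h3
  calc _ ≤ ∫⁻ x : Rd, ∫⁻ a, ‖𝓕⁻ (Φ a) x‖ₑ ∂μ := lintegral_mono fun x => enorm_integral_le_lintegral_enorm _
    _ = _ := lintegral_lintegral_swap (this.measurable.enorm).aemeasurable

theorem NF_smul (c : ℂ) (h : Rd → ℂ) : NF (fun ξ => c * h ξ) = ‖c‖ₑ * NF h := by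
  unfold NF
  rw [← lintegral_const_mul' _ _ (by simp)]
  congr 1; ext x
  rw [← enorm_mul]
  congr 1
  simp only [Real.fourierInv_eq, Circle.smul_def, smul_eq_mul]
  rw [← integral_const_mul]
  congr 1; ext v; ring

theorem NF_add (h g : Rd → ℂ) (hh : Integrable h) (hg : Integrable g) :
    NF (fun ξ => h ξ + g ξ) ≤ NF h + NF g := by
  unfold NF
  have hc : Continuous (𝓕⁻ h) := by
    rw [show 𝓕⁻ h = fun x => 𝓕 h (-x) from funext fun x => Real.fourierInv_eq_fourier_neg h x]
    exact (VectorFourier.fourierIntegral_continuous Real.continuous_fourierChar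
      (by exact continuous_inner) hh).comp continuous_neg
  rw [← lintegral_add_left hc.measurable.enorm]
  refine lintegral_mono fun x => ?_
  refine le_trans (le_of_eq ?_) (enorm_add_le _ _)
  congr 1
  simp only [Real.fourierInv_eq]
  rw [← integral_add]
  · simp
  · exact hh.mono ((continuous_char2.comp (continuous_id.prodMk continuous_const)).aestronglyMeasurable.smul hh.1) (by simp)
  · exact hg.mono ((continuous_char2.comp (continuous_id.prodMk continuous_const)).aestronglyMeasurable.smul hg.1) (by simp)

theorem NF_shift (y : Rd) (h : Rd → ℂ) : NF (fun ξ => (𝐞 (-inner ℝ y ξ) : ℂ) * h ξ) = NF h := by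
  unfold NF
  rw [← lintegral_sub_right_eq_self (fun x => ‖𝓕⁻ h x‖ₑ) y]
  congr 1; ext x; congr 1
  simp only [Real.fourierInv_eq, Circle.smul_def, smul_eq_mul]
  congr 1; ext v
  rw [← mul_assoc, inner_sub_right, sub_eq_add_neg, AddChar.map_add_eq_mul, real_inner_comm v y]
  simp

theorem NF_kernel (k h : Rd → ℂ) (hk : Integrable k) (hkc : Continuous k)
    (hh : Integrable h) (hhc : Continuous h) :
    NF (fun ξ => 𝓕 k ξ * h ξ) ≤ (∫⁻ y, ‖k y‖ₑ) * NF h := by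
  have h1 : (fun ξ => 𝓕 k ξ * h ξ) = fun ξ => ∫ y, k y * ((𝐞 (-inner ℝ y ξ) : ℂ) * h ξ) := by
    ext ξ
    rw [Real.fourier_eq, ← integral_mul_const]
    congr 1; ext y
    simp only [Circle.smul_def, smul_eq_mul]; ring
  have hcont : Continuous (Function.uncurry fun y ξ => k y * ((𝐞 (-inner ℝ y ξ) : ℂ) * h ξ)) := by
    simp only [Function.uncurry_def]
    have := Real.continuous_fourierChar
    fun_prop
  rw [h1]
  refine (NF_int volume _ hcont.stronglyMeasurable ?_).trans ?_
  · refine (hk.mul_prod hh).mono hcont.aestronglyMeasurable ?_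
    refine Filter.Eventually.of_forall fun p => ?_
    simp only [Function.uncurry, norm_mul, Circle.norm_coe, one_mul, le_refl]
  · simp only [NF_smul, NF_shift]
    rw [lintegral_mul_const _ hkc.measurable.enorm]

theorem fourierInv_cont {h : Rd → ℂ} (hh : Integrable h) : Continuous (𝓕⁻ h) := by
  rw [show 𝓕⁻ h = fun x => 𝓕 h (-x) from funext fun x => Real.fourierInv_eq_fourier_neg h x]
  exact (VectorFourier.fourierIntegral_continuous Real.continuous_fourierChar
      (by exact continuous_inner) hh).comp continuous_neg

theorem fourierInv_integrable {h : Rd → ℂ} (hh : Integrable h) (hN : NF h < ∞) :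
    Integrable (𝓕⁻ h) :=
  ⟨(fourierInv_cont hh).aestronglyMeasurable, hN⟩

theorem fourier_inv_NF {h : Rd → ℂ} (hh : Integrable h) (hc : Continuous h) (hN : NF h < ∞) :
    𝓕 (𝓕⁻ h) = h := by
  apply hc.fourier_fourierInv_eq hh
  have := (fourierInv_integrable hh hN).comp_neg
  refine this.congr (Filter.Eventually.of_forall fun x => ?_)
  simp [Real.fourierInv_eq_fourier_neg]

/-- admissible symbols: continuous and supported in a ball -/
structure Adm (R : ℝ) (h : Rd → ℂ) : Prop where
  cont : Continuous h
  supp : ∀ ξ, R < ‖ξ‖ → h ξ = 0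

theorem Adm.hcs {R : ℝ} {h : Rd → ℂ} (hh : Adm R h) : HasCompactSupport h :=
  HasCompactSupport.intro (isCompact_closedBall (0 : Rd) R) fun x hx => hh.supp x (by simpa using hx)

theorem Adm.int {R : ℝ} {h : Rd → ℂ} (hh : Adm R h) : Integrable h :=
  hh.cont.integrable_of_hasCompactSupport hh.hcs

theorem Adm.mul {R : ℝ} {h : Rd → ℂ} (hh : Adm R h) {g : Rd → ℂ} (hg : Continuous g) :
    Adm R (fun ξ => g ξ * h ξ) :=
  ⟨hg.mul hh.cont, fun ξ hξ => by simp [hh.supp ξ hξ]⟩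

/-- `λ` -/
def lam (m : ℝ) (ξ : Rd) : ℝ := m ^ 2 + ‖ξ‖ ^ 2

/-- bump, `1` on the ball of radius `N`, `0` outside the ball of radius `2N`. -/
def bmp (N : ℝ) (ξ : Rd) : ℝ := Real.smoothTransition (2 - ‖ξ‖ ^ 2 / N ^ 2)

theorem bmp_contDiff (N : ℝ) : ContDiff ℝ (⊤ : ℕ∞) (bmp N) := by
  unfold bmp
  refine Real.smoothTransition.contDiff.comp ?_
  exact contDiff_const.sub ((contDiff_norm_sq ℝ).div_const _)

theorem bmp_one {N : ℝ} (hN : 0 < N) {ξ : Rd} (h : ‖ξ‖ ≤ N) : bmp N ξ = 1 := by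
  apply Real.smoothTransition.one_of_one_le
  have : ‖ξ‖ ^ 2 / N ^ 2 ≤ 1 := by
    rw [div_le_one (by positivity)]; gcongr
  linarith

theorem bmp_zero {N : ℝ} (hN : 0 < N) {ξ : Rd} (h : 2 * N < ‖ξ‖) : bmp N ξ = 0 := by
  apply Real.smoothTransition.zero_of_nonpos
  have : 2 ≤ ‖ξ‖ ^ 2 / N ^ 2 := by
    rw [le_div_iff₀ (by positivity)]; nlinarith
  linarith

theorem bmp_nonneg (N : ℝ) (ξ : Rd) : 0 ≤ bmp N ξ := Real.smoothTransition.nonneg _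
theorem bmp_le_one (N : ℝ) (ξ : Rd) : bmp N ξ ≤ 1 := Real.smoothTransition.le_one _

theorem bmp_mul_schwartz {N : ℝ} (hN : 0 < N) (g : Rd → ℝ) (hg : ContDiff ℝ (⊤ : ℕ∞) g) :
    ∃ f : SchwartzMap Rd ℂ, ∀ ξ, f ξ = ((g ξ * bmp N ξ : ℝ) : ℂ) := by
  have h1 : ContDiff ℝ (⊤ : ℕ∞) (fun ξ : Rd => ((g ξ * bmp N ξ : ℝ) : ℂ)) :=
    Complex.ofRealCLM.contDiff.comp (hg.mul (bmp_contDiff N))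
  have h2 : HasCompactSupport (fun ξ : Rd => ((g ξ * bmp N ξ : ℝ) : ℂ)) :=
    HasCompactSupport.intro (isCompact_closedBall (0 : Rd) (2 * N))
      fun x hx => by simp [bmp_zero hN (ξ := x) (by simpa using hx)]
  exact ⟨h2.toSchwartzMap h1, fun ξ => rfl⟩

theorem NF_schwartz (f : SchwartzMap Rd ℂ) : NF f < ∞ := by
  have := (𝓕⁻ f).integrable (μ := volume)
  rw [SchwartzMap.fourierInv_coe] at this
  exact this.2

theorem NF_lam (m R : ℝ) (hR : 0 < R) : ∃ C : NNReal, ∀ h, Adm R h →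
    NF (fun ξ => (lam m ξ : ℂ) * h ξ) ≤ C * NF h := by
  obtain ⟨f, hf⟩ := bmp_mul_schwartz hR (lam m) (contDiff_const.add (contDiff_norm_sq ℝ))
  have hi := (𝓕⁻ f).integrable (μ := volume)
  refine ⟨(∫⁻ y, ‖(𝓕⁻ f) y‖ₑ).toNNReal, fun h hh => ?_⟩
  rw [ENNReal.coe_toNNReal hi.2.ne]
  have := NF_kernel (⇑(𝓕⁻ f : SchwartzMap Rd ℂ)) h hi (𝓕⁻ f).continuous hh.int hh.cont
  convert this using 2
  ext ξ
  rw [← SchwartzMap.fourier_coe, FourierTransform.fourier_fourierInv_eq, hf]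
  by_cases hx : R < ‖ξ‖
  · simp [hh.supp ξ hx]
  · simp [bmp_one hR (not_lt.1 hx)]

theorem lam_nonneg (m : ℝ) (ξ : Rd) : 0 ≤ lam m ξ := by unfold lam; positivity

theorem lam_cont (m : ℝ) : Continuous (lam m) := by unfold lam; fun_prop

theorem NF_gauss {r : ℝ} (hr : 0 ≤ r) (h : Rd → ℂ) (hh : Integrable h) (hhc : Continuous h) :
    NF (fun ξ => (rexp (-r * ‖ξ‖ ^ 2) : ℂ) * h ξ) ≤ NF h := by
  rcases hr.eq_or_lt with rfl | hr
  · simp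
  set b : ℝ := π ^ 2 / r with hb
  have hbp : 0 < b := by positivity
  set c : ℝ := (π / b) ^ ((Module.finrank ℝ Rd : ℝ) / 2) with hc
  have hcp : 0 < c := by positivity
  set k : Rd → ℂ := fun y => ((c⁻¹ * rexp (-b * ‖y‖ ^ 2) : ℝ) : ℂ) with hk
  have hint : ∫ y : Rd, rexp (-b * ‖y‖ ^ 2) = c := GaussianFourier.integral_rexp_neg_mul_sq_norm hbp
  have hI : Integrable (fun y : Rd => rexp (-b * ‖y‖ ^ 2)) := by
    by_contra hcon
    rw [integral_undef hcon] at hint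
    exact hcp.ne hint
  have hkI : Integrable k := (hI.const_mul _).ofReal
  have hF : ∀ ξ, 𝓕 k ξ = (rexp (-r * ‖ξ‖ ^ 2) : ℂ) := by
    intro ξ
    have h1 := fourier_gaussian_innerProductSpace (b := (b : ℂ)) (by simpa using hbp) ξ
    have h2 : 𝓕 k ξ = (c : ℂ)⁻¹ * 𝓕 (fun v : Rd => cexp (-(b : ℂ) * ‖v‖ ^ 2)) ξ := by
      rw [Real.fourier_eq, Real.fourier_eq, ← integral_const_mul]
      congr 1; ext v
      simp only [hk, Circle.smul_def, smul_eq_mul]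
      push_cast
      ring
    rw [h2, h1]
    have h3 : ((π : ℂ) / (b : ℂ)) ^ ((Module.finrank ℝ Rd : ℂ) / 2) = (c : ℂ) := by
      rw [hc, Complex.ofReal_cpow (by positivity)]
      push_cast
      rfl
    rw [h3, ← mul_assoc, inv_mul_cancel₀ (by exact_mod_cast hcp.ne'), one_mul, hb]
    push_cast
    congr 1
    have : (π : ℂ) ≠ 0 := by exact_mod_cast pi_ne_zero
    have : (r : ℂ) ≠ 0 := by exact_mod_cast hr.ne'
    field_simp
  have hN : ∫⁻ y, ‖k y‖ₑ = 1 := by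
    rw [← ofReal_integral_norm_eq_lintegral_enorm hkI]
    have : (fun y => ‖k y‖) = fun y : Rd => c⁻¹ * rexp (-b * ‖y‖ ^ 2) := by
      ext y
      simp only [hk]
      rw [Complex.norm_real, Real.norm_of_nonneg (by positivity)]
    rw [this, integral_const_mul, hint, inv_mul_cancel₀ hcp.ne']
    simp
  have := NF_kernel k h hkI (by simp only [hk]; fun_prop) hh hhc
  simp only [hF, hN, one_mul] at this
  exact this

theorem NF_expl (m : ℝ) {r : ℝ} (hr : 0 ≤ r) {R : ℝ} {h : Rd → ℂ} (hh : Adm R h) :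
    NF (fun ξ => (rexp (-r * lam m ξ) : ℂ) * h ξ) ≤ NF h := by
  have h1 : (fun ξ => (rexp (-r * lam m ξ) : ℂ) * h ξ) =
      fun ξ => (rexp (-r * m ^ 2) : ℂ) * ((rexp (-r * ‖ξ‖ ^ 2) : ℂ) * h ξ) := by
    ext ξ
    rw [← mul_assoc, ← Complex.ofReal_mul, ← Real.exp_add]
    simp only [lam]
    congr 3; ring
  rw [h1, NF_smul]
  calc _ ≤ 1 * NF h := by
        gcongr
        · rw [← ofReal_norm, Complex.norm_real, Real.norm_of_nonneg (by positivity)]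
          rw [ENNReal.ofReal_le_one, Real.exp_le_one_iff]
          have := mul_nonneg hr (sq_nonneg m)
          linarith
        · exact NF_gauss hr h hh.int hh.cont
    _ = _ := one_mul _

theorem NF_one_sub (m : ℝ) {r : ℝ} (hr : 0 ≤ r) {R : ℝ} {h : Rd → ℂ} (hh : Adm R h) :
    NF (fun ξ => ((1 - rexp (-r * lam m ξ) : ℝ) : ℂ) * h ξ) ≤ 2 * NF h := by
  have hc : Continuous fun ξ => (rexp (-r * lam m ξ) : ℂ) := by
    have := lam_cont m; fun_prop
  have h1 : (fun ξ => ((1 - rexp (-r * lam m ξ) : ℝ) : ℂ) * h ξ) =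
      fun ξ => h ξ + (-1) * ((rexp (-r * lam m ξ) : ℂ) * h ξ) := by
    ext ξ; push_cast; ring
  rw [h1]
  refine (NF_add _ _ hh.int ((hh.mul hc).int.const_mul _)).trans ?_
  rw [NF_smul, two_mul]
  simp only [enorm_neg, enorm_one, one_mul]
  gcongr
  exact NF_expl m hr hh

theorem NF_one_sub' (m : ℝ) {r : ℝ} (hr : 0 ≤ r) {R : ℝ} {C : NNReal}
    (hC : ∀ h, Adm R h → NF (fun ξ => (lam m ξ : ℂ) * h ξ) ≤ C * NF h)
    {h : Rd → ℂ} (hh : Adm R h) :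
    NF (fun ξ => ((1 - rexp (-r * lam m ξ) : ℝ) : ℂ) * h ξ) ≤ ENNReal.ofReal r * C * NF h := by
  set Φ : ℝ → Rd → ℂ := fun a ξ => (rexp (-|a| * lam m ξ) : ℂ) * ((lam m ξ : ℂ) * h ξ) with hΦ
  have hlc := lam_cont m
  have hlh : Adm R (fun ξ => (lam m ξ : ℂ) * h ξ) := hh.mul (by fun_prop)
  have hcont : Continuous (Function.uncurry Φ) := by
    simp only [hΦ, Function.uncurry_def]
    have := hh.cont
    fun_prop
  have h1 : (fun ξ => ((1 - rexp (-r * lam m ξ) : ℝ) : ℂ) * h ξ) =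
      fun ξ => ∫ a in Set.Ioc 0 r, Φ a ξ := by
    ext ξ
    simp only [hΦ]
    have h2 : ∫ a in Set.Ioc 0 r, rexp (-|a| * lam m ξ) * lam m ξ = 1 - rexp (-r * lam m ξ) := by
      have : ∫ a in Set.Ioc 0 r, rexp (-|a| * lam m ξ) * lam m ξ =
          ∫ a in Set.Ioc 0 r, rexp (-a * lam m ξ) * lam m ξ :=
        setIntegral_congr_fun measurableSet_Ioc fun a ha => by
          simp only [abs_of_pos ha.1]
      rw [this, ← intervalIntegral.integral_of_le hr]
      have hd : ∀ a ∈ Set.uIcc 0 r, HasDerivAt (fun a => -rexp (-a * lam m ξ))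
          (rexp (-a * lam m ξ) * lam m ξ) a := by
        intro a _
        have := (((hasDerivAt_id a).neg.mul_const (lam m ξ)).exp).neg
        have e : rexp (-a * lam m ξ) * lam m ξ = -(rexp (-a * lam m ξ) * (-1 * lam m ξ)) := by ring
        rw [e]
        exact this
      rw [intervalIntegral.integral_eq_sub_of_hasDerivAt hd]
      · simp; ring
      · apply Continuous.intervalIntegrable; fun_prop
    rw [← h2, ← integral_complex_ofReal, ← integral_mul_const]
    congr 1; ext a
    push_cast; ring
  rw [h1]
  refine (NF_int _ Φ hcont.stronglyMeasurable ?_).trans ?_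
  · have hc1 : Integrable (fun _ : ℝ => (1 : ℂ)) (volume.restrict (Set.Ioc 0 r)) :=
      integrable_const _
    refine (hc1.mul_prod hlh.int).mono hcont.aestronglyMeasurable ?_
    refine Filter.Eventually.of_forall fun p => ?_
    simp only [Function.uncurry, hΦ, norm_mul, Complex.norm_real, norm_one]
    gcongr
    rw [Real.norm_of_nonneg (by positivity), Real.exp_le_one_iff]
    have := mul_nonneg (abs_nonneg p.1) (lam_nonneg m p.2)
    linarith
  · calc _ ≤ ∫⁻ a in Set.Ioc 0 r, C * NF h :=
        lintegral_mono fun a => (NF_expl m (abs_nonneg a) hlh).trans (hC h hh)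
      _ = _ := by
        simp only [lintegral_const, Measure.restrict_apply MeasurableSet.univ, Set.univ_inter, Real.volume_Ioc]
        rw [sub_zero]; ring

/-- weight -/
def wt (r : ℝ) : ℝ := |r| ^ (-3 / 2 : ℝ)
def wb (r : ℝ) : ℝ := wt r * min 1 |r|

theorem wt_nonneg (r : ℝ) : 0 ≤ wt r := by unfold wt; positivity
theorem wb_nonneg (r : ℝ) : 0 ≤ wb r := mul_nonneg (wt_nonneg r) (le_min zero_le_one (abs_nonneg r))

theorem wt_meas : Measurable wt := by unfold wt; fun_prop

theorem wb_int : IntegrableOn wb (Set.Ioi 0) := by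
  rw [← Set.Ioc_union_Ioi_eq_Ioi (zero_le_one (α := ℝ))]
  apply IntegrableOn.union
  · have h1 : IntegrableOn (fun x : ℝ => x ^ (-1 / 2 : ℝ)) (Set.Ioc 0 1) := by
      have := intervalIntegral.intervalIntegrable_rpow' (a := 0) (b := 1) (r := -1 / 2) (by norm_num)
      rwa [intervalIntegrable_iff_integrableOn_Ioc_of_le zero_le_one] at this
    refine h1.congr_fun (fun x hx => ?_) measurableSet_Ioc
    simp only [wb, wt, abs_of_pos hx.1, min_eq_right hx.2]
    nth_rewrite 3 [← Real.rpow_one x]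
    rw [← Real.rpow_add hx.1]; norm_num
  · have h1 := integrableOn_Ioi_rpow_of_lt (a := -3 / 2) (c := 1) (by norm_num) (by norm_num)
    refine h1.congr_fun (fun x hx => ?_) measurableSet_Ioi
    have hx : 1 < x := hx
    simp only [wb, wt, abs_of_pos (zero_lt_one.trans hx), min_eq_left hx.le, mul_one]

theorem one_sub_bound {r l L : ℝ} (hl : 0 ≤ l) (hL : l ≤ L) :
    |1 - rexp (-|r| * l)| ≤ (1 + L) * min 1 |r| := by
  have h0 : 0 ≤ |r| * l := by positivity
  have h1 : rexp (-|r| * l) ≤ 1 := by rw [Real.exp_le_one_iff]; linarith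
  have h2 := Real.add_one_le_exp (-|r| * l)
  have h3 := Real.exp_pos (-|r| * l)
  rw [abs_of_nonneg (by linarith)]
  rcases min_choice 1 |r| with h | h <;> rw [h]
  · nlinarith
  · nlinarith [abs_nonneg r, mul_le_mul_of_nonneg_left hL (abs_nonneg r)]

/-- the constant in the subordination formula -/
def cS : ℝ := ∫ r in Set.Ioi (0 : ℝ), wt r * (1 - rexp (-|r| * 1))

theorem cS_ne : cS ≠ 0 := by
  have hm : Measurable fun r => wt r * (1 - rexp (-|r| * 1)) := by
    have := wt_meas; fun_prop
  have hi : IntegrableOn (fun r => wt r * (1 - rexp (-|r| * 1))) (Set.Ioi 0) := by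
    refine (wb_int.const_mul 2).mono' hm.aestronglyMeasurable (Filter.Eventually.of_forall fun r => ?_)
    rw [norm_mul, Real.norm_of_nonneg (wt_nonneg r), Real.norm_eq_abs]
    have := mul_le_mul_of_nonneg_left (one_sub_bound (r := r) zero_le_one (le_refl 1)) (wt_nonneg r)
    unfold wb; linarith
  have hpos : 0 < cS := by
    unfold cS
    rw [integral_pos_iff_support_of_nonneg_ae _ hi]
    · rw [Measure.restrict_apply₀' measurableSet_Ioi.nullMeasurableSet]
      have : Set.Ioi (0 : ℝ) ⊆ Function.support (fun r => wt r * (1 - rexp (-|r| * 1))) ∩ Set.Ioi 0 := by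
        intro r hr
        refine ⟨?_, hr⟩
        have hr : 0 < r := hr
        rw [Function.mem_support]
        apply mul_ne_zero
        · unfold wt; rw [abs_of_pos hr]; positivity
        · rw [abs_of_pos hr]
          have : rexp (-r * 1) < 1 := by rw [Real.exp_lt_one_iff]; linarith
          linarith
      refine lt_of_lt_of_le ?_ (measure_mono this)
      simp
    · refine Filter.Eventually.of_forall fun r => mul_nonneg (wt_nonneg r) ?_
      have : rexp (-|r| * 1) ≤ 1 := by rw [Real.exp_le_one_iff]; simp
      linarith
  exact hpos.ne'

theorem subord {l : ℝ} (hl : 0 ≤ l) :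
    ∫ r in Set.Ioi (0 : ℝ), wt r * (1 - rexp (-|r| * l)) = √l * cS := by
  rcases hl.eq_or_lt with rfl | hl
  · simp
  have h := integral_comp_mul_left_Ioi (fun r => wt r * (1 - rexp (-|r| * 1))) 0 hl
  rw [mul_zero] at h
  have h2 : ∀ r ∈ Set.Ioi (0 : ℝ), wt r * (1 - rexp (-|r| * l)) =
      l ^ (3 / 2 : ℝ) * (wt (l * r) * (1 - rexp (-|l * r| * 1))) := by
    intro r hr
    have hr : 0 < r := hr
    unfold wt
    rw [abs_mul, abs_of_pos hl, abs_of_pos hr, Real.mul_rpow hl.le hr.le]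
    have : l ^ (3 / 2 : ℝ) * l ^ (-3 / 2 : ℝ) = 1 := by
      rw [← Real.rpow_add hl]; norm_num
    have e : -(l * r) * 1 = -r * l := by ring
    rw [e]
    linear_combination (-(r ^ (-3 / 2 : ℝ) * (1 - rexp (-r * l)))) * this
  rw [setIntegral_congr_fun measurableSet_Ioi h2, integral_const_mul, h, smul_eq_mul, ← mul_assoc]
  congr 1
  rw [← Real.rpow_neg_one, ← Real.rpow_add hl, Real.sqrt_eq_rpow]; norm_num

theorem NF_sqrt (m R : ℝ) (hR : 0 < R) : ∃ B : NNReal, ∀ h, Adm R h →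
    NF (fun ξ => ((√(lam m ξ) : ℝ) : ℂ) * h ξ) ≤ B * NF h := by
  obtain ⟨C, hC⟩ := NF_lam m R hR
  have hlc := lam_cont m
  set J : ℝ≥0∞ := ∫⁻ r in Set.Ioi (0 : ℝ), ENNReal.ofReal (wb r) with hJ
  have hJfin : J < ∞ := by
    rw [hJ, ← ofReal_integral_eq_lintegral_ofReal wb_int (Filter.Eventually.of_forall wb_nonneg)]
    exact ENNReal.ofReal_lt_top
  refine ⟨(‖(cS : ℂ)⁻¹‖ₑ * (J * (2 + C))).toNNReal, fun h hh => ?_⟩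
  rw [ENNReal.coe_toNNReal (by finiteness)]
  set Φ : ℝ → Rd → ℂ := fun r ξ => (wt r : ℂ) * (((1 - rexp (-|r| * lam m ξ) : ℝ) : ℂ) * h ξ) with hΦ
  have hmeas : Measurable (Function.uncurry Φ) := by
    simp only [hΦ, Function.uncurry_def]
    have := hh.cont.measurable
    have := wt_meas
    have := hlc.measurable
    fun_prop
  have h1 : (fun ξ => ((√(lam m ξ) : ℝ) : ℂ) * h ξ) =
      fun ξ => (cS : ℂ)⁻¹ * ∫ r in Set.Ioi (0 : ℝ), Φ r ξ := by
    ext ξ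
    have : ∫ r in Set.Ioi (0 : ℝ), Φ r ξ = ((√(lam m ξ) * cS : ℝ) : ℂ) * h ξ := by
      rw [← subord (lam_nonneg m ξ), ← integral_complex_ofReal, ← integral_mul_const]
      congr 1; ext r
      simp only [hΦ]; push_cast; ring
    rw [this]
    have : (cS : ℂ) ≠ 0 := by exact_mod_cast cS_ne
    push_cast
    field_simp
  rw [h1, NF_smul, mul_assoc]
  gcongr
  refine (NF_int _ Φ hmeas.stronglyMeasurable ?_).trans ?_
  · refine ((wb_int.const_mul (1 + (m ^ 2 + R ^ 2))).mul_prod hh.int.norm).mono hmeas.aestronglyMeasurable ?_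
    refine Filter.Eventually.of_forall fun p => ?_
    simp only [Function.uncurry, hΦ, norm_mul, Complex.norm_real, norm_norm]
    by_cases hp : R < ‖p.2‖
    · simp [hh.supp _ hp]
    rw [Real.norm_of_nonneg (wt_nonneg _), Real.norm_of_nonneg (wb_nonneg _), ← mul_assoc]
    refine mul_le_mul_of_nonneg_right ?_ (norm_nonneg _)
    have hl : lam m p.2 ≤ m ^ 2 + R ^ 2 := by
      unfold lam
      have := not_lt.1 hp
      gcongr
    have h3 := mul_le_mul_of_nonneg_left (one_sub_bound (r := p.1) (lam_nonneg m p.2) hl) (wt_nonneg p.1)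
    rw [Real.norm_eq_abs, Real.norm_of_nonneg (by positivity)]
    unfold wb
    linarith
  · calc _ ≤ ∫⁻ r in Set.Ioi (0 : ℝ), ENNReal.ofReal (wb r) * ((2 + C) * NF h) := by
          refine lintegral_mono fun r => ?_
          simp only [hΦ, NF_smul]
          have ha := NF_one_sub m (abs_nonneg r) hh
          have hb := NF_one_sub' m (abs_nonneg r) hC hh
          rw [← ofReal_norm, Complex.norm_real, Real.norm_of_nonneg (wt_nonneg _), wb,
            ENNReal.ofReal_mul (wt_nonneg r), mul_assoc]
          gcongr
          rcases min_choice 1 |r| with h | h <;> rw [h]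
          · simp only [ENNReal.ofReal_one, one_mul]
            refine ha.trans ?_
            gcongr
            exact le_self_add
          · refine hb.trans ?_
            rw [mul_assoc]
            gcongr
            exact le_add_self
      _ = _ := by
          rw [lintegral_mul_const _ (by
            have := wt_meas
            unfold wb
            fun_prop), hJ]
          ring

/-- the phase -/
def ph (m : ℝ) (ξ : Rd) : ℝ := m - √(m ^ 2 + ‖ξ‖ ^ 2)

theorem ph_cont (m : ℝ) : Continuous (ph m) := by unfold ph; fun_prop

theorem ph_abs {m : ℝ} (hm : 0 ≤ m) (ξ : Rd) : |ph m ξ| ≤ ‖ξ‖ := by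
  unfold ph
  have h1 : m ≤ √(m ^ 2 + ‖ξ‖ ^ 2) := Real.le_sqrt_of_sq_le (by nlinarith [norm_nonneg ξ])
  have h2 : √(m ^ 2 + ‖ξ‖ ^ 2) ≤ m + ‖ξ‖ := by
    rw [Real.sqrt_le_left (by positivity)]; nlinarith [norm_nonneg ξ, mul_nonneg hm (norm_nonneg ξ)]
  rw [abs_of_nonpos (by linarith)]; linarith

theorem NF_ph (m R : ℝ) (hR : 0 < R) : ∃ B : NNReal, ∀ h, Adm R h →
    NF (fun ξ => (ph m ξ : ℂ) * h ξ) ≤ B * NF h := by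
  obtain ⟨B, hB⟩ := NF_sqrt m R hR
  refine ⟨‖(m : ℂ)‖₊ + B, fun h hh => ?_⟩
  have h1 : (fun ξ => (ph m ξ : ℂ) * h ξ) =
      fun ξ => (m : ℂ) * h ξ + (-1) * (((√(lam m ξ) : ℝ) : ℂ) * h ξ) := by
    ext ξ; simp only [ph, lam]; push_cast; ring
  have hc : Continuous fun ξ => ((√(lam m ξ) : ℝ) : ℂ) := by
    have := lam_cont m; fun_prop
  rw [h1]
  refine (NF_add _ _ (hh.int.const_mul _) ((hh.mul hc).int.const_mul _)).trans ?_
  rw [NF_smul, NF_smul]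
  simp only [enorm_neg, enorm_one, one_mul, ENNReal.coe_add, add_mul]
  gcongr
  · rfl
  · exact hB h hh

/-- propagator symbol, as in `uProp` -/
def prp (m t : ℝ) (ξ : Rd) : ℂ := Complex.exp (Complex.I * t * ((m - Real.sqrt (m ^ 2 + ‖ξ‖ ^ 2) : ℝ) : ℂ))

theorem prp_eq (m t : ℝ) (ξ : Rd) : prp m t ξ = cexp (((t * ph m ξ : ℝ) : ℂ) * Complex.I) := by
  unfold prp ph; congr 1; push_cast; ring

theorem prp_norm (m t : ℝ) (ξ : Rd) : ‖prp m t ξ‖ = 1 := by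
  rw [prp_eq, Complex.norm_exp_ofReal_mul_I]

theorem prp_cont (m : ℝ) : Continuous fun p : ℝ × Rd => prp m p.1 p.2 := by
  simp only [prp_eq]
  have := ph_cont m
  fun_prop

theorem prp_cont' (m t : ℝ) : Continuous (prp m t) :=
  (prp_cont m).comp (continuous_const.prodMk continuous_id)

theorem NF_prp (m R : ℝ) (hm : 0 ≤ m) (hR : 0 < R) : ∃ B : NNReal, ∀ h, Adm R h → ∀ t : ℝ,
    NF (fun ξ => prp m t ξ * h ξ) ≤ ENNReal.ofReal (rexp (|t| * B)) * NF h := by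
  obtain ⟨B, hB⟩ := NF_ph m R hR
  refine ⟨B, fun h hh t => ?_⟩
  have hpc := ph_cont m
  have hpow : ∀ k : ℕ, Adm R (fun ξ => (ph m ξ : ℂ) ^ k * h ξ) := fun k => hh.mul (by fun_prop)
  have hk : ∀ k : ℕ, NF (fun ξ => (ph m ξ : ℂ) ^ k * h ξ) ≤ (B : ℝ≥0∞) ^ k * NF h := by
    intro k
    induction k with
    | zero => simp
    | succ k ih =>
      have := hB _ (hpow k)
      simp only [← mul_assoc, ← pow_succ'] at this
      refine this.trans ?_
      rw [pow_succ', mul_assoc]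
      gcongr
  set cf : ℕ → ℂ := fun k => (Complex.I * t) ^ k / (k.factorial : ℂ) with hcf
  have hcfn : ∀ k, ‖cf k‖ = |t| ^ k / k.factorial := by
    intro k; simp [hcf]
  set Φ : ℕ → Rd → ℂ := fun k ξ => cf k * ((ph m ξ : ℂ) ^ k * h ξ) with hΦ
  have hΦm : ∀ k, Measurable (Φ k) := fun k => (continuous_const.mul (hpow k).cont).measurable
  have hmeas : Measurable (Function.uncurry Φ) := measurable_from_prod_countable_right hΦm
  have hbd : ∀ k ξ, ‖Φ k ξ‖ ≤ ‖((|t| * R) ^ k / k.factorial : ℝ) * ‖h ξ‖‖ := by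
    intro k ξ
    simp only [hΦ]
    by_cases hp : R < ‖ξ‖
    · simp [hh.supp _ hp]
    rw [norm_mul, norm_mul, norm_mul, norm_pow, hcfn, norm_norm, mul_pow, ← mul_assoc,
      Real.norm_of_nonneg (by positivity), mul_div_right_comm, Complex.norm_real]
    gcongr
    exact (ph_abs hm ξ).trans (not_lt.1 hp)
  have hsum : Summable fun k : ℕ => ((|t| * R) ^ k / k.factorial : ℝ) := Real.summable_pow_div_factorial _
  have hint : Integrable (Function.uncurry Φ) (Measure.count.prod volume) := by
    have h1 : Integrable (fun k : ℕ => ((|t| * R) ^ k / k.factorial : ℝ)) Measure.count := by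
      rw [integrable_count_iff]
      exact hsum.norm
    refine (h1.mul_prod hh.int.norm).mono hmeas.aestronglyMeasurable ?_
    exact Filter.Eventually.of_forall fun p => hbd p.1 p.2
  have h1 : (fun ξ => prp m t ξ * h ξ) = fun ξ => ∫ k, Φ k ξ ∂Measure.count := by
    ext ξ
    have hs : Summable fun k => ‖Φ k ξ‖ := by
      refine Summable.of_nonneg_of_le (fun _ => norm_nonneg _) (fun k => hbd k ξ) ?_
      exact (hsum.mul_right ‖h ξ‖).norm
    rw [integral_countable (integrable_count_iff.2 hs)]
    simp only [Measure.real, Measure.count_singleton, ENNReal.toReal_one, one_smul]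
    have he : prp m t ξ = ∑' k : ℕ, (Complex.I * t * ph m ξ) ^ k / (k.factorial : ℂ) := by
      unfold prp
      rw [Complex.exp_eq_exp_ℂ, NormedSpace.exp_eq_tsum_div]
      rfl
    rw [he, ← tsum_mul_right]
    congr 1; ext k
    simp only [hΦ, hcf, mul_pow]; ring
  rw [h1]
  refine (NF_int _ Φ hmeas.stronglyMeasurable hint).trans ?_
  rw [lintegral_count]
  calc _ ≤ ∑' k : ℕ, ENNReal.ofReal ((|t| * B) ^ k / k.factorial) * NF h := by
        refine ENNReal.tsum_le_tsum fun k => ?_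
        simp only [hΦ, NF_smul]
        rw [← ofReal_norm, hcfn, mul_pow, mul_div_right_comm,
          ENNReal.ofReal_mul (by positivity), mul_assoc]
        gcongr
        refine (hk k).trans_eq ?_
        rw [ENNReal.ofReal_pow (by positivity), ENNReal.ofReal_coe_nnreal]
    _ = _ := by
        rw [ENNReal.tsum_mul_right, ← ENNReal.ofReal_tsum_of_nonneg (fun _ => by positivity)
          (Real.summable_pow_div_factorial _), Real.exp_eq_exp_ℝ, NormedSpace.exp_eq_tsum_div]

theorem int_half {y : ℝ} (hy : 0 < y) :
    ∫ r in Set.Ioi (0 : ℝ), r ^ (-(1 / 2) : ℝ) * rexp (-(π * y ^ 2 * r)) = y⁻¹ := by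
  have := Real.integral_rpow_mul_exp_neg_mul_Ioi (a := 1 / 2) (r := π * y ^ 2) (by norm_num) (by positivity)
  rw [show (1 / 2 - 1 : ℝ) = -(1 / 2) by norm_num] at this
  rw [this, Real.Gamma_one_half_eq, ← Real.sqrt_eq_rpow, one_div, Real.sqrt_inv, Real.sqrt_mul (by positivity),
    Real.sqrt_sq hy.le]
  have : √π ≠ 0 := by positivity
  field_simp

theorem int_inv {c : ℝ} (hc : 0 < c) :
    ∫ r in Set.Ioi (0 : ℝ), r ^ (-2 : ℝ) * rexp (-c / r) = c⁻¹ := by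
  have h := integral_comp_rpow_Ioi (fun y => rexp (-c * y)) (p := -1) (by norm_num)
  rw [integral_exp_mul_Ioi (by linarith)] at h
  simp only [mul_zero, Real.exp_zero, abs_neg, abs_one, one_mul, smul_eq_mul] at h
  rw [show (-1 - 1 : ℝ) = -2 by norm_num] at h
  rw [show c⁻¹ = -1 / -c by field_simp, ← h]
  refine setIntegral_congr_fun measurableSet_Ioi fun r hr => ?_
  simp only [Real.rpow_neg_one, div_eq_mul_inv]

theorem fourierInv_kernel (k h : Rd → ℂ) (hk : Integrable k) (hkc : Continuous k)
    (hh : Integrable h) (hhc : Continuous h) (x : Rd) :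
    𝓕⁻ (fun ξ => 𝓕 k ξ * h ξ) x = ∫ y, k y * 𝓕⁻ h (x - y) := by
  have h1 : (fun ξ => 𝓕 k ξ * h ξ) = fun ξ => ∫ y, k y * ((𝐞 (-inner ℝ y ξ) : ℂ) * h ξ) := by
    ext ξ
    rw [Real.fourier_eq, ← integral_mul_const]
    congr 1; ext y
    simp only [Circle.smul_def, smul_eq_mul]; ring
  have hcont : Continuous (Function.uncurry fun y ξ => k y * ((𝐞 (-inner ℝ y ξ) : ℂ) * h ξ)) := by
    simp only [Function.uncurry_def]
    have := Real.continuous_fourierChar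
    fun_prop
  rw [h1, fourierInv_int volume]
  · congr 1; ext y
    simp only [Real.fourierInv_eq, Circle.smul_def, smul_eq_mul]
    rw [← integral_const_mul]
    congr 1; ext v
    rw [inner_sub_right, sub_eq_add_neg, AddChar.map_add_eq_mul, real_inner_comm v y]
    push_cast
    ring
  · refine (hk.mul_prod hh).mono hcont.aestronglyMeasurable ?_
    refine Filter.Eventually.of_forall fun p => ?_
    simp only [Function.uncurry, norm_mul, Circle.norm_coe, one_mul, le_refl]

theorem gauss_int {b : ℝ} (hbp : 0 < b) : Integrable (fun y : Rd => rexp (-b * ‖y‖ ^ 2)) := by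
  by_contra hcon
  have hint := GaussianFourier.integral_rexp_neg_mul_sq_norm (V := Rd) hbp
  rw [integral_undef hcon] at hint
  have : 0 < (π / b) ^ ((Module.finrank ℝ Rd : ℝ) / 2) := by positivity
  exact this.ne hint

theorem gauss_ft {r : ℝ} (hr : 0 < r) (ξ : Rd) :
    𝓕 (fun y : Rd => ((rexp (-(π * r) * ‖y‖ ^ 2) : ℝ) : ℂ)) ξ =
      ((r ^ (-(3 / 2) : ℝ) * rexp (-(π * ‖ξ‖ ^ 2) / r) : ℝ) : ℂ) := by
  have h1 := fourier_gaussian_innerProductSpace (b := ((π * r : ℝ) : ℂ)) (by simp only [ofReal_re]; positivity) ξ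
  have h2 : (fun y : Rd => ((rexp (-(π * r) * ‖y‖ ^ 2) : ℝ) : ℂ)) =
    fun v : Rd => cexp (-((π * r : ℝ) : ℂ) * ‖v‖ ^ 2) := by ext v; push_cast; rfl
  rw [h2, h1]
  have h3 : ((π : ℂ) / ((π * r : ℝ) : ℂ)) ^ ((Module.finrank ℝ Rd : ℂ) / 2) = ((r ^ (-(3 / 2) : ℝ) : ℝ) : ℂ) := by
    have h4 : (r ^ (-(3 / 2) : ℝ)) = (π / (π * r)) ^ ((3 : ℝ) / 2) := by
      rw [show π / (π * r) = r⁻¹ by field_simp, Real.inv_rpow hr.le, Real.rpow_neg hr.le]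
    rw [h4, Complex.ofReal_cpow (by positivity)]
    push_cast
    simp
  rw [h3]
  push_cast
  congr 2
  have : (π : ℂ) ≠ 0 := by exact_mod_cast pi_ne_zero
  have : (r : ℂ) ≠ 0 := by exact_mod_cast hr.ne'
  field_simp

theorem li_inv : LocallyIntegrable (fun y : Rd => ‖y‖⁻¹) := by
  refine locallyIntegrable_of_norm_le_rpow (C := 1) (α := 1) (by simp) (by simp) ?_ (by fun_prop)
  refine Filter.Eventually.of_forall fun y => ?_
  rw [Real.rpow_neg_one]; simp

/-- Fourier multiplier of the Newton potential -/
def KN (ξ : Rd) : ℝ := (π * ‖ξ‖ ^ 2)⁻¹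

theorem KN_meas : Measurable KN := by unfold KN; fun_prop

theorem KN_nonneg (ξ : Rd) : 0 ≤ KN ξ := by unfold KN; positivity

theorem li_KN : LocallyIntegrable KN := by
  refine locallyIntegrable_of_norm_le_rpow (C := π⁻¹) (α := 2) (by simp) (by simp; norm_num) ?_ KN_meas.aestronglyMeasurable
  refine Filter.Eventually.of_forall fun y => ?_
  rw [Real.rpow_neg (norm_nonneg _), Real.norm_of_nonneg (KN_nonneg y)]
  unfold KN
  simp [mul_comm]

theorem KN_mul_int {R : ℝ} {h : Rd → ℂ} (hh : Adm R h) : Integrable (fun ξ => (KN ξ : ℂ) * h ξ) := by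
  have := li_KN.integrable_smul_right_of_hasCompactSupport hh.cont hh.hcs
  simpa [Complex.real_smul] using this

theorem inv_mul_int {f : Rd → ℂ} (hf : Integrable f) (hc : Continuous f) {M : ℝ} (hM : ∀ x, ‖f x‖ ≤ M) :
    Integrable (fun y => ((‖y‖⁻¹ : ℝ) : ℂ) * f y) := by
  rw [← integrableOn_univ, ← Set.union_compl_self (Metric.closedBall (0 : Rd) 1)]
  refine IntegrableOn.union ?_ ?_
  · have h1 : IntegrableOn (fun y : Rd => ‖y‖⁻¹) (Metric.closedBall (0 : Rd) 1) :=
      li_inv.integrableOn_isCompact (isCompact_closedBall _ _)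
    have h2 : IntegrableOn (fun y : Rd => ((‖y‖⁻¹ : ℝ) : ℂ)) (Metric.closedBall (0 : Rd) 1) := h1.ofReal
    exact h2.mul_bdd (c := M) hc.aestronglyMeasurable (Filter.Eventually.of_forall hM)
  · refine Integrable.mono (hf.integrableOn (s := (Metric.closedBall (0 : Rd) 1)ᶜ)) ?_ ?_
    · apply AEStronglyMeasurable.mul
      · exact (by fun_prop : Measurable fun y : Rd => ((‖y‖⁻¹ : ℝ) : ℂ)).aestronglyMeasurable
      · exact hc.aestronglyMeasurable
    · refine (ae_restrict_iff' (by measurability)).2 (Filter.Eventually.of_forall fun y hy => ?_)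
      have : 1 < ‖y‖ := by simpa using hy
      rw [norm_mul]
      have h5 : ‖((‖y‖⁻¹ : ℝ) : ℂ)‖ ≤ 1 := by
        rw [Complex.norm_real, Real.norm_of_nonneg (by positivity)]
        exact inv_le_one_of_one_le₀ this.le
      exact mul_le_of_le_one_left (norm_nonneg _) h5

theorem int_ne_of {f : ℝ → ℝ} {c : ℝ} (h : ∫ r in Set.Ioi (0 : ℝ), f r = c) (hc : c ≠ 0) :
    IntegrableOn f (Set.Ioi 0) := by
  by_contra hcon
  rw [integral_undef hcon] at h
  exact hc h.symm

theorem ae_ne_zero : ∀ᵐ y : Rd, y ≠ 0 := by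
  simp [ae_iff]

theorem fourierInv_bdd (h : Rd → ℂ) (x : Rd) : ‖𝓕⁻ h x‖ ≤ ∫ ξ, ‖h ξ‖ := by
  rw [Real.fourierInv_eq]
  refine (norm_integral_le_integral_norm _).trans (le_of_eq ?_)
  simp

theorem newton_eq {R : ℝ} {h : Rd → ℂ} (hh : Adm R h) (hN : NF h < ∞) (x : Rd) :
    newton (𝓕⁻ h) x = 𝓕⁻ (fun ξ => (KN ξ : ℂ) * h ξ) x := by
  set ρ := 𝓕⁻ h with hρ
  have hρc : Continuous ρ := fourierInv_cont hh.int
  have hρi : Integrable ρ := fourierInv_integrable hh.int hN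
  set μ : Measure ℝ := volume.restrict (Set.Ioi 0) with hμ
  have e1 : newton ρ x = ∫ y, ((‖y‖⁻¹ : ℝ) : ℂ) * ρ (x - y) := by
    unfold newton
    rw [← integral_sub_left_eq_self _ volume x]
    congr 1; ext y
    simp [div_eq_mul_inv, mul_comm]
  set Ψ : Rd → ℝ → ℂ := fun y r => ((r ^ (-(1 / 2) : ℝ) * rexp (-(π * ‖y‖ ^ 2 * r)) : ℝ) : ℂ) * ρ (x - y) with hΨ
  have hΨm : Measurable (Function.uncurry Ψ) := by
    simp only [hΨ, Function.uncurry_def]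
    have := hρc.measurable
    fun_prop
  have e2 : ∀ᵐ y : Rd, ((‖y‖⁻¹ : ℝ) : ℂ) * ρ (x - y) = ∫ r, Ψ y r ∂μ := by
    filter_upwards [ae_ne_zero] with y hy
    simp only [hΨ]
    rw [integral_mul_const, integral_complex_ofReal, int_half (norm_pos_iff.2 hy)]
  have hpos : ∀ r ∈ Set.Ioi (0 : ℝ), 0 < r := fun r hr => hr
  have e3 : Integrable (Function.uncurry Ψ) (volume.prod μ) := by
    rw [integrable_prod_iff hΨm.aestronglyMeasurable]
    constructor
    · filter_upwards [ae_ne_zero] with y hy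
      have := int_ne_of (int_half (norm_pos_iff.2 hy)) (by simpa using hy)
      have h2 := (Integrable.ofReal (𝕜 := ℂ) this).mul_const (ρ (x - y))
      exact h2
    · have h1 : Integrable (fun y => ((‖y‖⁻¹ : ℝ) : ℂ) * ρ (x - y)) :=
        inv_mul_int (hρi.comp_sub_left x) (by fun_prop) (fun y => fourierInv_bdd h _)
      refine h1.norm.congr ?_
      filter_upwards [ae_ne_zero] with y hy
      simp only [hΨ, Function.uncurry, norm_mul]
      rw [integral_mul_const]
      congr 1
      rw [Complex.norm_real, Real.norm_of_nonneg (by positivity), ← int_half (norm_pos_iff.2 hy)]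
      refine setIntegral_congr_fun measurableSet_Ioi fun r hr => ?_
      have := hpos r hr
      simp only [Complex.norm_real]
      rw [Real.norm_of_nonneg (by positivity)]
  rw [e1, integral_congr_ae e2, integral_integral_swap e3]
  set Φ : ℝ → Rd → ℂ := fun r ξ => ((r ^ (-2 : ℝ) * rexp (-(π * ‖ξ‖ ^ 2) / r) : ℝ) : ℂ) * h ξ with hΦ
  have e4 : ∀ r ∈ Set.Ioi (0 : ℝ), ∫ y, Ψ y r = 𝓕⁻ (Φ r) x := by
    intro r hr
    have hr := hpos r hr
    have h1 : Φ r = fun ξ => 𝓕 (fun y : Rd => ((r ^ (-(1 / 2) : ℝ) : ℝ) : ℂ) * ((rexp (-(π * r) * ‖y‖ ^ 2) : ℝ) : ℂ)) ξ * h ξ := by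
      ext ξ
      have h2 : 𝓕 (fun y : Rd => ((r ^ (-(1 / 2) : ℝ) : ℝ) : ℂ) * ((rexp (-(π * r) * ‖y‖ ^ 2) : ℝ) : ℂ)) ξ
        = ((r ^ (-(1 / 2) : ℝ) : ℝ) : ℂ) * 𝓕 (fun y : Rd => ((rexp (-(π * r) * ‖y‖ ^ 2) : ℝ) : ℂ)) ξ := by
        rw [Real.fourier_eq, Real.fourier_eq, ← integral_const_mul]
        congr 1; ext v
        simp only [Circle.smul_def, smul_eq_mul]
        ring
      rw [h2, gauss_ft hr]
      simp only [hΦ]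
      rw [show (-2 : ℝ) = -(1 / 2) + -(3 / 2) by norm_num, Real.rpow_add hr]
      push_cast
      ring
    rw [h1, fourierInv_kernel]
    · congr 1; ext y
      simp only [hΨ]
      push_cast
      congr 3
      ring_nf
    · exact ((gauss_int (by positivity)).ofReal).const_mul _
    · fun_prop
    · exact hh.int
    · exact hh.cont
  have hΦm : Measurable (Function.uncurry Φ) := by
    simp only [hΦ, Function.uncurry_def]
    have := hh.cont.measurable
    fun_prop
  rw [hμ, setIntegral_congr_fun measurableSet_Ioi e4, ← hμ, ← fourierInv_int]
  · simp only [Real.fourierInv_eq]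
    refine integral_congr_ae ?_
    filter_upwards [ae_ne_zero] with ξ hξ
    have : 0 < ‖ξ‖ := norm_pos_iff.2 hξ
    simp only [hΦ]
    rw [integral_mul_const, integral_complex_ofReal, int_inv (by positivity)]
    rfl
  · rw [integrable_prod_iff' hΦm.aestronglyMeasurable]
    constructor
    · filter_upwards [ae_ne_zero] with ξ hξ
      have h0 : 0 < ‖ξ‖ := norm_pos_iff.2 hξ
      have := int_ne_of (int_inv (c := π * ‖ξ‖ ^ 2) (by positivity)) (by positivity)
      have h2 := (Integrable.ofReal (𝕜 := ℂ) this).mul_const (h ξ)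
      exact h2
    · refine (KN_mul_int hh).norm.congr ?_
      filter_upwards [ae_ne_zero] with ξ hξ
      have h0 : 0 < ‖ξ‖ := norm_pos_iff.2 hξ
      simp only [hΦ, Function.uncurry, norm_mul]
      rw [integral_mul_const]
      congr 1
      rw [Complex.norm_real, Real.norm_of_nonneg (KN_nonneg _), KN, ← int_inv (c := π * ‖ξ‖ ^ 2) (by positivity)]
      refine setIntegral_congr_fun measurableSet_Ioi fun r hr => ?_
      have := hpos r hr
      simp only [Complex.norm_real]
      rw [Real.norm_of_nonneg (by positivity)]

/-- convolution -/
def cv (f g : Rd → ℂ) (ζ : Rd) : ℂ := ∫ ξ, f ξ * g (ζ - ξ)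

theorem cv_eq (f g : Rd → ℂ) : cv f g = convolution f g (ContinuousLinearMap.mul ℂ ℂ) volume := by
  ext ζ; rfl

theorem cv_prod_int {f g : Rd → ℂ} (hf : Integrable f) (hg : Integrable g) :
    Integrable (Function.uncurry fun ξ ζ => f ξ * g (ζ - ξ)) (volume.prod volume) := by
  have := (hf.convolution_integrand (ContinuousLinearMap.mul ℂ ℂ) hg).swap
  exact this

theorem fourierInv_sh (c : ℂ) (g : Rd → ℂ) (ξ x : Rd) :
    𝓕⁻ (fun ζ => c * g (ζ - ξ)) x = c * (𝐞 (inner ℝ ξ x) : ℂ) * 𝓕⁻ g x := by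
  simp only [Real.fourierInv_eq, Circle.smul_def, smul_eq_mul]
  rw [← integral_add_right_eq_self _ ξ, ← integral_const_mul]
  congr 1; ext v
  rw [inner_add_left, AddChar.map_add_eq_mul, add_sub_cancel_right]
  push_cast
  ring

theorem cv_inv {f g : Rd → ℂ} (hf : Integrable f) (hg : Integrable g) (x : Rd) :
    𝓕⁻ (cv f g) x = 𝓕⁻ f x * 𝓕⁻ g x := by
  have h1 := fourierInv_int volume (fun ξ ζ => f ξ * g (ζ - ξ)) (cv_prod_int hf hg) x
  change 𝓕⁻ (cv f g) x = _ at h1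
  rw [h1]
  simp only [fourierInv_sh]
  rw [integral_mul_const]
  congr 1
  rw [Real.fourierInv_eq]
  simp only [Circle.smul_def, smul_eq_mul, mul_comm]

theorem cv_cont {R : ℝ} {f g : Rd → ℂ} (hf : Integrable f) (hg : Adm R g) : Continuous (cv f g) := by
  rw [cv_eq]
  exact hg.hcs.continuous_convolution_right _ hf.locallyIntegrable hg.cont

theorem cv_adm {R R' : ℝ} {f g : Rd → ℂ} (hf : Integrable f) (hfs : ∀ ξ, R' < ‖ξ‖ → f ξ = 0) (hg : Adm R g) :
    Adm (R' + R) (cv f g) := by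
  refine ⟨cv_cont hf hg, fun ζ hζ => ?_⟩
  unfold cv
  rw [← integral_zero Rd ℂ]
  congr 1; ext ξ
  by_cases h : R' < ‖ξ‖
  · simp [hfs ξ h]
  · rw [hg.supp (ζ - ξ), mul_zero]
    have := norm_sub_norm_le ζ ξ
    linarith

theorem NF_cv {f g : Rd → ℂ} (hf : Integrable f) (hg : Integrable g) :
    NF (cv f g) ≤ ENNReal.ofReal (∫ ξ, ‖f ξ‖) * NF g := by
  unfold NF
  rw [← lintegral_const_mul' _ _ (by simp)]
  refine lintegral_mono fun x => ?_
  rw [cv_inv hf hg, enorm_mul]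
  gcongr
  rw [← ofReal_norm]
  exact ENNReal.ofReal_le_ofReal (fourierInv_bdd f x)

/-- reflected conjugate -/
def st (a : Rd → ℂ) (ξ : Rd) : ℂ := (starRingEnd ℂ) (a (-ξ))

theorem st_inv (a : Rd → ℂ) (x : Rd) : 𝓕⁻ (st a) x = (starRingEnd ℂ) (𝓕⁻ a x) := by
  simp only [Real.fourierInv_eq, Circle.smul_def, smul_eq_mul]
  rw [← integral_conj, ← integral_neg_eq_self]
  congr 1; ext v
  unfold st
  rw [neg_neg, inner_neg_left, map_mul, AddChar.map_neg_eq_inv, Circle.coe_inv_eq_conj]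

theorem st_adm {R : ℝ} {a : Rd → ℂ} (ha : Adm R a) : Adm R (st a) :=
  ⟨Complex.continuous_conj.comp (ha.cont.comp continuous_neg), fun ξ hξ => by
    unfold st; rw [ha.supp (-ξ) (by simpa using hξ)]; simp⟩

theorem NF_st (a : Rd → ℂ) : NF (st a) = NF a := by
  unfold NF; congr 1; ext x; rw [st_inv]; simp [← ofReal_norm]

/-- symbol of the potential -/
def vv (a : Rd → ℂ) (ζ : Rd) : ℂ := (KN ζ : ℂ) * cv a (st a) ζ

/-- symbol of the nonlinearity -/
def HH (a : Rd → ℂ) : Rd → ℂ := cv (vv a) a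

theorem rh_adm {R : ℝ} {a : Rd → ℂ} (ha : Adm R a) : Adm (R + R) (cv a (st a)) :=
  cv_adm ha.int ha.supp (st_adm ha)

theorem vv_int {R : ℝ} {a : Rd → ℂ} (ha : Adm R a) : Integrable (vv a) := KN_mul_int (rh_adm ha)

theorem HH_adm {R : ℝ} {a : Rd → ℂ} (ha : Adm R a) : Adm (R + R + R) (HH a) :=
  cv_adm (vv_int ha) (fun ξ hξ => by unfold vv; rw [(rh_adm ha).supp ξ hξ, mul_zero]) ha

theorem nonlin_eq {R : ℝ} {a : Rd → ℂ} (ha : Adm R a) (hN : NF a < ∞) :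
    nonlin (𝓕⁻ a) = 𝓕⁻ (HH a) := by
  ext x
  unfold nonlin
  have h1 : (fun y => (‖𝓕⁻ a y‖ : ℂ) ^ 2) = 𝓕⁻ (cv a (st a)) := by
    ext y
    rw [cv_inv ha.int (st_adm ha).int, st_inv, Complex.mul_conj, Complex.normSq_eq_norm_sq]
    push_cast; rfl
  rw [h1, newton_eq (rh_adm ha), HH, cv_inv (vv_int ha) ha.int]
  · rfl
  · refine (NF_cv ha.int (st_adm ha).int).trans_lt ?_
    rw [NF_st]
    exact ENNReal.mul_lt_top (by simp) hN

theorem NF_HH {R : ℝ} {a : Rd → ℂ} (ha : Adm R a) :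
    NF (HH a) ≤ ENNReal.ofReal (∫ ξ, ‖vv a ξ‖) * NF a := NF_cv (vv_int ha) ha.int

/-- the modulus -/
def na (a : Rd → ℂ) (ξ : Rd) : ℂ := (‖a ξ‖ : ℂ)

theorem na_adm {R : ℝ} {a : Rd → ℂ} (ha : Adm R a) : Adm R (na a) :=
  ⟨Complex.continuous_ofReal.comp ha.cont.norm, fun ξ hξ => by unfold na; rw [ha.supp ξ hξ]; simp⟩

/-- evolved symbol -/
def ev (m : ℝ) (a : Rd → ℂ) (τ : ℝ) (ξ : Rd) : ℂ := prp m τ ξ * a ξ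

theorem ev_adm (m : ℝ) {R : ℝ} {a : Rd → ℂ} (ha : Adm R a) (τ : ℝ) : Adm R (ev m a τ) :=
  ha.mul (prp_cont' m τ)

theorem ev_norm (m : ℝ) (a : Rd → ℂ) (τ : ℝ) (ξ : Rd) : ‖ev m a τ ξ‖ = ‖a ξ‖ := by
  unfold ev; rw [norm_mul, prp_norm, one_mul]

theorem ev_cont (m : ℝ) {R : ℝ} {a : Rd → ℂ} (ha : Adm R a) : Continuous fun p : ℝ × Rd => ev m a p.1 p.2 :=
  (prp_cont m).mul (ha.cont.comp continuous_snd)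

theorem vv_bound (m : ℝ) {R : ℝ} {a : Rd → ℂ} (ha : Adm R a) (τ : ℝ) (ζ : Rd) :
    ‖vv (ev m a τ) ζ‖ ≤ ‖vv (na a) ζ‖ := by
  unfold vv
  rw [norm_mul, norm_mul]
  refine mul_le_mul_of_nonneg_left ?_ (norm_nonneg _)
  unfold cv
  refine (norm_integral_le_integral_norm _).trans ?_
  have : (∫ ξ, na a ξ * st (na a) (ζ - ξ)) = ((∫ ξ, ‖a ξ‖ * ‖a (-(ζ - ξ))‖ : ℝ) : ℂ) := by
    rw [← integral_complex_ofReal]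
    congr 1; ext ξ; simp [na, st]
  rw [this, Complex.norm_real, Real.norm_of_nonneg (integral_nonneg fun _ => by positivity)]
  apply le_of_eq
  congr 1; ext ξ
  rw [norm_mul, ev_norm, st, RCLike.norm_conj, ev_norm]

theorem par_cont {f g : ℝ → Rd → ℂ} (hf : ∀ τ, AEStronglyMeasurable (f τ)) (b : Rd → ℝ) (hb : Integrable b)
    (hfb : ∀ τ ξ, ‖f τ ξ‖ ≤ b ξ) (hfc : ∀ ξ, Continuous fun τ => f τ ξ)
    (hg : Continuous fun p : ℝ × Rd => g p.1 p.2) {M : ℝ} (hM : ∀ τ ξ, ‖g τ ξ‖ ≤ M) :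
    Continuous fun p : ℝ × Rd => cv (f p.1) (g p.1) p.2 := by
  unfold cv
  refine continuous_of_dominated (bound := fun ξ => b ξ * M) (fun p => ?_) (fun p => ?_) (hb.mul_const M) ?_
  · refine (hf p.1).mul ?_
    exact (hg.comp (continuous_const.prodMk (continuous_const.sub continuous_id)) : Continuous fun ξ => g p.1 (p.2 - ξ)).aestronglyMeasurable
  · refine Filter.Eventually.of_forall fun ξ => ?_
    rw [norm_mul]
    exact mul_le_mul (hfb _ _) (hM _ _) (norm_nonneg _) ((norm_nonneg _).trans (hfb p.1 ξ))
  · refine Filter.Eventually.of_forall fun ξ => ?_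
    exact ((hfc ξ).comp continuous_fst).mul (hg.comp (continuous_fst.prodMk (continuous_snd.sub continuous_const)))

theorem Adm.bdd {R : ℝ} {a : Rd → ℂ} (ha : Adm R a) : ∃ M, ∀ ξ, ‖a ξ‖ ≤ M :=
  ha.hcs.exists_bound_of_continuous ha.cont

theorem HH_cont (m : ℝ) {R : ℝ} {a : Rd → ℂ} (ha : Adm R a) :
    Continuous fun p : ℝ × Rd => HH (ev m a p.1) p.2 := by
  obtain ⟨M, hM⟩ := ha.bdd
  have hc := ev_cont m ha
  have h1 : Continuous fun p : ℝ × Rd => cv (ev m a p.1) (st (ev m a p.1)) p.2 := by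
    refine par_cont (f := ev m a) (g := fun τ => st (ev m a τ)) (fun τ => (ev_adm m ha τ).cont.aestronglyMeasurable)
      (fun ξ => ‖a ξ‖) ha.int.norm (fun τ ξ => (ev_norm m a τ ξ).le)
      (fun ξ => hc.comp (continuous_id.prodMk continuous_const)) ?_ (M := M) ?_
    · exact Complex.continuous_conj.comp (hc.comp (continuous_fst.prodMk continuous_snd.neg))
    · intro τ ξ
      rw [st, RCLike.norm_conj, ev_norm]
      exact hM _
  refine par_cont (f := fun τ => vv (ev m a τ)) (g := ev m a) (fun τ => (vv_int (ev_adm m ha τ)).1)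
    (fun ξ => ‖vv (na a) ξ‖) (vv_int (na_adm ha)).norm (fun τ ξ => vv_bound m ha τ ξ) (fun ξ => ?_) hc (M := M) ?_
  · unfold vv
    have h2 : Continuous fun τ : ℝ => ((τ, ξ) : ℝ × Rd) := by fun_prop
    have h3 := h1.comp h2
    simp only [Function.comp_def] at h3
    exact continuous_const.mul h3
  · intro τ ξ
    rw [ev_norm]
    exact hM _

/-- Fourier transform of the Duhamel term -/
def GG (m : ℝ) (a : Rd → ℂ) (t : ℝ) (ξ : Rd) : ℂ :=
  ∫ τ in Set.Ioc 0 t, prp m (t - τ) ξ * HH (ev m a τ) ξ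

set_option maxHeartbeats 1000000 in
theorem duhamel_ft {m : ℝ} (hm : 0 ≤ m) {R : ℝ} (hR : 0 < R) {a : Rd → ℂ} (ha : Adm R a) (hN : NF a < ∞)
    {t : ℝ} (ht : 0 ≤ t) : 𝓕 (duhamelFree m (𝓕⁻ a) t) = GG m a t := by
  obtain ⟨B1, hB1⟩ := NF_prp m R hm hR
  obtain ⟨B2, hB2⟩ := NF_prp m (R + R + R) hm (by positivity)
  have hu : ∀ τ, uProp m τ (𝓕⁻ a) = 𝓕⁻ (ev m a τ) := by
    intro τ
    unfold uProp
    rw [fourier_inv_NF ha.int ha.cont hN]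
    rfl
  have hNe : ∀ τ, NF (ev m a τ) ≤ ENNReal.ofReal (rexp (|τ| * B1)) * NF a := fun τ => hB1 a ha τ
  have hNe' : ∀ τ, NF (ev m a τ) < ∞ := fun τ => (hNe τ).trans_lt (ENNReal.mul_lt_top (by simp) hN)
  have hNH : ∀ τ, NF (HH (ev m a τ)) ≤ ENNReal.ofReal (∫ ξ, ‖vv (na a) ξ‖) * (ENNReal.ofReal (rexp (|τ| * B1)) * NF a) := by
    intro τ
    refine (NF_HH (ev_adm m ha τ)).trans (mul_le_mul' (ENNReal.ofReal_le_ofReal ?_) (hNe τ))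
    exact integral_mono (vv_int (ev_adm m ha τ)).norm (vv_int (na_adm ha)).norm (fun ξ => vv_bound m ha τ ξ)
  have hNH' : ∀ τ, NF (HH (ev m a τ)) < ∞ := fun τ => (hNH τ).trans_lt
    (ENNReal.mul_lt_top (by simp) (ENNReal.mul_lt_top (by simp) hN))
  have hU : ∀ τ, uProp m (t - τ) (nonlin (uProp m τ (𝓕⁻ a))) = 𝓕⁻ (fun ξ => prp m (t - τ) ξ * HH (ev m a τ) ξ) := by
    intro τ
    have hA := HH_adm (ev_adm m ha τ)
    rw [hu, nonlin_eq (ev_adm m ha τ) (hNe' τ), uProp, fourier_inv_NF hA.int hA.cont (hNH' τ)]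
    rfl
  set Φ : ℝ → Rd → ℂ := fun τ ξ => prp m (t - τ) ξ * HH (ev m a τ) ξ with hΦ
  have hΦc : Continuous (Function.uncurry Φ) := by
    have h1 := (prp_cont m).comp ((continuous_const.sub continuous_fst).prodMk continuous_snd : Continuous fun p : ℝ × Rd => (t - p.1, p.2))
    exact h1.mul (HH_cont m ha)
  have hΦA : ∀ τ, Adm (R + R + R) (Φ τ) := fun τ => (HH_adm (ev_adm m ha τ)).mul (prp_cont' m _)
  set μ : Measure ℝ := volume.restrict (Set.Ioc 0 t) with hμ
  have hΦi : Integrable (Function.uncurry Φ) (μ.prod volume) := by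
    have h1 : IntegrableOn (Function.uncurry Φ) (Set.Ioc 0 t ×ˢ Metric.closedBall (0 : Rd) (R + R + R)) := by
      refine IntegrableOn.mono_set (t := Set.Icc 0 t ×ˢ Metric.closedBall (0 : Rd) (R + R + R)) ?_ (Set.prod_mono Set.Ioc_subset_Icc_self le_rfl)
      exact hΦc.continuousOn.integrableOn_compact ((isCompact_Icc).prod (isCompact_closedBall _ _))
    have h2 : μ.prod (volume : Measure Rd) = (volume : Measure (ℝ × Rd)).restrict (Set.Ioc 0 t ×ˢ Set.univ) := by
      rw [hμ, Measure.volume_eq_prod, ← Measure.prod_restrict, Measure.restrict_univ]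
    rw [h2]
    refine IntegrableOn.of_forall_sdiff_eq_zero h1 (measurableSet_Ioc.prod MeasurableSet.univ) ?_
    rintro ⟨τ, ξ⟩ hp
    apply (hΦA τ).supp
    by_contra hcon
    exact hp.2 ⟨hp.1.1, by simpa using hcon⟩
  have hD : duhamelFree m (𝓕⁻ a) t = 𝓕⁻ (GG m a t) := by
    ext x
    unfold duhamelFree
    simp only [hU]
    rw [intervalIntegral.integral_of_le ht]
    exact (fourierInv_int μ Φ hΦi x).symm
  have hGA : Adm (R + R + R) (GG m a t) := by
    constructor
    · obtain ⟨M', hM'⟩ : ∃ M', ∀ τ ξ, ‖Φ τ ξ‖ ≤ M' := by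
        obtain ⟨Ma, hMa⟩ := ha.bdd
        refine ⟨(∫ ξ, ‖vv (na a) ξ‖) * Ma, fun τ ξ => ?_⟩
        simp only [hΦ, norm_mul, prp_norm, one_mul]
        unfold HH cv
        refine (norm_integral_le_integral_norm _).trans ?_
        rw [← integral_mul_const]
        refine integral_mono_of_nonneg (Filter.Eventually.of_forall fun _ => norm_nonneg _) ((vv_int (na_adm ha)).norm.mul_const _)
          (Filter.Eventually.of_forall fun ζ => ?_)
        simp only [norm_mul, ev_norm]
        exact mul_le_mul (vv_bound m ha τ ζ) (hMa _) (norm_nonneg _) (norm_nonneg _)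
      unfold GG
      refine continuous_of_dominated (bound := fun _ => M') (fun ξ => ?_) (fun ξ => Filter.Eventually.of_forall fun τ => hM' τ ξ)
        (by simp) (Filter.Eventually.of_forall fun τ => (hΦA τ).cont)
      have h2 : Continuous fun τ : ℝ => ((τ, ξ) : ℝ × Rd) := by fun_prop
      have h3 := hΦc.comp h2
      simp only [Function.comp_def, Function.uncurry] at h3
      exact h3.aestronglyMeasurable
    · intro ξ hξ
      unfold GG
      have : ∀ τ, prp m (t - τ) ξ * HH (ev m a τ) ξ = 0 := fun τ => (hΦA τ).supp ξ hξ
      simp [this]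
  have hGN : NF (GG m a t) < ∞ := by
    refine (NF_int μ Φ hΦc.stronglyMeasurable hΦi).trans_lt ?_
    have : ∀ᵐ τ ∂μ, NF (Φ τ) ≤ ENNReal.ofReal (rexp (t * B2)) * (ENNReal.ofReal (∫ ξ, ‖vv (na a) ξ‖) * (ENNReal.ofReal (rexp (t * B1)) * NF a)) := by
      refine (ae_restrict_iff' measurableSet_Ioc).2 (Filter.Eventually.of_forall fun τ hτ => ?_)
      refine (hB2 _ (HH_adm (ev_adm m ha τ)) (t - τ)).trans (mul_le_mul' ?_ ((hNH τ).trans ?_))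
      · gcongr
        rw [abs_of_nonneg] <;> linarith [hτ.1, hτ.2]
      · gcongr
        rw [abs_of_nonneg] <;> linarith [hτ.1, hτ.2]
    refine (lintegral_mono_ae this).trans_lt ?_
    rw [lintegral_const]
    refine ENNReal.mul_lt_top (ENNReal.mul_lt_top (by simp) (ENNReal.mul_lt_top (by simp) (ENNReal.mul_lt_top (by simp) hN))) ?_
    simp [hμ]
  rw [hD, fourier_inv_NF hGA.int hGA.cont hGN]

theorem ind_low {f : Rd → ℝ} (hf : Integrable f) (h0 : ∀ x, 0 ≤ f x) {c r : ℝ}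
    (hc : ∀ x, x ≠ 0 → ‖x‖ ≤ r → c ≤ f x) :
    c * volume.real (Metric.closedBall (0 : Rd) r) ≤ ∫ x, f x := by
  calc c * volume.real (Metric.closedBall (0 : Rd) r) = ∫ _ in Metric.closedBall (0 : Rd) r, c := by
        rw [setIntegral_const, smul_eq_mul, mul_comm]
    _ ≤ ∫ x in Metric.closedBall (0 : Rd) r, f x := by
        refine setIntegral_mono_on_ae (integrableOn_const (measure_closedBall_lt_top.ne)) hf.integrableOn measurableSet_closedBall ?_
        filter_upwards [ae_ne_zero] with x hx hxr
        exact hc x hx (by simpa using hxr)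
    _ ≤ ∫ x, f x := setIntegral_le_integral hf (Filter.Eventually.of_forall h0)

/-- the data on the Fourier side -/
def dat (A N : ℝ) (ξ : Rd) : ℂ := ((A * bmp N ξ : ℝ) : ℂ)

theorem dat_adm (A : ℝ) {N : ℝ} (hN : 0 < N) : Adm (2 * N) (dat A N) :=
  ⟨Complex.continuous_ofReal.comp (continuous_const.mul (bmp_contDiff N).continuous), fun ξ hξ => by
    unfold dat; rw [bmp_zero hN hξ]; simp⟩

theorem dat_NF (A : ℝ) {N : ℝ} (hN : 0 < N) : NF (dat A N) < ∞ := by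
  obtain ⟨f, hf⟩ := bmp_mul_schwartz hN (fun _ => A) contDiff_const
  have : dat A N = f := by ext ξ; rw [hf]; rfl
  rw [this]
  exact NF_schwartz f

theorem cos_half {θ : ℝ} (h : |θ| ≤ 1) : 1 / 2 ≤ Real.cos θ := by
  have := Real.one_sub_sq_div_two_le_cos (x := θ)
  have h2 : θ ^ 2 ≤ 1 := by rw [← sq_abs]; nlinarith [abs_nonneg θ]
  linarith

theorem low1 {m : ℝ} (hm : 0 ≤ m) {A N t τ : ℝ} (hA : 0 < A) (hN : 0 < N) (hτ : 0 ≤ τ) (hτt : τ ≤ t)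
    (ht : t * (6 * N) ≤ 1) {ξ ζ η : Rd} (hξ : ‖ξ‖ ≤ N / 2) :
    1 / 2 * (A * bmp N η * (A * bmp N (-(ζ - η))) * (A * bmp N (ξ - ζ))) ≤
    (prp m (t - τ) ξ * ((ev m (dat A N) τ η * st (ev m (dat A N) τ) (ζ - η)) * ev m (dat A N) τ (ξ - ζ))).re := by
  set p := A * bmp N η * (A * bmp N (-(ζ - η))) * (A * bmp N (ξ - ζ)) with hp
  set θ : ℝ := (t - τ) * ph m ξ + τ * ph m η - τ * ph m (-(ζ - η)) + τ * ph m (ξ - ζ) with hθ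
  have e : prp m (t - τ) ξ * ((ev m (dat A N) τ η * st (ev m (dat A N) τ) (ζ - η)) * ev m (dat A N) τ (ξ - ζ))
      = (p : ℂ) * cexp ((θ : ℂ) * Complex.I) := by
    have h1 : cexp ((θ : ℂ) * Complex.I) = prp m (t - τ) ξ * prp m τ η * (starRingEnd ℂ) (prp m τ (-(ζ - η))) * prp m τ (ξ - ζ) := by
      simp only [prp_eq]
      rw [← Complex.exp_conj, ← Complex.exp_add, ← Complex.exp_add, ← Complex.exp_add]
      congr 1
      simp only [map_mul, Complex.conj_I, Complex.conj_ofReal, hθ]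
      push_cast
      ring
    rw [h1]
    unfold ev st dat
    simp only [map_mul, Complex.conj_ofReal, hp]
    push_cast
    ring
  have hp0 : 0 ≤ p := by
    have := bmp_nonneg N
    have h1 := this η; have h2 := this (-(ζ - η)); have h3 := this (ξ - ζ)
    positivity
  rw [e, Complex.re_ofReal_mul, Complex.exp_ofReal_mul_I_re]
  by_cases h1 : 2 * N < ‖η‖
  · simp [hp, bmp_zero hN h1]
  by_cases h2 : 2 * N < ‖-(ζ - η)‖
  · rw [hp, bmp_zero hN h2]; simp
  by_cases h3 : 2 * N < ‖ξ - ζ‖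
  · simp [hp, bmp_zero hN h3]
  push Not at h1 h2 h3
  rw [mul_comm]
  refine mul_le_mul_of_nonneg_left (cos_half ?_) hp0
  have a0 := (ph_abs hm ξ).trans hξ
  have a1 := (ph_abs hm η).trans h1
  have a2 := (ph_abs hm (-(ζ - η))).trans h2
  have a3 := (ph_abs hm (ξ - ζ)).trans h3
  rw [abs_le] at *
  have ht' : 0 ≤ t - τ := by linarith
  constructor <;> rw [hθ] <;> nlinarith

theorem low2 {m : ℝ} (hm : 0 ≤ m) {A N t τ : ℝ} (hA : 0 < A) (hN : 0 < N) (hτ : 0 ≤ τ) (hτt : τ ≤ t)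
    (ht : t * (6 * N) ≤ 1) {ξ : Rd} (hξ : ‖ξ‖ ≤ N / 2) :
    (1 / 2 * A ^ 3 * volume.real (Metric.closedBall (0 : Rd) (N / 4)) * (π * (N / 4) ^ 2)⁻¹) *
      volume.real (Metric.closedBall (0 : Rd) (N / 4)) ≤
    (prp m (t - τ) ξ * HH (ev m (dat A N) τ) ξ).re := by
  have hE := ev_adm m (dat_adm A hN) τ
  obtain ⟨M, hM⟩ := hE.bdd
  set J : Rd → ℂ := fun ζ => prp m (t - τ) ξ * (vv (ev m (dat A N) τ) ζ * ev m (dat A N) τ (ξ - ζ)) with hJ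
  have hJi : Integrable J := by
    refine Integrable.const_mul ?_ _
    refine (vv_int hE).mul_bdd (c := M) ?_ (Filter.Eventually.of_forall fun ζ => hM _)
    have := hE.cont
    exact (by fun_prop : Continuous fun ζ => ev m (dat A N) τ (ξ - ζ)).aestronglyMeasurable
  have e1 : prp m (t - τ) ξ * HH (ev m (dat A N) τ) ξ = ∫ ζ, J ζ := by
    simp only [hJ]
    rw [integral_const_mul]; rfl
  have e2 : (∫ ζ, J ζ).re = ∫ ζ, (J ζ).re := (Complex.reCLM.integral_comp_comm hJi).symm
  set L : Rd → Rd → ℂ := fun ζ η => prp m (t - τ) ξ * ((ev m (dat A N) τ η * st (ev m (dat A N) τ) (ζ - η)) * ev m (dat A N) τ (ξ - ζ)) with hL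
  have hLi : ∀ ζ, Integrable (L ζ) := by
    intro ζ
    have h1 : Continuous fun η => st (ev m (dat A N) τ) (ζ - η) := by
      have := (st_adm hE).cont
      fun_prop
    have h2 := (hE.mul h1).int
    refine ((h2.mul_const (ev m (dat A N) τ (ξ - ζ))).const_mul (prp m (t - τ) ξ)).congr (Filter.Eventually.of_forall fun η => ?_)
    simp only [hL]; ring
  have e3 : ∀ ζ, (J ζ).re = KN ζ * ∫ η, (L ζ η).re := by
    intro ζ
    have h1 : J ζ = (KN ζ : ℂ) * ∫ η, L ζ η := by
      simp only [hJ, hL, vv, cv]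
      rw [integral_const_mul, integral_mul_const]
      ring
    rw [h1, Complex.re_ofReal_mul]
    congr 1
    exact (Complex.reCLM.integral_comp_comm (hLi ζ)).symm
  have hLlow : ∀ ζ η, 1 / 2 * (A * bmp N η * (A * bmp N (-(ζ - η))) * (A * bmp N (ξ - ζ))) ≤ (L ζ η).re :=
    fun ζ η => low1 hm hA hN hτ hτt ht hξ
  have hL0 : ∀ ζ η, 0 ≤ (L ζ η).re := fun ζ η => by
    refine le_trans ?_ (hLlow ζ η)
    have := bmp_nonneg N
    have h1 := this η; have h2 := this (-(ζ - η)); have h3 := this (ξ - ζ)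
    positivity
  rw [e1, e2]
  refine ind_low hJi.re (fun ζ => ?_) (fun ζ hζ hζN => ?_)
  · change 0 ≤ (J ζ).re
    rw [e3]
    exact mul_nonneg (KN_nonneg ζ) (integral_nonneg (hL0 ζ))
  · change _ ≤ (J ζ).re
    rw [e3, mul_comm (KN ζ)]
    refine mul_le_mul ?_ ?_ (by positivity) (integral_nonneg (hL0 ζ))
    · refine ind_low (hLi ζ).re (hL0 ζ) fun η _ hη => ?_
      refine le_trans (le_of_eq ?_) (hLlow ζ η)
      have n1 : ‖-(ζ - η)‖ ≤ N := by
        rw [norm_neg]; have := norm_sub_le ζ η; linarith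
      have n2 : ‖ξ - ζ‖ ≤ N := by
        have := norm_sub_le ξ ζ; linarith
      rw [bmp_one hN (by linarith), bmp_one hN n1, bmp_one hN n2]
      ring
    · unfold KN
      have := norm_pos_iff.2 hζ
      gcongr

/-- constant -/
def c0 : ℝ := 1 / 2 * volume.real (Metric.ball (0 : Rd) 1) ^ 2 * (π⁻¹ / 256)

theorem c0_pos : 0 < c0 := by
  have : 0 < volume.real (Metric.ball (0 : Rd) 1) :=
    ENNReal.toReal_pos (Metric.measure_ball_pos _ _ one_pos).ne' measure_ball_lt_top.ne
  unfold c0; positivity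

theorem low3 {m : ℝ} (hm : 0 ≤ m) {A N t : ℝ} (hA : 0 < A) (hN : 0 < N) (ht0 : 0 ≤ t)
    (ht : t * (6 * N) ≤ 1) {ξ : Rd} (hξ : ‖ξ‖ ≤ N / 2) :
    t * (c0 * A ^ 3 * N ^ 4) ≤ ‖GG m (dat A N) t ξ‖ := by
  refine le_trans ?_ (Complex.re_le_norm _)
  have hcont : Continuous fun τ => prp m (t - τ) ξ * HH (ev m (dat A N) τ) ξ := by
    have h2 : Continuous fun τ : ℝ => ((τ, ξ) : ℝ × Rd) := by fun_prop
    have h3 := (HH_cont m (dat_adm A hN)).comp h2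
    have h4 : Continuous fun τ : ℝ => ((t - τ, ξ) : ℝ × Rd) := by fun_prop
    have h5 := (prp_cont m).comp h4
    simp only [Function.comp_def] at h3 h5
    exact h5.mul h3
  have hi : IntegrableOn (fun τ => prp m (t - τ) ξ * HH (ev m (dat A N) τ) ξ) (Set.Ioc 0 t) :=
    (hcont.continuousOn.integrableOn_compact (isCompact_Icc (a := (0 : ℝ)) (b := t))).mono_set Set.Ioc_subset_Icc_self
  have e : (GG m (dat A N) t ξ).re = ∫ τ in Set.Ioc 0 t, (prp m (t - τ) ξ * HH (ev m (dat A N) τ) ξ).re :=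
    (Complex.reCLM.integral_comp_comm hi).symm
  have e' : t * (c0 * A ^ 3 * N ^ 4) = ∫ τ in Set.Ioc 0 t, (c0 * A ^ 3 * N ^ 4) := by
    rw [setIntegral_const]; simp [ht0]
  rw [e, e']
  refine setIntegral_mono_on (integrableOn_const measure_Ioc_lt_top.ne) hi.re measurableSet_Ioc fun τ hτ => ?_
  refine le_trans (le_of_eq ?_) (low2 hm hA hN hτ.1.le hτ.2 ht hξ)
  rw [Measure.addHaar_real_closedBall _ _ (by positivity)]
  have hd : Module.finrank ℝ Rd = 3 := by simp
  rw [hd]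
  unfold c0
  field_simp
  ring

/-- rescaled weight integral -/
def qq (s N : ℝ) : ℝ := ∫ x in Metric.closedBall (0 : Rd) 1, (1 + (N * ‖x‖) ^ 2) ^ s

theorem qq_cont (s N : ℝ) : Continuous fun x : Rd => (1 + (N * ‖x‖) ^ 2) ^ s := by
  refine Continuous.rpow_const (by fun_prop) fun x => Or.inl ?_
  positivity

theorem wt_le_one {s : ℝ} (hs : s < 0) (y : ℝ) : (1 + y ^ 2) ^ s ≤ 1 :=
  Real.rpow_le_one_of_one_le_of_nonpos (by nlinarith) hs.le

theorem qq_pos (s N : ℝ) : 0 < qq s N := by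
  unfold qq
  rw [setIntegral_pos_iff_support_of_nonneg_ae]
  · have : (Function.support fun x : Rd => (1 + (N * ‖x‖) ^ 2) ^ s) = Set.univ := by
      ext x; simp only [Function.mem_support, Set.mem_univ, iff_true]; positivity
    rw [this, Set.univ_inter]
    exact Metric.measure_closedBall_pos _ _ one_pos
  · exact Filter.Eventually.of_forall fun x => by positivity
  · exact (qq_cont s N).continuousOn.integrableOn_compact (isCompact_closedBall _ _)

theorem qq_anti {s : ℝ} (hs : s < 0) {N M : ℝ} (hN : 0 ≤ N) (h : N ≤ M) : qq s M ≤ qq s N := by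
  unfold qq
  refine setIntegral_mono_on ((qq_cont s M).continuousOn.integrableOn_compact (isCompact_closedBall _ _))
    ((qq_cont s N).continuousOn.integrableOn_compact (isCompact_closedBall _ _)) measurableSet_closedBall fun x _ => ?_
  refine Real.rpow_le_rpow_of_nonpos (by positivity) ?_ hs.le
  gcongr

theorem qq_tendsto {s : ℝ} (hs : s < 0) : Filter.Tendsto (qq s) Filter.atTop (nhds 0) := by
  have : (0 : ℝ) = ∫ x in Metric.closedBall (0 : Rd) 1, (0 : ℝ) := by simp
  rw [this]
  unfold qq
  refine tendsto_integral_filter_of_dominated_convergence (fun _ => 1) ?_ ?_ ?_ ?_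
  · exact Filter.Eventually.of_forall fun N => (qq_cont s N).aestronglyMeasurable
  · refine Filter.Eventually.of_forall fun N => Filter.Eventually.of_forall fun x => ?_
    rw [Real.norm_of_nonneg (by positivity)]
    exact wt_le_one hs _
  · exact integrableOn_const measure_closedBall_lt_top.ne
  · filter_upwards [ae_restrict_of_ae ae_ne_zero] with x hx
    have hx := norm_pos_iff.2 hx
    have h1 : Filter.Tendsto (fun N : ℝ => 1 + (N * ‖x‖) ^ 2) Filter.atTop Filter.atTop := by
      refine Filter.tendsto_atTop_add_const_left _ _ ?_
      exact (Filter.tendsto_pow_atTop two_ne_zero).comp (Filter.tendsto_id.atTop_mul_const hx)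
    have h2 := (tendsto_rpow_neg_atTop (y := -s) (by linarith)).comp h1
    simpa [Function.comp_def] using h2

open scoped Pointwise in
theorem wt_scale (s : ℝ) {r : ℝ} (hr : 0 < r) :
    ∫ x in Metric.closedBall (0 : Rd) r, (1 + ‖x‖ ^ 2) ^ s = r ^ 3 * qq s r := by
  have h := Measure.setIntegral_comp_smul (volume : Measure Rd) (fun x : Rd => (1 + ‖x‖ ^ 2) ^ s) hr.ne' (s := Metric.closedBall (0 : Rd) 1)
  have hb : r • Metric.closedBall (0 : Rd) 1 = Metric.closedBall (0 : Rd) r := by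
    rw [smul_unitClosedBall, Real.norm_of_nonneg hr.le]
  have hd : Module.finrank ℝ Rd = 3 := by simp
  rw [hb, hd] at h
  have h2 : qq s r = ∫ x in Metric.closedBall (0 : Rd) 1, (1 + ‖r • x‖ ^ 2) ^ s := by
    unfold qq
    simp only [norm_smul, Real.norm_of_nonneg hr.le]
  rw [h2, h, abs_of_pos (by positivity), smul_eq_mul]
  field_simp

theorem wt_lint (s : ℝ) {r : ℝ} (hr : 0 < r) {k : ℝ} (hk : 0 ≤ k) :
    ∫⁻ x in Metric.closedBall (0 : Rd) r, ENNReal.ofReal ((1 + ‖x‖ ^ 2) ^ s * k) = ENNReal.ofReal (k * (r ^ 3 * qq s r)) := by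
  have hc : Continuous fun x : Rd => (1 + ‖x‖ ^ 2) ^ s := by simpa using qq_cont s 1
  rw [← wt_scale s hr, mul_comm k, ← integral_mul_const, ofReal_integral_eq_lintegral_ofReal]
  · exact (hc.mul continuous_const).continuousOn.integrableOn_compact (isCompact_closedBall _ _)
  · exact Filter.Eventually.of_forall fun x => by positivity

theorem dat_radial (A N : ℝ) : IsRadial (𝓕⁻ (dat A N)) := by
  intro x y hxy
  set S := Submodule.reflection (ℝ ∙ (x - y))ᗮ with hS
  have h1 : S x = y := Submodule.reflection_sub hxy
  rw [← h1]
  have h2 : dat A N ∘ S = dat A N := by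
    ext ξ; simp [dat, bmp]
  conv_lhs => rw [← h2]
  rw [Real.fourierInv_eq_fourier_neg, Real.fourierInv_eq_fourier_neg, Real.fourier_comp_linearIsometry, map_neg]

theorem final_aux (m s T : ℝ) (hm : 0 ≤ m) (hT : 0 < T) (hs : s < 0) (C : ℝ) (hC : 0 < C) (ε : ℝ) (hε : 0 < ε) :
      ∃ φ : Rd → ℂ, IsRadial φ ∧
        0 < HsNorm s φ ∧ HsNorm s φ ≤ ENNReal.ofReal ε ∧
        ∃ t ∈ Set.Icc (0 : ℝ) T,
          ENNReal.ofReal C * HsNorm s φ ^ 3 < HsNorm s (duhamelFree m φ t) := by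
  have hc0 := c0_pos
  obtain ⟨N, hN0, hNT, hNq⟩ : ∃ N : ℝ, 0 < N ∧ 1 / (6 * T) ≤ N ∧ qq s (N / 2) < c0 / (6 * 64 * C) := by
    have h1 : ∀ᶠ N in Filter.atTop, qq s (N / 2) < c0 / (6 * 64 * C) :=
      ((qq_tendsto hs).comp (Filter.tendsto_id.atTop_div_const (by norm_num : (0 : ℝ) < 2))).eventually_lt_const (by positivity)
    obtain ⟨N, h⟩ := (((Filter.eventually_gt_atTop (0 : ℝ)).and (Filter.eventually_ge_atTop (1 / (6 * T)))).and h1).exists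
    exact ⟨N, h.1.1, h.1.2, h.2⟩
  set q := qq s (N / 2) with hq
  have hqp : 0 < q := qq_pos _ _
  set I2 := (2 * N) ^ 3 * qq s (2 * N) with hI2
  have hI2p : 0 < I2 := by have := qq_pos s (2 * N); positivity
  have hI2le : I2 ≤ 8 * N ^ 3 * q := by
    have : qq s (2 * N) ≤ q := qq_anti hs (by positivity) (by linarith)
    rw [hI2, mul_pow]; norm_num; gcongr
  set A := ε / (1 + I2) with hA
  have hAp : 0 < A := by positivity
  set t := 1 / (6 * N) with ht
  have htp : 0 < t := by positivity
  have hft : 𝓕 (𝓕⁻ (dat A N)) = dat A N := fourier_inv_NF (dat_adm A hN0).int (dat_adm A hN0).cont (dat_NF A hN0)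
  have hup : ∫⁻ ξ : Rd, ENNReal.ofReal ((1 + ‖ξ‖ ^ 2) ^ s * ‖dat A N ξ‖ ^ 2) ≤ ENNReal.ofReal (A ^ 2 * I2) := by
    rw [hI2, ← wt_lint s (by positivity) (by positivity), ← lintegral_indicator measurableSet_closedBall]
    refine lintegral_mono fun ξ => ?_
    by_cases hξ : ξ ∈ Metric.closedBall (0 : Rd) (2 * N)
    · rw [Set.indicator_of_mem hξ]
      gcongr
      rw [dat, Complex.norm_real, Real.norm_of_nonneg (mul_nonneg hAp.le (bmp_nonneg _ _))]
      exact mul_le_of_le_one_right hAp.le (bmp_le_one _ _)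
    · rw [(dat_adm A hN0).supp ξ (by simpa using hξ)]
      simp
  have hlow : ENNReal.ofReal (A ^ 2 * ((N / 2) ^ 3 * q)) ≤ ∫⁻ ξ : Rd, ENNReal.ofReal ((1 + ‖ξ‖ ^ 2) ^ s * ‖dat A N ξ‖ ^ 2) := by
    rw [hq, ← wt_lint s (by positivity) (by positivity)]
    refine le_trans (le_of_eq ?_) (setLIntegral_le_lintegral (Metric.closedBall (0 : Rd) (N / 2)) _)
    refine setLIntegral_congr_fun measurableSet_closedBall fun ξ hξ => ?_
    have : ‖ξ‖ ≤ N / 2 := by simpa using hξ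
    simp only [dat]
    rw [bmp_one hN0 (by linarith), Complex.norm_real, mul_one, Real.norm_of_nonneg hAp.le]
  set κ := t * (c0 * A ^ 3 * N ^ 4) with hκ
  have hκp : 0 < κ := by positivity
  have hD : ENNReal.ofReal (κ ^ 2 * ((N / 2) ^ 3 * q)) ≤ ∫⁻ ξ : Rd, ENNReal.ofReal ((1 + ‖ξ‖ ^ 2) ^ s * ‖𝓕 (duhamelFree m (𝓕⁻ (dat A N)) t) ξ‖ ^ 2) := by
    rw [duhamel_ft hm (by positivity) (dat_adm A hN0) (dat_NF A hN0) htp.le, hq, ← wt_lint s (by positivity) (by positivity)]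
    refine le_trans ?_ (setLIntegral_le_lintegral (Metric.closedBall (0 : Rd) (N / 2)) _)
    refine setLIntegral_mono' measurableSet_closedBall fun ξ hξ => ?_
    have : ‖ξ‖ ≤ N / 2 := by simpa using hξ
    have := low3 hm (t := t) hAp hN0 htp.le (by rw [ht]; field_simp; rfl) this
    gcongr
  have hphi : HsNorm s (𝓕⁻ (dat A N)) ≤ ENNReal.ofReal (√(A ^ 2 * I2)) := by
    unfold HsNorm
    rw [hft, Real.sqrt_eq_rpow, ← ENNReal.ofReal_rpow_of_nonneg (by positivity) (by norm_num)]
    gcongr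
  refine ⟨𝓕⁻ (dat A N), dat_radial A N, ?_, ?_, t, ⟨htp.le, ?_⟩, ?_⟩
  · unfold HsNorm
    rw [hft]
    refine ENNReal.rpow_pos_of_nonneg (lt_of_lt_of_le ?_ hlow) (by norm_num)
    rw [ENNReal.ofReal_pos]; positivity
  · refine hphi.trans (ENNReal.ofReal_le_ofReal ?_)
    refine Real.sqrt_le_iff.2 ⟨hε.le, ?_⟩
    rw [hA, div_pow, div_mul_eq_mul_div, div_le_iff₀ (by positivity)]
    refine mul_le_mul_of_nonneg_left ?_ (by positivity)
    nlinarith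
  · rw [ht, div_le_iff₀ (by positivity)]
    rw [div_le_iff₀ (by positivity)] at hNT
    linarith
  · refine lt_of_le_of_lt (mul_le_mul' le_rfl (pow_le_pow_left' hphi 3)) ?_
    have h2 : ENNReal.ofReal (√(κ ^ 2 * ((N / 2) ^ 3 * q))) ≤ HsNorm s (duhamelFree m (𝓕⁻ (dat A N)) t) := by
      unfold HsNorm
      rw [Real.sqrt_eq_rpow, ← ENNReal.ofReal_rpow_of_nonneg (by positivity) (by norm_num)]
      gcongr
    refine lt_of_lt_of_le ?_ h2
    rw [← ENNReal.ofReal_pow (by positivity), ← ENNReal.ofReal_mul hC.le]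
    refine (ENNReal.ofReal_lt_ofReal_iff (by positivity)).2 ?_
    apply Real.lt_sqrt_of_sq_lt
    have e1 : (C * √(A ^ 2 * I2) ^ 3) ^ 2 = C ^ 2 * (A ^ 2 * I2) ^ 3 := by
      rw [mul_pow, ← pow_mul, show 3 * 2 = 2 * 3 by norm_num, pow_mul, Real.sq_sqrt (by positivity)]
    have e2 : κ = c0 / 6 * (A ^ 3 * N ^ 3) := by
      rw [hκ, ht]; field_simp
    rw [e1, e2]
    have h3 : (A ^ 2 * I2) ^ 3 ≤ (A ^ 2 * (8 * N ^ 3 * q)) ^ 3 := by gcongr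
    have h4 : 64 * C * q < c0 / 6 := by
      rw [lt_div_iff₀ (by positivity)] at hNq ⊢
      linarith
    have h5 : (64 * C * q) ^ 2 < (c0 / 6) ^ 2 := by gcongr
    calc C ^ 2 * (A ^ 2 * I2) ^ 3 ≤ C ^ 2 * (A ^ 2 * (8 * N ^ 3 * q)) ^ 3 := by gcongr
      _ = (64 * C * q) ^ 2 * (A ^ 6 * N ^ 9 * q / 8) := by ring
      _ < (c0 / 6) ^ 2 * (A ^ 6 * N ^ 9 * q / 8) := by gcongr
      _ = _ := by ring

/-- failure of the cubic Duhamel estimate for radial data in `H^s(ℝ³)` for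
`s < 0`: for `m ≥ 0`, fixed `T > 0` and any constants `C, ε > 0` there exist a radial `φ`
with `0 < ‖φ‖_{H^s} ≤ ε` and `t ∈ [0,T]` with
`‖∫₀ᵗ U(t-τ)[(|x|⁻¹ ∗ |U(τ)φ|²)U(τ)φ] dτ‖_{H^s} > C ‖φ‖_{H^s}³`. -/
theorem duhamel_estimate_fails_radial (m s T : ℝ) (hm : 0 ≤ m) (hT : 0 < T) (hs : s < 0) :
    ∀ C : ℝ, 0 < C → ∀ ε : ℝ, 0 < ε →
      ∃ φ : Rd → ℂ, IsRadial φ ∧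
        0 < HsNorm s φ ∧ HsNorm s φ ≤ ENNReal.ofReal ε ∧
        ∃ t ∈ Set.Icc (0 : ℝ) T,
          ENNReal.ofReal C * HsNorm s φ ^ 3 < HsNorm s (duhamelFree m φ t) := by
  intro C hC ε hε
  exact final_aux m s T hm hT hs C hC ε hε
end
end
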